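/- arXiv:2407.20614 — 8 statements merged into one kernel-verified Lean document; each statement's English description precedes it below -/
import Mathlib

section
/- Let V be an n-dimensional vector space over the finite field 𝔽_q, let t ≥ 1 and n ≥ 2t+1, and let F be a cover-free family of 2t-dimensional subspaces of V. Then |F| ≤ [n-1 choose t]_q / [2t-1 choose t]_q. -/
/-- A family of subspaces is cover-free if there are no three distinct members
`F₀, F₁, F₂` with `F₀ ≤ (F₀ ⊓ F₁) ⊔ (F₀ ⊓ F₂)`. -/
def IsCoverFree {K V : Type*} [Field K] [AddCommGroup V] [Module K V]
    (F : Set (Submodule K V)) : Prop :=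
  ¬ ∃ F₀ F₁ F₂ : Submodule K V, F₀ ∈ F ∧ F₁ ∈ F ∧ F₂ ∈ F ∧
    F₀ ≠ F₁ ∧ F₀ ≠ F₂ ∧ F₁ ≠ F₂ ∧ F₀ ≤ (F₀ ⊓ F₁) ⊔ (F₀ ⊓ F₂)

/-- The Gaussian binomial coefficient `[m choose k]_q` as a rational number. -/
def GaussQ (q m k : ℕ) : ℚ :=
  ∏ i ∈ Finset.range k, ((q : ℚ) ^ (m - i) - 1) / ((q : ℚ) ^ (k - i) - 1)

open Finset Module

section Counting
set_option linter.unusedSectionVars false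
variable {K W : Type*} [Field K] [AddCommGroup W] [Module K W] [FiniteDimensional K W]

/-- Linear automorphisms act transitively on subspaces of a given dimension. -/
lemma exists_equiv_map_eq (A B : Submodule K W) (h : finrank K A = finrank K B) :
    ∃ g : W ≃ₗ[K] W, A.map (g : W →ₗ[K] W) = B := by
  obtain ⟨A', hA⟩ := A.exists_isCompl
  obtain ⟨B', hB⟩ := B.exists_isCompl
  have h1 := Submodule.finrank_add_eq_of_isCompl hA
  have h2 := Submodule.finrank_add_eq_of_isCompl hB
  have h' : finrank K A' = finrank K B' := by omega
  let e := LinearEquiv.ofFinrankEq A B h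
  let e' := LinearEquiv.ofFinrankEq A' B' h'
  let g := (Submodule.prodEquivOfIsCompl A A' hA).symm.trans
    ((e.prodCongr e').trans (Submodule.prodEquivOfIsCompl B B' hB))
  refine ⟨g, ?_⟩
  apply Submodule.eq_of_le_of_finrank_eq
  · rintro _ ⟨x, hx, rfl⟩
    have : g x = e ⟨x, hx⟩ := by
      have := Submodule.prodEquivOfIsCompl_symm_apply_left (h := hA) (x := ⟨x, hx⟩)
      simp only at this
      simp [g, this]
    simp only [LinearEquiv.coe_coe, this]
    exact (e ⟨x, hx⟩).2
  · rw [← h]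
    exact LinearEquiv.finrank_map_eq g A

/-- The stabilizer of `U` acts transitively on the vectors outside `U`. -/
lemma exists_equiv_fix (U : Submodule K W) (v v' : W) (hv : v ∉ U) (hv' : v' ∉ U) :
    ∃ g : W ≃ₗ[K] W, U.map (g : W →ₗ[K] W) = U ∧ g v = v' := by
  have key : ∃ f : W →ₗ[K] K, U ≤ LinearMap.ker f ∧ f v ≠ 0 ∧ f v' ≠ 0 := by
    obtain ⟨f, hf, hUf⟩ := Submodule.exists_le_ker_of_notMem hv
    obtain ⟨f', hf', hUf'⟩ := Submodule.exists_le_ker_of_notMem hv'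
    by_cases h1 : f v' = 0
    · by_cases h2 : f' v = 0
      · refine ⟨f + f', ?_, by simpa [h2] using hf, by simpa [h1] using hf'⟩
        intro u hu
        have a := hUf hu
        have b := hUf' hu
        simp only [LinearMap.mem_ker] at a b
        simp [a, b]
      · exact ⟨f', hUf', h2, hf'⟩
    · exact ⟨f, hUf, hf, h1⟩
  obtain ⟨f, hU, h1, h2⟩ := key
  let φ : W →ₗ[K] W := LinearMap.id + (f.smulRight ((f v)⁻¹ • (v' - v)))
  have hφ : ∀ x, φ x = x + f x • ((f v)⁻¹ • (v' - v)) := fun x => by simp [φ]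
  have hinj : Function.Injective φ := by
    rw [← LinearMap.ker_eq_bot, LinearMap.ker_eq_bot']
    intro x hx
    have h3 := hφ x
    rw [hx] at h3
    have h4 := congrArg f h3
    simp only [map_zero, map_add, map_smul, map_sub, smul_eq_mul] at h4
    have h5 : f x * f v' = 0 := by
      field_simp at h4
      linear_combination -h4
    have h6 : f x = 0 := by
      rcases mul_eq_zero.mp h5 with h | h
      · exact h
      · exact absurd h h2
    rw [h6] at h3
    simpa using h3.symm
  refine ⟨LinearEquiv.ofInjectiveEndo φ hinj, ?_, ?_⟩
  · apply Submodule.eq_of_le_of_finrank_eq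
    · rintro _ ⟨x, hx, rfl⟩
      have h6 : f x = 0 := hU hx
      simpa [hφ, h6] using hx
    · exact LinearEquiv.finrank_map_eq _ U
  · simp [hφ, smul_smul, h1]

variable [Fintype (W ≃ₗ[K] W)]

lemma card_filter_shift (P Q : (W ≃ₗ[K] W) → Prop) [DecidablePred P] [DecidablePred Q] (h : W ≃ₗ[K] W)
    (hPQ : ∀ g, P g ↔ Q (g.trans h)) :
    (univ.filter P).card = (univ.filter Q).card := by
  refine Finset.card_bij' (fun g _ => g.trans h) (fun g _ => g.trans h.symm) ?_ ?_ ?_ ?_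
  · intro g hg; simpa [← hPQ] using hg
  · intro g hg
    have : (g.trans h.symm).trans h = g := by ext; simp
    simp only [mem_filter, mem_univ, true_and] at hg ⊢
    rw [hPQ, this]; exact hg
  · intro g _; ext; simp
  · intro g _; ext; simp

lemma map_trans_eq (E : Submodule K W) (g h : W ≃ₗ[K] W) :
    E.map ((g.trans h : W ≃ₗ[K] W) : W →ₗ[K] W)
      = (E.map (g : W →ₗ[K] W)).map (h : W →ₗ[K] W) := by
  rw [← Submodule.map_comp]; rfl

lemma map_equiv_inj (A B : Submodule K W) (h : W ≃ₗ[K] W) :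
    A.map (h : W →ₗ[K] W) = B.map (h : W →ₗ[K] W) ↔ A = B :=
  (Submodule.map_injective_of_injective (f := (h : W →ₗ[K] W)) h.injective).eq_iff

open Classical in
/-- The image of a fixed subspace under a random automorphism is uniform. -/
lemma exists_count (E : Submodule K W) : ∃ c : ℕ, 0 < c ∧ ∀ S : Finset (Submodule K W),
    (∀ U ∈ S, finrank K U = finrank K E) →
    (univ.filter (fun g : W ≃ₗ[K] W => E.map (g : W →ₗ[K] W) ∈ S)).card = c * S.card := by
  refine ⟨(univ.filter (fun g : W ≃ₗ[K] W => E.map (g : W →ₗ[K] W) = E)).card, ?_, ?_⟩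
  · refine Finset.card_pos.mpr ⟨LinearEquiv.refl K W, ?_⟩
    simp
  intro S hS
  rw [Finset.card_eq_sum_card_fiberwise (f := fun g : W ≃ₗ[K] W => E.map (g : W →ₗ[K] W)) (t := S)]
  · rw [Finset.sum_congr rfl (g := fun _ =>
      (univ.filter (fun g : W ≃ₗ[K] W => E.map (g : W →ₗ[K] W) = E)).card)]
    · simp [mul_comm]
    intro U hU
    obtain ⟨h, hh⟩ := exists_equiv_map_eq E U (hS U hU).symm
    symm
    rw [Finset.filter_filter]
    apply card_filter_shift _ _ h
    intro g
    rw [map_trans_eq]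
    constructor
    · intro hg; rw [hg, hh]; exact ⟨hU, rfl⟩
    · rintro ⟨_, hg⟩
      rw [← hh] at hg
      exact (map_equiv_inj _ _ h).mp hg
  · intro g hg; simpa using hg

open Classical in
lemma exists_count_vec (E U : Submodule K W) (e : W) (he : e ∉ E) :
    ∃ c : ℕ, ∀ T : Finset W, (∀ v ∈ T, v ∉ U) →
    (univ.filter (fun g : W ≃ₗ[K] W => E.map (g : W →ₗ[K] W) = U ∧ g e ∈ T)).card
      = c * T.card := by
  by_cases hex : ∃ v, v ∉ U
  swap
  · push Not at hex
    refine ⟨0, fun T hT => ?_⟩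
    rw [zero_mul, Finset.card_eq_zero, Finset.filter_eq_empty_iff]
    rintro g - ⟨_, h⟩
    exact hT _ h (hex _)
  obtain ⟨v, hv⟩ := hex
  refine ⟨(univ.filter (fun g : W ≃ₗ[K] W => E.map (g : W →ₗ[K] W) = U ∧ g e = v)).card, ?_⟩
  intro T hT
  rw [Finset.card_eq_sum_card_fiberwise (f := fun g : W ≃ₗ[K] W => g e) (t := T)]
  · rw [Finset.sum_congr rfl (g := fun _ =>
      (univ.filter (fun g : W ≃ₗ[K] W => E.map (g : W →ₗ[K] W) = U ∧ g e = v)).card)]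
    · simp [mul_comm]
    intro w hw
    obtain ⟨h, hU, hh⟩ := exists_equiv_fix U v w hv (hT w hw)
    symm
    rw [Finset.filter_filter]
    apply card_filter_shift _ _ h
    intro g
    rw [map_trans_eq]
    constructor
    · rintro ⟨hg, hge⟩
      refine ⟨⟨by rw [hg, hU], ?_⟩, ?_⟩ <;> simp [hge, hh, hw]
    · rintro ⟨⟨hg, _⟩, hge⟩
      refine ⟨?_, ?_⟩
      · exact (map_equiv_inj _ _ h).mp (hg.trans hU.symm)
      · rw [← hh] at hge
        exact h.injective hge
  · intro g hg
    have := (mem_filter.mp hg).2.2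
    simpa using this

open Classical in
lemma count_step_single [Fintype K] [Fintype W] (E U F : Submodule K W) (e : W) (he : e ∉ E)
    (hUF : U ≤ F) :
    ((univ.filter (fun g : W ≃ₗ[K] W => E.map (g : W →ₗ[K] W) = U ∧ g e ∈ F)).card : ℚ)
      * ((Fintype.card K : ℚ) ^ finrank K W - (Fintype.card K : ℚ) ^ finrank K E) =
    ((univ.filter (fun g : W ≃ₗ[K] W => E.map (g : W →ₗ[K] W) = U)).card : ℚ)
      * ((Fintype.card K : ℚ) ^ finrank K F - (Fintype.card K : ℚ) ^ finrank K E) := by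
  obtain ⟨c, hc⟩ := exists_count_vec E U e he
  by_cases hdim : finrank K U = finrank K E
  swap
  · have : ∀ g : W ≃ₗ[K] W, E.map (g : W →ₗ[K] W) ≠ U := by
      intro g hg
      exact hdim (by rw [← hg]; exact LinearEquiv.finrank_map_eq g E)
    simp [this]
  have cardsub : ∀ A : Submodule K W, ((univ.filter (fun x : W => x ∈ A)).card : ℚ)
      = (Fintype.card K : ℚ) ^ finrank K A := by
    intro A
    rw [← Fintype.card_subtype, ← Nat.cast_pow, ← Module.card_eq_pow_finrank (K := K) (V := A)]
  have h1 : ∀ A : Submodule K W, U ≤ A →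
      ((univ.filter (fun g : W ≃ₗ[K] W => E.map (g : W →ₗ[K] W) = U ∧ g e ∈ A)).card : ℚ)
        = c * ((Fintype.card K : ℚ) ^ finrank K A - (Fintype.card K : ℚ) ^ finrank K U) := by
    intro A hA
    have h := hc ((univ.filter (fun x : W => x ∈ A)) \ (univ.filter (fun x : W => x ∈ U)))
      (by intro v hv; simp at hv; exact hv.2)
    have hcard := Finset.card_sdiff_add_card_eq_card
      (show (univ.filter (fun x : W => x ∈ U)) ⊆ (univ.filter (fun x : W => x ∈ A)) by
        intro x hx; simp at hx ⊢; exact hA hx)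
    have hcard' : (((univ.filter (fun x : W => x ∈ A)) \
        (univ.filter (fun x : W => x ∈ U))).card : ℚ)
        + ((univ.filter (fun x : W => x ∈ U)).card : ℚ)
        = ((univ.filter (fun x : W => x ∈ A)).card : ℚ) := by exact_mod_cast hcard
    rw [cardsub, cardsub] at hcard'
    rw [← eq_sub_iff_add_eq] at hcard'
    rw [← hcard', ← Nat.cast_mul, ← h]
    congr 2
    ext g
    simp only [mem_filter, mem_univ, true_and, mem_sdiff]
    constructor
    · rintro ⟨hg, hge⟩
      refine ⟨hg, hge, ?_⟩
      rw [← hg]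
      rintro ⟨x, hx, hxe⟩
      have : x = e := g.injective hxe
      exact he (this ▸ hx)
    · rintro ⟨hg, hge, _⟩
      exact ⟨hg, hge⟩
  have h2 := h1 F hUF
  have h3 := h1 ⊤ le_top
  simp only [Submodule.mem_top, and_true, finrank_top] at h3
  rw [h2, h3, hdim]
  ring

open Classical in
lemma count_step [Fintype K] [Fintype W] (E F : Submodule K W) (e : W) (he : e ∉ E)
    (S : Finset (Submodule K W)) (hS : ∀ U ∈ S, U ≤ F) :
    ((univ.filter (fun g : W ≃ₗ[K] W => E.map (g : W →ₗ[K] W) ∈ S ∧ g e ∈ F)).card : ℚ)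
      * ((Fintype.card K : ℚ) ^ finrank K W - (Fintype.card K : ℚ) ^ finrank K E) =
    ((univ.filter (fun g : W ≃ₗ[K] W => E.map (g : W →ₗ[K] W) ∈ S)).card : ℚ)
      * ((Fintype.card K : ℚ) ^ finrank K F - (Fintype.card K : ℚ) ^ finrank K E) := by
  rw [Finset.card_eq_sum_card_fiberwise (f := fun g : W ≃ₗ[K] W => E.map (g : W →ₗ[K] W)) (t := S),
    Finset.card_eq_sum_card_fiberwise (f := fun g : W ≃ₗ[K] W => E.map (g : W →ₗ[K] W)) (t := S)]
  · push_cast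
    rw [Finset.sum_mul, Finset.sum_mul]
    refine Finset.sum_congr rfl fun U hU => ?_
    have := count_step_single E U F e he (hS U hU)
    rw [Finset.filter_filter, Finset.filter_filter]
    have e1 : (univ.filter (fun g : W ≃ₗ[K] W => (E.map (g : W →ₗ[K] W) ∈ S ∧ g e ∈ F) ∧
        E.map (g : W →ₗ[K] W) = U))
        = univ.filter (fun g : W ≃ₗ[K] W => E.map (g : W →ₗ[K] W) = U ∧ g e ∈ F) := by
      ext g; simp only [mem_filter, mem_univ, true_and]
      constructor
      · rintro ⟨⟨_, h⟩, h'⟩; exact ⟨h', h⟩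
      · rintro ⟨h', h⟩; exact ⟨⟨h' ▸ hU, h⟩, h'⟩
    have e2 : (univ.filter (fun g : W ≃ₗ[K] W => E.map (g : W →ₗ[K] W) ∈ S ∧
        E.map (g : W →ₗ[K] W) = U))
        = univ.filter (fun g : W ≃ₗ[K] W => E.map (g : W →ₗ[K] W) = U) := by
      ext g; simp only [mem_filter, mem_univ, true_and]
      constructor
      · rintro ⟨_, h'⟩; exact h'
      · rintro h'; exact ⟨h' ▸ hU, h'⟩
    rw [e1, e2]
    exact this
  · intro g hg; simpa using hg
  · intro g hg; simpa using (mem_filter.mp hg).2.1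


/-- The proportion of `l`-dimensional subspaces of `W` that satisfy `N`. -/
noncomputable def propN (K : Type*) {W : Type*} [Field K] [AddCommGroup W] [Module K W]
    (N : Submodule K W → Prop) (l : ℕ) : ℚ :=
  (Set.ncard {U : Submodule K W | finrank K U = l ∧ N U} : ℚ) /
    (Set.ncard {U : Submodule K W | finrank K U = l} : ℚ)

open Classical in
lemma propN_eq [Fintype (Submodule K W)] (N : Submodule K W → Prop) (E : Submodule K W) :
    ((univ.filter (fun g : W ≃ₗ[K] W => N (E.map (g : W →ₗ[K] W)))).card : ℚ) =
      propN K N (finrank K E) * (Fintype.card (W ≃ₗ[K] W) : ℚ) := by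
  obtain ⟨c, hc, h⟩ := exists_count E
  have hfin : ∀ g : W ≃ₗ[K] W, finrank K (E.map (g : W →ₗ[K] W)) = finrank K E :=
    fun g => LinearEquiv.finrank_map_eq g E
  have h1 := h (univ.filter (fun U : Submodule K W => finrank K U = finrank K E ∧ N U))
    (by intro U hU; simp at hU; exact hU.1)
  have h2 := h (univ.filter (fun U : Submodule K W => finrank K U = finrank K E))
    (by intro U hU; simpa using hU)
  simp only [mem_filter, mem_univ, true_and, hfin, Finset.filter_true, Finset.card_univ] at h1 h2
  have n1 : Set.ncard {U : Submodule K W | finrank K U = finrank K E ∧ N U} =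
      (univ.filter (fun U : Submodule K W => finrank K U = finrank K E ∧ N U)).card := by
    rw [Set.ncard_eq_toFinset_card']; congr 1; ext; simp
  have n2 : Set.ncard {U : Submodule K W | finrank K U = finrank K E} =
      (univ.filter (fun U : Submodule K W => finrank K U = finrank K E)).card := by
    rw [Set.ncard_eq_toFinset_card']; congr 1; ext; simp
  have hpos : 0 < (univ.filter (fun U : Submodule K W => finrank K U = finrank K E)).card :=
    Finset.card_pos.mpr ⟨E, by simp⟩
  rw [propN, h1, h2, n1, n2]
  have : ((univ.filter (fun U : Submodule K W => finrank K U = finrank K E)).card : ℚ) ≠ 0 := by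
    exact_mod_cast hpos.ne'
  push_cast
  field_simp

open Classical in
lemma spread_bound [Fintype (Submodule K W)] (N : Submodule K W → Prop)
    (hN : ∀ A B, A ⊔ B = ⊤ → ¬ (N A ∧ N B)) {ι : Type*} [Fintype ι] (S : ι → Submodule K W)
    (hS : ∀ i j, i ≠ j → S i ⊔ S j = ⊤) :
    ∑ i, propN K N (finrank K (S i)) ≤ 1 := by
  have hpos : (0 : ℚ) < Fintype.card (W ≃ₗ[K] W) := by
    exact_mod_cast Fintype.card_pos_iff.mpr ⟨LinearEquiv.refl K W⟩
  have h1 : ∑ i, (univ.filter (fun g : W ≃ₗ[K] W => N ((S i).map (g : W →ₗ[K] W)))).card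
      ≤ Fintype.card (W ≃ₗ[K] W) := by
    rw [← Finset.card_biUnion]
    · exact Finset.card_le_univ _
    · intro i _ j _ hij
      rw [Function.onFun, Finset.disjoint_left]
      intro g hi hj
      simp only [mem_filter, mem_univ, true_and] at hi hj
      refine hN _ _ ?_ ⟨hi, hj⟩
      rw [← Submodule.map_sup, hS i j hij, Submodule.map_top]
      exact LinearEquiv.range g
  have h2 : (∑ i, propN K N (finrank K (S i))) * (Fintype.card (W ≃ₗ[K] W) : ℚ)
      ≤ 1 * (Fintype.card (W ≃ₗ[K] W) : ℚ) := by
    rw [Finset.sum_mul, one_mul]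
    simp only [← propN_eq]
    exact_mod_cast h1
  exact le_of_mul_le_mul_right h2 hpos

end Counting

lemma exists_spread (K W : Type*) [Field K] [Fintype K] [AddCommGroup W] [Module K W]
    [FiniteDimensional K W] (t : ℕ) (ht : 1 ≤ t) (hW : finrank K W = 2 * t) :
    ∃ (ι : Type) (_ : Fintype ι) (S : ι → Submodule K W),
      Fintype.card ι = Fintype.card K ^ t + 1 ∧ (∀ i, finrank K (S i) = t) ∧
      ∀ i j, i ≠ j → S i ⊔ S j = ⊤ := by
  classical
  obtain ⟨p, hp⟩ := CharP.exists K
  have : Fact p.Prime := ⟨CharP.char_is_prime K p⟩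
  have : NeZero t := ⟨by omega⟩
  let L := FiniteField.Extension K p t
  have : Finite L := Module.finite_of_finite K
  let : Fintype L := Fintype.ofFinite L
  have hL : finrank K L = t := FiniteField.finrank_extension K p t
  have hcL : Fintype.card L = Fintype.card K ^ t := by
    rw [← hL]; exact Module.card_eq_pow_finrank
  have e : (L × L) ≃ₗ[K] W := LinearEquiv.ofFinrankEq _ _ (by
    rw [Module.finrank_prod, hL, hW]; ring)
  let f : Option L → (L →ₗ[K] L × L) := fun o => match o with
    | none => LinearMap.inr K L L
    | some a => LinearMap.prod LinearMap.id (LinearMap.mulLeft K a)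
  have hf : ∀ o, Function.Injective (f o) := by
    rintro (_ | a) x y h
    · simpa [f] using h
    · simp [f] at h; exact h.1
  have hsup : ∀ i j, i ≠ j → ∀ x y : L, ∃ u v : L, f i u + f j v = (x, y) := by
    rintro (_ | a) (_ | b) hij x y
    · exact absurd rfl hij
    · exact ⟨y - b * x, x, by simp [f]⟩
    · exact ⟨x, y - a * x, by simp [f]⟩
    · have hab : a - b ≠ 0 := sub_ne_zero.mpr (fun h => hij (by rw [h]))
      refine ⟨(y - b * x) / (a - b), x - (y - b * x) / (a - b), ?_⟩
      refine Prod.ext ?_ ?_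
      · change (y - b * x) / (a - b) + (x - (y - b * x) / (a - b)) = x
        ring
      · change a * ((y - b * x) / (a - b)) + b * (x - (y - b * x) / (a - b)) = y
        linear_combination div_mul_cancel₀ (y - b * x) hab
  refine ⟨Option L, inferInstance, fun o => (LinearMap.range (f o)).map (e : L × L →ₗ[K] W),
    ?_, ?_, ?_⟩
  · rw [Fintype.card_option, hcL]
  · intro o
    rw [LinearEquiv.finrank_map_eq e, LinearMap.finrank_range_of_inj (hf o), hL]
  · intro i j hij
    rw [← Submodule.map_sup]
    have : LinearMap.range (f i) ⊔ LinearMap.range (f j) = ⊤ := by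
      rw [eq_top_iff]
      rintro ⟨x, y⟩ -
      obtain ⟨u, v, h⟩ := hsup i j hij x y
      rw [← h]
      exact Submodule.add_mem_sup ⟨u, rfl⟩ ⟨v, rfl⟩
    rw [this, Submodule.map_top]
    exact LinearEquiv.range e

lemma numeric_pos (q m : ℕ) (hq : 2 ≤ q) (hm : 1 ≤ m) : (0 : ℚ) < (q : ℚ) ^ m - 1 := by
  have : (1 : ℚ) < (q : ℚ) ^ m := one_lt_pow₀ (by exact_mod_cast hq) (by omega)
  linarith

lemma gauss_ratio (q n t : ℕ) (hq : 2 ≤ q) (ht : 1 ≤ t) (hn : 2 * t + 1 ≤ n) :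
    GaussQ q (2 * t - 1) t / GaussQ q (n - 1) t =
      (∏ i ∈ range t, ((q : ℚ) ^ (2 * t - i) - 1) / ((q : ℚ) ^ (n - i) - 1)) *
        (((q : ℚ) ^ n - 1) / (((q : ℚ) ^ t + 1) * ((q : ℚ) ^ (n - t) - 1))) := by
  have h1 : GaussQ q (2 * t - 1) t / GaussQ q (n - 1) t =
      ∏ i ∈ range t, ((q : ℚ) ^ (2 * t - (i + 1)) - 1) / ((q : ℚ) ^ (n - (i + 1)) - 1) := by
    unfold GaussQ
    rw [← Finset.prod_div_distrib]
    refine Finset.prod_congr rfl fun i hi => ?_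
    have hi := Finset.mem_range.mp hi
    have e1 : 2 * t - 1 - i = 2 * t - (i + 1) := by omega
    have e2 : n - 1 - i = n - (i + 1) := by omega
    rw [e1, e2]
    have p1 := numeric_pos q (t - i) hq (by omega)
    have p2 := numeric_pos q (n - (i + 1)) hq (by omega)
    field_simp
  have h2 := Finset.prod_range_succ
    (fun i => ((q : ℚ) ^ (2 * t - i) - 1) / ((q : ℚ) ^ (n - i) - 1)) t
  have h3 := Finset.prod_range_succ'
    (fun i => ((q : ℚ) ^ (2 * t - i) - 1) / ((q : ℚ) ^ (n - i) - 1)) t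
  rw [h2] at h3
  rw [h1]
  have p0 := numeric_pos q (2 * t) hq (by omega)
  have p1 := numeric_pos q n hq (by omega)
  have p2 := numeric_pos q t hq (by omega)
  have p3 := numeric_pos q (n - t) hq (by omega)
  have e : 2 * t - t = t := by omega
  simp only [Nat.sub_zero, e] at h3
  have e3 : (q : ℚ) ^ (2 * t) = ((q : ℚ) ^ t) ^ 2 := by rw [mul_comm, pow_mul]
  rw [e3] at h3 p0
  generalize (∏ i ∈ range t, ((q : ℚ) ^ (2 * t - (i + 1)) - 1) / ((q : ℚ) ^ (n - (i + 1)) - 1)) = X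
    at *
  generalize (∏ i ∈ range t, ((q : ℚ) ^ (2 * t - i) - 1) / ((q : ℚ) ^ (n - i) - 1)) = Y at *
  generalize (q : ℚ) ^ t = T at *
  generalize (q : ℚ) ^ n = N at *
  generalize (q : ℚ) ^ (n - t) = M at *
  have hT : T + 1 ≠ 0 := by linarith
  have p0' := p0.ne'
  have p1' := p1.ne'
  have p2' := p2.ne'
  have p3' := p3.ne'
  field_simp at h3 ⊢
  have : (T - 1) * (Y * (N - 1)) = (T - 1) * (X * (T + 1) * (M - 1)) := by linear_combination h3
  have := mul_left_cancel₀ p2' this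
  linear_combination -this

lemma numeric (q n t : ℕ) (hq : 2 ≤ q) (ht : 1 ≤ t) (hn : 2 * t + 1 ≤ n) (a r : ℕ → ℚ)
    (a0 : a 0 = 1)
    (hstep : ∀ l, l ≤ 2 * t →
      a (l + 1) * ((q : ℚ) ^ n - (q : ℚ) ^ l) = a l * ((q : ℚ) ^ (2 * t) - (q : ℚ) ^ l))
    (hr0 : ∀ l, 0 ≤ r l) (hr : ∀ l, l ≤ 2 * t → r l + r (2 * t - l) ≤ 1)
    (hrt : ((q : ℚ) ^ t + 1) * r t ≤ 1) :
    GaussQ q (2 * t - 1) t / GaussQ q (n - 1) t ≤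
      ∑ l ∈ range (2 * t + 1), (1 - r l) * (a l - a (l + 1)) := by
  have hq1 : (1 : ℚ) < q := by exact_mod_cast hq
  have hD : ∀ l, l ≤ 2 * t → 0 < (q : ℚ) ^ n - (q : ℚ) ^ l := fun l hl => by
    have : (q : ℚ) ^ l < (q : ℚ) ^ n := pow_lt_pow_right₀ hq1 (by omega)
    linarith
  have hC : ∀ l, l ≤ 2 * t → 0 ≤ (q : ℚ) ^ (2 * t) - (q : ℚ) ^ l := fun l hl => by
    have : (q : ℚ) ^ l ≤ (q : ℚ) ^ (2 * t) := pow_le_pow_right₀ hq1.le hl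
    linarith
  have ha : ∀ l, l ≤ 2 * t → a (l + 1) =
      a l * (((q : ℚ) ^ (2 * t) - (q : ℚ) ^ l) / ((q : ℚ) ^ n - (q : ℚ) ^ l)) := fun l hl => by
    have := (hD l hl).ne'
    field_simp
    exact hstep l hl
  have ha0 : ∀ l, l ≤ 2 * t + 1 → 0 ≤ a l := by
    intro l
    induction l with
    | zero => intro _; rw [a0]; norm_num
    | succ l ih =>
      intro hl
      rw [ha l (by omega)]
      exact mul_nonneg (ih (by omega)) (div_nonneg (hC l (by omega)) (hD l (by omega)).le)
  have hpi : ∀ l, l ≤ 2 * t → a l - a (l + 1) =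
      a l * (((q : ℚ) ^ n - (q : ℚ) ^ (2 * t)) / ((q : ℚ) ^ n - (q : ℚ) ^ l)) := fun l hl => by
    rw [ha l hl]
    have := (hD l hl).ne'
    field_simp
    ring
  have hE : 0 ≤ (q : ℚ) ^ n - (q : ℚ) ^ (2 * t) := (hD _ le_rfl).le
  have hpi0 : ∀ l, l ≤ 2 * t → 0 ≤ a l - a (l + 1) := fun l hl => by
    rw [hpi l hl]
    exact mul_nonneg (ha0 l (by omega)) (div_nonneg hE (hD l hl).le)
  have hmono1 : ∀ l, l + 1 ≤ 2 * t → a (l + 1) - a (l + 1 + 1) ≤ a l - a (l + 1) := by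
    intro l hl
    rw [hpi l (by omega), hpi (l + 1) hl, ha l (by omega), mul_assoc]
    refine mul_le_mul_of_nonneg_left ?_ (ha0 l (by omega))
    have d1 := hD l (by omega)
    have d2 := hD (l + 1) hl
    rw [div_mul_div_comm, div_le_div_iff₀ (by positivity) d1]
    have hkey : (q : ℚ) ^ (2 * t) - (q : ℚ) ^ l ≤ (q : ℚ) ^ n - (q : ℚ) ^ (l + 1) := by
      have g1 : (q : ℚ) ^ l ≤ (q : ℚ) ^ (2 * t) := pow_le_pow_right₀ hq1.le (by omega)
      have g2 : (q : ℚ) ^ (2 * t + 1) ≤ (q : ℚ) ^ n := pow_le_pow_right₀ hq1.le hn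
      rw [pow_succ] at g2 ⊢
      nlinarith [mul_nonneg (sub_nonneg.mpr g1) (sub_nonneg.mpr hq1.le)]
    have : 0 ≤ ((q : ℚ) ^ n - (q : ℚ) ^ (2 * t)) * ((q : ℚ) ^ n - (q : ℚ) ^ l) :=
      mul_nonneg hE d1.le
    nlinarith [mul_le_mul_of_nonneg_left hkey this]
  have hmono : ∀ d l, l + d ≤ 2 * t → a (l + d) - a (l + d + 1) ≤ a l - a (l + 1) := by
    intro d
    induction d with
    | zero => intro l _; exact le_rfl
    | succ d ih => intro l hl; exact (hmono1 (l + d) (by omega)).trans (ih l (by omega))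
  have haend : a (2 * t + 1) = 0 := by rw [ha _ le_rfl]; simp
  have hsplit : ∑ l ∈ range (2 * t + 1), (1 - r l) * (a l - a (l + 1)) =
      (∑ l ∈ range t, ((1 - r l) * (a l - a (l + 1)) +
        (1 - r (2 * t - l)) * (a (2 * t - l) - a (2 * t - l + 1)))) +
        (1 - r t) * (a t - a (t + 1)) := by
    rw [show 2 * t + 1 = (t + 1) + t by ring, Finset.sum_range_add, Finset.sum_range_succ,
      Finset.sum_add_distrib, ← Finset.sum_range_reflect (fun x => (1 - r (t + 1 + x)) * _)]
    have : ∀ j ∈ range t, (1 - r (t + 1 + (t - 1 - j))) *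
        (a (t + 1 + (t - 1 - j)) - a (t + 1 + (t - 1 - j) + 1)) =
        (1 - r (2 * t - j)) * (a (2 * t - j) - a (2 * t - j + 1)) := by
      intro j hj
      have hj := Finset.mem_range.mp hj
      have e : t + 1 + (t - 1 - j) = 2 * t - j := by omega
      rw [e]
    rw [Finset.sum_congr rfl this]
    ring
  have htel : ∑ l ∈ range t, (a (2 * t - l) - a (2 * t - l + 1)) = a (t + 1) := by
    have : ∀ m, m ≤ t → ∑ l ∈ range m, (a (2 * t - l) - a (2 * t - l + 1))
        = a (2 * t + 1 - m) := by
      intro m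
      induction m with
      | zero => intro _; simp [haend]
      | succ m ih =>
        intro hm
        rw [Finset.sum_range_succ, ih (by omega)]
        have e1 : 2 * t - m + 1 = 2 * t + 1 - m := by omega
        have e2 : 2 * t + 1 - (m + 1) = 2 * t - m := by omega
        rw [e1, e2]; ring
    rw [this t le_rfl]
    congr 1; omega
  have hpair : a (t + 1) ≤ ∑ l ∈ range t, ((1 - r l) * (a l - a (l + 1)) +
        (1 - r (2 * t - l)) * (a (2 * t - l) - a (2 * t - l + 1))) := by
    rw [← htel]
    refine Finset.sum_le_sum fun l hl => ?_
    have hl := Finset.mem_range.mp hl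
    have m1 := hmono (2 * t - l - l) l (by omega)
    rw [show l + (2 * t - l - l) = 2 * t - l by omega] at m1
    have m2 := hpi0 (2 * t - l) (by omega)
    have m3 := hr l (by omega)
    have m4 := hr0 (2 * t - l)
    nlinarith [mul_le_mul_of_nonneg_left m1 (show 0 ≤ 1 - r l by linarith),
      mul_nonneg m2 (show 0 ≤ 1 - r l - r (2 * t - l) by linarith)]
  have hat : ∀ m, m ≤ t → a m =
      ∏ i ∈ range m, ((q : ℚ) ^ (2 * t - i) - 1) / ((q : ℚ) ^ (n - i) - 1) := by
    intro m
    induction m with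
    | zero => intro _; simp [a0]
    | succ m ih =>
      intro hm
      rw [ha m (by omega), ih (by omega), Finset.prod_range_succ]
      congr 1
      have s1 : (q : ℚ) ^ (2 * t) = (q : ℚ) ^ m * (q : ℚ) ^ (2 * t - m) := by
        rw [← pow_add]; congr 1; omega
      have s2 : (q : ℚ) ^ n = (q : ℚ) ^ m * (q : ℚ) ^ (n - m) := by
        rw [← pow_add]; congr 1; omega
      have hqm : (q : ℚ) ^ m ≠ 0 := by positivity
      rw [s1, s2]
      rw [show (q : ℚ) ^ m * (q : ℚ) ^ (2 * t - m) - (q : ℚ) ^ m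
        = (q : ℚ) ^ m * ((q : ℚ) ^ (2 * t - m) - 1) by ring,
        show (q : ℚ) ^ m * (q : ℚ) ^ (n - m) - (q : ℚ) ^ m
        = (q : ℚ) ^ m * ((q : ℚ) ^ (n - m) - 1) by ring, mul_div_mul_left _ _ hqm]
  rw [gauss_ratio q n t hq ht hn, ← hat t le_rfl, hsplit]
  have hpit := hpi0 t (by omega)
  have hT : (0 : ℚ) < (q : ℚ) ^ t + 1 := by positivity
  have hrt' : r t ≤ 1 / ((q : ℚ) ^ t + 1) := by
    rw [le_div_iff₀ hT]; linarith
  have hmid : (1 - 1 / ((q : ℚ) ^ t + 1)) * (a t - a (t + 1)) ≤ (1 - r t) * (a t - a (t + 1)) :=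
    mul_le_mul_of_nonneg_right (by linarith) hpit
  have hfin : a t * (((q : ℚ) ^ n - 1) / (((q : ℚ) ^ t + 1) * ((q : ℚ) ^ (n - t) - 1))) =
      a (t + 1) + (1 - 1 / ((q : ℚ) ^ t + 1)) * (a t - a (t + 1)) := by
    rw [ha t (by omega)]
    have p2 := numeric_pos q t hq (by omega)
    have p3 := numeric_pos q (n - t) hq (by omega)
    have s1 : (q : ℚ) ^ (2 * t) = ((q : ℚ) ^ t) ^ 2 := by rw [mul_comm, pow_mul]
    have s2 : (q : ℚ) ^ n = (q : ℚ) ^ t * (q : ℚ) ^ (n - t) := by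
      rw [← pow_add]; congr 1; omega
    rw [s1, s2]
    have hTp : (q : ℚ) ^ t ≠ 0 := by positivity
    generalize (q : ℚ) ^ t = T at *
    generalize (q : ℚ) ^ (n - t) = M at *
    rw [show T ^ 2 - T = T * (T - 1) by ring, show T * M - T = T * (M - 1) by ring,
      mul_div_mul_left _ _ hTp]
    have p3' := p3.ne'
    have hT' := hT.ne'
    field_simp
    ring
  linarith

open Classical in
/-- Transfer of proportions from `Submodule K F` to subspaces of `V` below `F`. -/
lemma count_below {K V : Type*} [Field K] [AddCommGroup V] [Module K V] [FiniteDimensional K V]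
    [Fintype (V ≃ₗ[K] V)] [Fintype (Submodule K V)] (F E : Submodule K V)
    (M : Submodule K V → Prop) :
    ((univ.filter (fun g : V ≃ₗ[K] V => E.map (g : V →ₗ[K] V) ≤ F ∧
        M (E.map (g : V →ₗ[K] V)))).card : ℚ) =
      propN K (fun A : Submodule K F => M (A.map F.subtype)) (finrank K E) *
      ((univ.filter (fun g : V ≃ₗ[K] V => E.map (g : V →ₗ[K] V) ≤ F)).card : ℚ) := by
  obtain ⟨c, hc, h⟩ := exists_count E
  have hfin : ∀ g : V ≃ₗ[K] V, finrank K (E.map (g : V →ₗ[K] V)) = finrank K E :=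
    fun g => LinearEquiv.finrank_map_eq g E
  have key : ∀ M : Submodule K V → Prop,
      (univ.filter (fun U : Submodule K V => finrank K U = finrank K E ∧ U ≤ F ∧ M U)).card
      = Set.ncard {A : Submodule K F | finrank K A = finrank K E ∧ M (A.map F.subtype)} := by
    intro M
    rw [← Set.ncard_image_of_injective _
      (Submodule.map_injective_of_injective (f := F.subtype) F.injective_subtype),
      ← Set.ncard_coe_finset]
    congr 1
    ext U
    simp only [coe_filter, mem_univ, true_and, Set.mem_ofPred_eq, Set.mem_image]
    constructor
    · rintro ⟨hU, hUF, hM⟩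
      have e : (U.comap F.subtype).map F.subtype = U := by
        rw [Submodule.map_comap_subtype, inf_eq_right.mpr hUF]
      refine ⟨U.comap F.subtype, ⟨?_, by rw [e]; exact hM⟩, e⟩
      rw [← hU, ← Submodule.finrank_map_subtype_eq, e]
    · rintro ⟨A, ⟨hA, hM⟩, rfl⟩
      exact ⟨by rw [Submodule.finrank_map_subtype_eq, hA], Submodule.map_subtype_le F A, hM⟩
  have h1 := h (univ.filter (fun U : Submodule K V => finrank K U = finrank K E ∧ U ≤ F ∧ M U))
    (by intro U hU; simp at hU; exact hU.1)
  have h2 := h (univ.filter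
    (fun U : Submodule K V => finrank K U = finrank K E ∧ U ≤ F ∧ True))
    (by intro U hU; simp at hU; exact hU.1)
  rw [key M] at h1
  rw [show (univ.filter (fun U : Submodule K V => finrank K U = finrank K E ∧ U ≤ F ∧ True)).card
    = _ by convert key (fun _ => True)] at h2
  simp only [mem_filter, mem_univ, true_and, hfin, and_true] at h1 h2
  rw [propN, h1, h2]
  by_cases hz : (Set.ncard {A : Submodule K F | finrank K A = finrank K E} : ℚ) = 0
  · have hz' : Set.ncard {A : Submodule K F | finrank K A = finrank K E} = 0 := by
      exact_mod_cast hz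
    have hle : Set.ncard {A : Submodule K F | finrank K A = finrank K E ∧ M (A.map F.subtype)} ≤
        Set.ncard {A : Submodule K F | finrank K A = finrank K E} := by
      have : Finite (Submodule K F) := Finite.of_injective _
        (Submodule.map_injective_of_injective (f := F.subtype) F.injective_subtype)
      exact Set.ncard_le_ncard (fun A hA => hA.1) (Set.toFinite _)
    rw [hz'] at hle ⊢
    simp [Nat.le_zero.mp hle]
  · push_cast
    field_simp

lemma exists_subspace_finrank_eq {K W : Type*} [Field K] [AddCommGroup W] [Module K W]
    [FiniteDimensional K W] (l : ℕ) (hl : l ≤ finrank K W) :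
    ∃ X : Submodule K W, finrank K X = l := by
  have hli : LinearIndependent K (fun i : Fin l => finBasis K W (Fin.castLE hl i)) :=
    (finBasis K W).linearIndependent.comp _ (Fin.castLE_injective hl)
  exact ⟨_, (finrank_span_eq_card hli).trans (Fintype.card_fin l)⟩

theorem stmt0 (q n t : ℕ) (K : Type*) [Field K] [Fintype K] (hK : Fintype.card K = q)
    (V : Type*) [AddCommGroup V] [Module K V] [FiniteDimensional K V]
    (hV : Module.finrank K V = n) (ht : 1 ≤ t) (hn : 2 * t + 1 ≤ n)
    (F : Set (Submodule K V)) (hdim : ∀ A ∈ F, Module.finrank K A = 2 * t)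
    (hcf : IsCoverFree F) :
    (F.ncard : ℚ) ≤ GaussQ q (n - 1) t / GaussQ q (2 * t - 1) t := by
  classical
  have hq : 2 ≤ q := by rw [← hK]; exact Fintype.one_lt_card
  have : Finite V := Module.finite_of_finite K
  let : Fintype V := Fintype.ofFinite V
  have : Finite (V ≃ₗ[K] V) := DFunLike.finite _
  let : Fintype (V ≃ₗ[K] V) := Fintype.ofFinite _
  let : Fintype (Submodule K V) := Fintype.ofFinite _
  -- the reference flag
  let b : Basis (Fin n) K V := Module.finBasisOfFinrankEq K V hV
  let E : ℕ → Submodule K V := fun l => Submodule.span K (b '' {i | i.val < l})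
  let e : ℕ → V := fun l => if h : l < n then b ⟨l, h⟩ else 0
  have hEmono : Monotone E := fun l m h =>
    Submodule.span_mono (Set.image_mono fun i (hi : i.val < l) => lt_of_lt_of_le hi h)
  have hE0 : E 0 = ⊥ := by simp [E]
  have hEsucc : ∀ l, l < n → E (l + 1) = E l ⊔ Submodule.span K {e l} := by
    intro l hl
    have : {i : Fin n | i.val < l + 1} = {i | i.val < l} ∪ {⟨l, hl⟩} := by
      ext i; simp [Fin.ext_iff]; omega
    simp only [E, e, dif_pos hl, this, Set.image_union, Set.image_singleton,
      Submodule.span_union]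
  have hEdim : ∀ l, l ≤ n → finrank K (E l) = l := by
    intro l hl
    have hli : LinearIndependent K (fun i : {i : Fin n | i.val < l} => b i) :=
      b.linearIndependent.comp _ Subtype.val_injective
    have h1 := finrank_span_eq_card hli
    have h2 : Set.range (fun i : {i : Fin n | i.val < l} => b i) = b '' {i | i.val < l} := by
      ext x; simp
    rw [h2] at h1
    change finrank K (E l) = _ at h1
    rw [h1, Fintype.card_subtype, show (univ.filter (fun i : Fin n => i ∈ {i : Fin n | i.val < l}))
      = univ.filter (fun i : Fin n => i.val < l) by rfl]
    rw [Fin.card_filter_val_lt]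
    omega
  have heE : ∀ l, l < n → e l ∉ E l := by
    intro l hl hmem
    have : E (l + 1) = E l := by
      rw [hEsucc l hl, sup_eq_left, Submodule.span_singleton_le_iff_mem]; exact hmem
    have h1 := hEdim l hl.le
    have h2 := hEdim (l + 1) hl
    rw [this] at h2
    omega
  have hmapsucc : ∀ l, l < n → ∀ (g : V ≃ₗ[K] V) (A : Submodule K V),
      (E (l + 1)).map (g : V →ₗ[K] V) ≤ A ↔ (E l).map (g : V →ₗ[K] V) ≤ A ∧ g (e l) ∈ A := by
    intro l hl g A
    rw [hEsucc l hl, Submodule.map_sup, sup_le_iff, Submodule.map_span _ {e l},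
      Set.image_singleton, Submodule.span_singleton_le_iff_mem]
    rfl
  obtain ⟨Bad, hBad⟩ : ∃ B : Submodule K V → Submodule K V → Prop,
      ∀ A U, B A U ↔ ∃ A' ∈ F, A' ≠ A ∧ U ≤ A' := ⟨_, fun _ _ => Iff.rfl⟩
  obtain ⟨Own, hOwnDef⟩ : ∃ O : Submodule K V → Submodule K V → Prop,
      ∀ A U, O A U ↔ U ≤ A ∧ ¬ Bad A U := ⟨_, fun _ _ => Iff.rfl⟩
  let Ev : Submodule K V → ℕ → Finset (V ≃ₗ[K] V) := fun A l =>
    univ.filter (fun g => Own A ((E l).map (g : V →ₗ[K] V)) ∧ g (e l) ∉ A)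
  let G : ℚ := Fintype.card (V ≃ₗ[K] V)
  have hG : 0 < G := by
    have : 0 < Fintype.card (V ≃ₗ[K] V) := Fintype.card_pos_iff.mpr ⟨LinearEquiv.refl K V⟩
    change (0 : ℚ) < (Fintype.card (V ≃ₗ[K] V) : ℚ)
    exact_mod_cast this
  -- the events are disjoint
  have hdisj : ∑ A ∈ F.toFinset, ∑ l ∈ range (2 * t + 1), (Ev A l).card
      ≤ Fintype.card (V ≃ₗ[K] V) := by
    rw [← Finset.sum_product', ← Finset.card_biUnion]
    · exact Finset.card_le_univ _
    have main : ∀ A ∈ F, ∀ A' ∈ F, ∀ l l', l ≤ l' → l' < 2 * t + 1 → (A, l) ≠ (A', l') →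
        ∀ g, g ∈ Ev A l → g ∈ Ev A' l' → False := by
      intro A hA A' hA' l l' hll hl' hne g hg hg'
      simp only [Ev, hOwnDef, hBad, mem_filter, mem_univ, true_and] at hg hg'
      by_cases hAA : A' = A
      · subst hAA
        have hlt : l < l' := lt_of_le_of_ne hll (fun h => hne (by rw [h]))
        have h1 : (E (l + 1)).map (g : V →ₗ[K] V) ≤ A' :=
          (Submodule.map_mono (hEmono hlt)).trans hg'.1.1
        exact hg.2 ((hmapsucc l (by omega) g A').mp h1).2
      · exact hg.1.2 ⟨A', hA', hAA, (Submodule.map_mono (hEmono hll)).trans hg'.1.1⟩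
    rintro ⟨A, l⟩ hAl ⟨A', l'⟩ hAl' hne
    simp only [coe_product, Set.mem_prod, Set.coe_toFinset, coe_range, Set.mem_Iio] at hAl hAl'
    rw [Function.onFun, Finset.disjoint_left]
    intro g hg hg'
    rcases le_total l l' with h | h
    · exact main A hAl.1 A' hAl'.1 l l' h hAl'.2 hne g hg hg'
    · exact main A' hAl'.1 A hAl.1 l' l h hAl.2 hne.symm g hg' hg
  have hcontrib : ∀ A ∈ F, GaussQ q (2 * t - 1) t / GaussQ q (n - 1) t * G ≤
      ∑ l ∈ range (2 * t + 1), ((Ev A l).card : ℚ) := by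
    intro A hA
    have hAdim := hdim A hA
    let N : Submodule K A → Prop := fun U => Bad A (U.map A.subtype)
    let r : ℕ → ℚ := propN K N
    let a : ℕ → ℚ := fun l =>
      ((univ.filter (fun g : V ≃ₗ[K] V => (E l).map (g : V →ₗ[K] V) ≤ A)).card : ℚ) / G
    have : Finite (A ≃ₗ[K] A) := DFunLike.finite _
    let : Fintype (A ≃ₗ[K] A) := Fintype.ofFinite _
    let : Fintype (Submodule K A) := Fintype.ofFinite _
    have hN : ∀ X Y : Submodule K A, X ⊔ Y = ⊤ → ¬ (N X ∧ N Y) := by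
      rintro X Y hXY ⟨hNX, hNY⟩
      obtain ⟨A₁, h1, hne1, hX⟩ := (hBad _ _).mp hNX
      obtain ⟨A₂, h2, hne2, hY⟩ := (hBad _ _).mp hNY
      have hsup : A = X.map A.subtype ⊔ Y.map A.subtype := by
        rw [← Submodule.map_sup, hXY, Submodule.map_subtype_top]
      by_cases h12 : A₁ = A₂
      · subst h12
        have hle : A ≤ A₁ := by rw [hsup]; exact sup_le hX hY
        exact hne1 (Submodule.eq_of_le_of_finrank_eq hle (by rw [hAdim, hdim _ h1])).symm
      · refine hcf ⟨A, A₁, A₂, hA, h1, h2, hne1.symm, hne2.symm, h12, ?_⟩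
        calc A = X.map A.subtype ⊔ Y.map A.subtype := hsup
          _ ≤ _ := sup_le_sup (le_inf (Submodule.map_subtype_le A X) hX)
            (le_inf (Submodule.map_subtype_le A Y) hY)
    have hr0 : ∀ l, 0 ≤ r l := fun l => by
      simp only [r, propN]; positivity
    have hr : ∀ l, l ≤ 2 * t → r l + r (2 * t - l) ≤ 1 := by
      intro l hl
      obtain ⟨X, hX⟩ : ∃ X : Submodule K A, finrank K X = l :=
        exists_subspace_finrank_eq l (by rw [hAdim]; exact hl)
      obtain ⟨Y, hXY⟩ := X.exists_isCompl
      have hd := Submodule.finrank_add_eq_of_isCompl hXY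
      have hY : finrank K Y = 2 * t - l := by omega
      have := spread_bound N hN (fun i : Bool => if i then X else Y) (by
        rintro (_ | _) (_ | _) hij
        · exact absurd rfl hij
        · simpa using hXY.symm.sup_eq_top
        · simpa using hXY.sup_eq_top
        · exact absurd rfl hij)
      simpa [hX, hY] using this
    have hrt : ((q : ℚ) ^ t + 1) * r t ≤ 1 := by
      obtain ⟨ι, _, S, hc, hSd, hS⟩ := exists_spread K A t ht hAdim
      have := spread_bound N hN S hS
      simp only [hSd, Finset.sum_const, Finset.card_univ, hc, hK, nsmul_eq_mul] at this
      push_cast at this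
      exact this
    have hstepgen : ∀ l, l ≤ 2 * t → ∀ M : Submodule K V → Prop, (∀ U, M U → U ≤ A) →
        ((univ.filter (fun g : V ≃ₗ[K] V =>
          M ((E l).map (g : V →ₗ[K] V)) ∧ g (e l) ∈ A)).card : ℚ) *
            ((q : ℚ) ^ n - (q : ℚ) ^ l) =
        ((univ.filter (fun g : V ≃ₗ[K] V => M ((E l).map (g : V →ₗ[K] V)))).card : ℚ) *
            ((q : ℚ) ^ (2 * t) - (q : ℚ) ^ l) := by
      intro l hl M hM
      have := count_step (E l) A (e l) (heE l (by omega)) (univ.filter M)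
        (by intro U hU; exact hM U (by simpa using hU))
      rw [hEdim l (by omega), hAdim, hV, hK] at this
      simpa only [mem_filter, mem_univ, true_and] using this
    have hstep : ∀ l, l ≤ 2 * t →
        a (l + 1) * ((q : ℚ) ^ n - (q : ℚ) ^ l) = a l * ((q : ℚ) ^ (2 * t) - (q : ℚ) ^ l) := by
      intro l hl
      have := hstepgen l hl (fun U => U ≤ A) (fun U hU => hU)
      simp only [a]
      simp only [hmapsucc l (show l < n by omega)]
      rw [div_mul_eq_mul_div, div_mul_eq_mul_div, this]
    have ha0 : a 0 = 1 := by
      simp only [a, hE0, Submodule.map_bot, bot_le, Finset.filter_true, Finset.card_univ]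
      exact div_self hG.ne'
    have hnum := numeric q n t hq ht hn a r ha0 hstep hr0 hr hrt
    have hEv : ∀ l ∈ range (2 * t + 1),
        ((Ev A l).card : ℚ) = (1 - r l) * (a l - a (l + 1)) * G := by
      intro l hl
      have hl : l ≤ 2 * t := by have := Finset.mem_range.mp hl; omega
      have hq1 : (1 : ℚ) < q := by exact_mod_cast hq
      have hD : (q : ℚ) ^ n - (q : ℚ) ^ l ≠ 0 := by
        have : (q : ℚ) ^ l < (q : ℚ) ^ n := pow_lt_pow_right₀ hq1 (by omega)
        linarith
      have haG : ((univ.filter (fun g : V ≃ₗ[K] V => (E l).map (g : V →ₗ[K] V) ≤ A)).card : ℚ)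
          = a l * G := by
        simp only [a]; rw [div_mul_cancel₀ _ hG.ne']
      have hOwn : ((univ.filter (fun g : V ≃ₗ[K] V =>
          Own A ((E l).map (g : V →ₗ[K] V)))).card : ℚ) = (1 - r l) * (a l * G) := by
        have h1 := count_below A (E l) (Bad A)
        rw [hEdim l (by omega), haG] at h1
        have h2 := Finset.card_filter_add_card_filter_not (s := univ.filter
          (fun g : V ≃ₗ[K] V => (E l).map (g : V →ₗ[K] V) ≤ A))
          (fun g => Bad A ((E l).map (g : V →ₗ[K] V)))
        rw [Finset.filter_filter, Finset.filter_filter] at h2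
        have h3 := congrArg (Nat.cast (R := ℚ)) h2
        rw [Nat.cast_add, haG, h1] at h3
        change _ = (1 - propN K N l) * (a l * G)
        simp only [hOwnDef]
        linear_combination h3
      have h4 := hstepgen l hl (Own A) (fun U hU => ((hOwnDef _ _).mp hU).1)
      have h5 := Finset.card_filter_add_card_filter_not (s := univ.filter
          (fun g : V ≃ₗ[K] V => Own A ((E l).map (g : V →ₗ[K] V)))) (fun g => g (e l) ∈ A)
      rw [Finset.filter_filter, Finset.filter_filter] at h5
      have h6 := congrArg (Nat.cast (R := ℚ)) h5
      rw [Nat.cast_add] at h6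
      rw [hOwn] at h6 h4
      have h7 := hstep l hl
      apply mul_right_cancel₀ hD
      simp only [Ev]
      linear_combination ((q : ℚ) ^ n - (q : ℚ) ^ l) * h6 - h4 + (1 - r l) * G * h7
    rw [Finset.sum_congr rfl hEv, ← Finset.sum_mul]
    exact mul_le_mul_of_nonneg_right hnum hG.le
  -- conclusion
  have hpos : ∀ m, 2 * t - 1 ≤ m → 0 < GaussQ q m t := by
    intro m hm
    refine Finset.prod_pos fun i hi => ?_
    have hi := Finset.mem_range.mp hi
    exact div_pos (numeric_pos q _ hq (by omega)) (numeric_pos q _ hq (by omega))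
  have hp1 := hpos (2 * t - 1) le_rfl
  have hp2 := hpos (n - 1) (by omega)
  have hfinal : (F.ncard : ℚ) * (GaussQ q (2 * t - 1) t / GaussQ q (n - 1) t * G) ≤ G := by
    have h1 := Finset.sum_le_sum (s := F.toFinset) (fun A hA => hcontrib A (by simpa using hA))
    rw [Finset.sum_const, nsmul_eq_mul, ← Set.ncard_eq_toFinset_card'] at h1
    refine h1.trans ?_
    change _ ≤ (Fintype.card (V ≃ₗ[K] V) : ℚ)
    exact_mod_cast hdisj
  have h8 : (F.ncard : ℚ) * (GaussQ q (2 * t - 1) t / GaussQ q (n - 1) t) ≤ 1 := by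
    refine le_of_mul_le_mul_right ?_ hG
    linarith
  rw [le_div_iff₀ hp1]
  rw [← mul_div_assoc, div_le_one hp2] at h8
  exact h8
end

section
/- Let V be an n-dimensional vector space over the finite field 𝔽_q, let t ≥ 1 and n ≥ 2t+1, and let F be a cover-free family of 2t-dimensional subspaces of V. Then |F| = [n-1 choose t]_q / [2t-1 choose t]_q holds if and only if F = {E ⊕ S : S ∈ S}, where E is a 1-dimensional subspace of V and S is a q-Steiner system S_q(t, 2t-1, n-1) on some (n-1)-dimensional subspace W of V satisfying E ⊕ W = V. -/
open Module Submodule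

set_option linter.unusedSectionVars false

section Counting

open Classical in
/-- number of elements satisfying a predicate -/
noncomputable def cnt {α : Type*} [Fintype α] (p : α → Prop) : ℕ := (Finset.univ.filter p).card

theorem cnt_equiv {α β : Type*} [Fintype α] [Fintype β] (e : α ≃ β) (p : α → Prop) (r : β → Prop)
    (h : ∀ a, p a ↔ r (e a)) : cnt p = cnt r := by
  classical
  unfold cnt
  apply Finset.card_bij (fun a _ => e a)
  · intro a ha; simpa [← h] using ha
  · intro a _ b _ hab; exact e.injective hab
  · intro b hb
    refine ⟨e.symm b, ?_, by simp⟩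
    simpa [h] using hb

theorem cnt_congr {α : Type*} [Fintype α] {p r : α → Prop}
    (h : ∀ a, p a ↔ r a) : cnt p = cnt r := cnt_equiv (Equiv.refl _) p r h

theorem cnt_mono {α : Type*} [Fintype α] {p r : α → Prop}
    (h : ∀ a, p a → r a) : cnt p ≤ cnt r := by
  classical
  unfold cnt
  exact Finset.card_le_card (Finset.monotone_filter_right _ (fun a _ => h a))

theorem cnt_pos {α : Type*} [Fintype α] {p : α → Prop} : 0 < cnt p ↔ ∃ a, p a := by
  classical
  unfold cnt
  rw [Finset.card_pos]
  constructor
  · rintro ⟨a, ha⟩; exact ⟨a, by simpa using ha⟩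
  · rintro ⟨a, ha⟩; exact ⟨a, by simpa using ha⟩

theorem cnt_split {α : Type*} [Fintype α] (p r : α → Prop) :
    cnt p = cnt (fun a => p a ∧ r a) + cnt (fun a => p a ∧ ¬ r a) := by
  classical
  unfold cnt
  have h := (Finset.card_filter_add_card_filter_not (s := Finset.univ.filter p) r).symm
  rw [Finset.filter_filter, Finset.filter_filter] at h
  convert h

open Classical in
theorem cnt_prod_sum {α β : Type*} [Fintype α] [Fintype β] (p : α → Prop) (r : α → β → Prop) :
    cnt (fun x : α × β => p x.1 ∧ r x.1 x.2) = ∑ a with p a, cnt (r a) := by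
  classical
  unfold cnt
  rw [← Finset.card_sigma]
  apply Finset.card_bij (fun x _ => ⟨x.1, x.2⟩)
  · intro a ha; simpa using ha
  · intro a _ b _ hab; simp at hab; ext <;> simp [hab]
  · rintro ⟨a, b⟩ hb
    exact ⟨(a, b), by simpa using hb, rfl⟩

theorem cnt_prod {α β : Type*} [Fintype α] [Fintype β] (p : α → Prop) (r : α → β → Prop) (c : ℚ)
    (h : ∀ a, p a → (cnt (r a) : ℚ) = c) :
    (cnt (fun x : α × β => p x.1 ∧ r x.1 x.2) : ℚ) = cnt p * c := by
  classical
  rw [cnt_prod_sum, Nat.cast_sum, Finset.sum_congr rfl (g := fun _ => c)]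
  · rw [Finset.sum_const, nsmul_eq_mul]
    unfold cnt
    congr
  · intro a ha; exact h a (by simpa using ha)

theorem cnt_prod_le {α β : Type*} [Fintype α] [Fintype β] (p : α → Prop) (r : α → β → Prop) (c : ℚ)
    (h : ∀ a, p a → (cnt (r a) : ℚ) ≤ c) :
    (cnt (fun x : α × β => p x.1 ∧ r x.1 x.2) : ℚ) ≤ cnt p * c := by
  classical
  rw [cnt_prod_sum, Nat.cast_sum]
  refine (Finset.sum_le_sum (g := fun _ => c) ?_).trans ?_
  · intro a ha; exact h a (by simpa using ha)
  · rw [Finset.sum_const, nsmul_eq_mul]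
    unfold cnt
    apply le_of_eq
    congr

theorem cnt_cons {V : Type*} [Fintype V] {k : ℕ} (p : (Fin (k+1) → V) → Prop) :
    cnt p = cnt (fun x : (Fin k → V) × V => p (Fin.cons x.2 x.1)) := by
  refine cnt_equiv ⟨fun w => (Fin.tail w, w 0), fun x => Fin.cons x.2 x.1, ?_, ?_⟩ _ _ ?_
  · intro w; simp
  · intro x; simp
  · intro w; simp

/-- pairwise disjoint union bound -/
theorem cnt_disj_sum {α ι : Type*} [Fintype α] (s : Finset ι) (p : ι → α → Prop) (r : α → Prop)
    (hpr : ∀ i ∈ s, ∀ a, p i a → r a)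
    (hd : ∀ i ∈ s, ∀ j ∈ s, ∀ a, p i a → p j a → i = j) :
    ∑ i ∈ s, cnt (p i) + cnt (fun a => r a ∧ ∀ i ∈ s, ¬ p i a) = cnt r := by
  classical
  rw [cnt_split r (fun a => ∃ i ∈ s, p i a)]
  congr 1
  · unfold cnt
    rw [← Finset.card_biUnion]
    · congr 1
      ext a
      simp only [Finset.mem_biUnion, Finset.mem_filter, Finset.mem_univ, true_and]
      constructor
      · rintro ⟨i, hi, h⟩; exact ⟨hpr i hi a h, i, hi, h⟩
      · rintro ⟨_, i, hi, h⟩; exact ⟨i, hi, h⟩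
    · intro i hi j hj hij
      rw [Function.onFun, Finset.disjoint_left]
      intro a ha hb
      exact hij (hd i hi j hj a (by simpa using ha) (by simpa using hb))
  · apply cnt_congr; intro a; simp

end Counting

section Tuples

variable {K V : Type*} [Field K] [Fintype K] [AddCommGroup V] [Module K V] [FiniteDimensional K V]
  [Fintype V]

/-- span of a tuple -/
def sp (K : Type*) {V : Type*} [Field K] [AddCommGroup V] [Module K V] {k : ℕ}
    (v : Fin k → V) : Submodule K V := span K (Set.range v)

theorem sp_cons {k : ℕ} (x : V) (v : Fin k → V) :
    sp K (Fin.cons x v : Fin (k+1) → V) = span K {x} ⊔ sp K v := by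
  unfold sp
  rw [Fin.range_cons, Submodule.span_insert]

theorem finrank_sp_le {k : ℕ} (v : Fin k → V) : finrank K (sp K v) ≤ k := by
  unfold sp
  have := finrank_range_le_card (R := K) v
  rw [Fintype.card_fin] at this
  exact this

theorem finrank_span_sup (x : V) (B : Submodule K V) (h : x ∉ B) :
    finrank K (span K {x} ⊔ B : Submodule K V) = finrank K B + 1 := by
  have hx : x ≠ 0 := fun h0 => h (h0 ▸ B.zero_mem)
  have h1 := Submodule.finrank_sup_add_finrank_inf_eq (span K {x}) B
  have h2 : span K {x} ⊓ B = ⊥ := by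
    rw [eq_bot_iff]
    rintro y ⟨hy, hyB⟩
    obtain ⟨c, rfl⟩ := mem_span_singleton.1 hy
    by_cases hc : c = 0
    · simp [hc]
    · exact absurd ((B.smul_mem_iff hc).1 hyB) h
  rw [h2, finrank_bot, finrank_span_singleton hx] at h1
  omega

theorem exists_tuple (T : Submodule K V) : ∃ v : Fin (finrank K T) → V, sp K v = T := by
  let b := finBasis K T
  refine ⟨fun i => (b i : V), ?_⟩
  unfold sp
  have : Set.range (fun i => (b i : V)) = T.subtype '' Set.range b := by
    rw [← Set.range_comp]; rfl
  rw [this, ← Submodule.map_span, b.span_eq]; simp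

theorem cnt_mem (U : Submodule K V) :
    cnt (fun x => x ∈ U) = Fintype.card K ^ finrank K U := by
  classical
  rw [← Module.card_eq_pow_finrank (K := K) (V := U)]
  unfold cnt
  rw [Fintype.card_subtype]

theorem cnt_mem_sub (U A : Submodule K V) (h : A ≤ U) :
    (cnt (fun x => x ∈ U ∧ x ∉ A) : ℚ) = (Fintype.card K : ℚ) ^ finrank K U
      - (Fintype.card K : ℚ) ^ finrank K A := by
  have h1 := cnt_split (fun x => x ∈ U) (fun x => x ∈ A)
  rw [cnt_mem] at h1
  have h2 : cnt (fun x => x ∈ U ∧ x ∈ A) = cnt (fun x => x ∈ A) :=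
    cnt_congr (fun x => ⟨fun h => h.2, fun hx => ⟨h hx, hx⟩⟩)
  rw [h2, cnt_mem] at h1
  have h3 : ((Fintype.card K ^ finrank K U : ℕ) : ℚ) = _ := congrArg Nat.cast h1
  push_cast at h3
  linarith

theorem ind_cons {k : ℕ} (A U : Submodule K V) (x : V) (b : Fin k → V) :
    (sp K (Fin.cons x b : Fin (k+1) → V) ≤ U ∧
      finrank K (A ⊔ sp K (Fin.cons x b : Fin (k+1) → V) : Submodule K V) = finrank K A + (k+1)) ↔
    (sp K b ≤ U ∧ finrank K (A ⊔ sp K b : Submodule K V) = finrank K A + k) ∧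
      (x ∈ U ∧ x ∉ A ⊔ sp K b) := by
  rw [sp_cons, sup_le_iff, span_singleton_le_iff_mem, sup_left_comm]
  have h1 := Submodule.finrank_sup_add_finrank_inf_eq A (sp K b)
  have h2 := finrank_sp_le (K := K) b
  by_cases hx : x ∈ A ⊔ sp K b
  · have : span K {x} ⊔ (A ⊔ sp K b) = A ⊔ sp K b := by
      rw [sup_eq_right, span_singleton_le_iff_mem]; exact hx
    rw [this]
    constructor
    · rintro ⟨_, h⟩; omega
    · rintro ⟨_, _, h⟩; exact absurd hx h
  · rw [finrank_span_sup x _ hx]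
    constructor
    · rintro ⟨⟨h1, h2⟩, h3⟩; exact ⟨⟨h2, by omega⟩, h1, hx⟩
    · rintro ⟨⟨h1, h2⟩, h3, _⟩; exact ⟨⟨h3, h1⟩, by omega⟩

/-- tuples in U independent modulo A -/
theorem cnt_ind (A U : Submodule K V) (hAU : A ≤ U) (k : ℕ) :
    (cnt (fun b : Fin k → V => sp K b ≤ U ∧
      finrank K (A ⊔ sp K b : Submodule K V) = finrank K A + k) : ℚ) =
    ∏ i ∈ Finset.range k, ((Fintype.card K : ℚ) ^ finrank K U
      - (Fintype.card K : ℚ) ^ (finrank K A + i)) := by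
  induction k with
  | zero =>
    have : cnt (fun b : Fin 0 → V => sp K b ≤ U ∧
      finrank K (A ⊔ sp K b : Submodule K V) = finrank K A + 0) = cnt (fun b : Fin 0 → V => True) := by
      apply cnt_congr
      intro b
      have : sp K b = ⊥ := by simp [sp, Set.range_eq_empty]
      rw [this, sup_bot_eq]; simp
    rw [this]
    simp [cnt]
  | succ k ih =>
    rw [Finset.prod_range_succ, ← ih, cnt_cons]
    simp_rw [ind_cons]
    apply cnt_prod (fun b : Fin k → V => sp K b ≤ U ∧
          finrank K (A ⊔ sp K b : Submodule K V) = finrank K A + k)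
          (fun b x => x ∈ U ∧ x ∉ A ⊔ sp K b)
    intro b hb
    rw [cnt_mem_sub U _ (sup_le hAU hb.1), hb.2]

/-- number of independent k-tuples in a d-space over a q-element field -/
def LI (q k d : ℕ) : ℚ := ∏ i ∈ Finset.range k, ((q : ℚ) ^ d - (q : ℚ) ^ i)

theorem cnt_LI (U : Submodule K V) (k : ℕ) :
    (cnt (fun b : Fin k → V => sp K b ≤ U ∧ finrank K (sp K b) = k) : ℚ) =
    LI (Fintype.card K) k (finrank K U) := by
  have := cnt_ind (⊥ : Submodule K V) U bot_le k
  have e : ∀ b : Fin k → V, finrank K (⊥ ⊔ sp K b : Submodule K V) = finrank K (sp K b) := by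
    intro b; rw [bot_sup_eq]
  simp only [e, finrank_bot, zero_add] at this
  exact this

end Tuples

section Pairs

variable {K V : Type*} [Field K] [Fintype K] [AddCommGroup V] [Module K V] [FiniteDimensional K V]
  [Fintype V]

/-- number of independent k-tuples in `U` whose span satisfies `P` -/
noncomputable def tc (P : Submodule K V → Prop) (U : Submodule K V) (k : ℕ) : ℕ :=
  cnt (fun a : Fin k → V => (sp K a ≤ U ∧ finrank K (sp K a) = k) ∧ P (sp K a))

theorem LI_succ (q k d : ℕ) : LI q (k+1) d = LI q k d * ((q:ℚ)^d - (q:ℚ)^k) := by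
  unfold LI; rw [Finset.prod_range_succ]

theorem LI_pos (q k d : ℕ) (hq : 1 < q) (h : k ≤ d) : 0 < LI q k d := by
  unfold LI
  apply Finset.prod_pos
  intro i hi
  have : i < k := Finset.mem_range.1 hi
  have hq' : (1:ℚ) < q := by exact_mod_cast hq
  have := pow_lt_pow_right₀ hq' (show i < d by omega)
  linarith

theorem tc_split (P : Submodule K V → Prop) (U : Submodule K V) (k : ℕ) :
    (tc P U k : ℚ) + tc (fun A => ¬ P A) U k = LI (Fintype.card K) k (finrank K U) := by
  rw [← cnt_LI, cnt_split _ (fun a => P (sp K a))]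
  push_cast
  rfl

theorem pair_iff {U : Submodule K V} {j k : ℕ} (h : finrank K U = j + k)
    (a : Fin j → V) (b : Fin k → V) :
    sp K a ⊔ sp K b = U ↔ (sp K a ≤ U ∧ finrank K (sp K a) = j) ∧
      (sp K b ≤ U ∧ finrank K (sp K a ⊔ sp K b : Submodule K V) = finrank K (sp K a) + k) := by
  constructor
  · intro h1
    have h2 := Submodule.finrank_sup_add_finrank_inf_eq (sp K a) (sp K b)
    have h3 := finrank_sp_le (K := K) a
    have h4 := finrank_sp_le (K := K) b
    rw [h1] at h2
    refine ⟨⟨h1 ▸ le_sup_left, by omega⟩, h1 ▸ le_sup_right, ?_⟩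
    rw [h1]; omega
  · rintro ⟨⟨h1, h2⟩, h3, h4⟩
    apply Submodule.eq_of_le_of_finrank_eq (sup_le h1 h3)
    omega

theorem pair_cnt (P : Submodule K V → Prop) {U : Submodule K V} {j k : ℕ}
    (h : finrank K U = j + k) :
    (cnt (fun x : (Fin j → V) × (Fin k → V) => sp K x.1 ⊔ sp K x.2 = U ∧ P (sp K x.1)) : ℚ)
      * LI (Fintype.card K) j (finrank K U)
      = tc P U j * LI (Fintype.card K) (j+k) (finrank K U) := by
  have h1 : (cnt (fun x : (Fin j → V) × (Fin k → V) => sp K x.1 ⊔ sp K x.2 = U ∧ P (sp K x.1)) : ℚ)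
    = tc P U j * ∏ i ∈ Finset.range k, ((Fintype.card K : ℚ) ^ finrank K U
      - (Fintype.card K : ℚ) ^ (j + i)) := by
    unfold tc
    rw [← cnt_prod (β := Fin k → V) (fun a : Fin j → V => (sp K a ≤ U ∧ finrank K (sp K a) = j) ∧ P (sp K a))
      (fun a b => sp K b ≤ U ∧
        finrank K (sp K a ⊔ sp K b : Submodule K V) = finrank K (sp K a) + k)]
    · congr 1
      apply cnt_congr
      intro x
      rw [pair_iff h]; tauto
    · intro a ha
      rw [cnt_ind _ _ ha.1.1, ha.1.2]
  rw [h1]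
  unfold LI
  rw [Finset.prod_range_add]
  ring

theorem pair_bound (P : Submodule K V → Prop) {U : Submodule K V} {j k : ℕ}
    (h : finrank K U = j + k) (hP : ∀ A B, A ⊔ B = U → P A → P B → False) :
    (tc P U j : ℚ) * LI (Fintype.card K) k (finrank K U)
      + tc P U k * LI (Fintype.card K) j (finrank K U) ≤
    LI (Fintype.card K) j (finrank K U) * LI (Fintype.card K) k (finrank K U) := by
  have e1 := pair_cnt P h
  have e2 := pair_cnt P (h.trans (add_comm j k))
  have e3 := pair_cnt (fun _ => True) h
  have e4 : (tc (fun _ => True) U j : ℚ) = LI (Fintype.card K) j (finrank K U) := by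
    rw [← cnt_LI]; unfold tc; simp
  rw [e4] at e3
  have e5 : cnt (fun x : (Fin k → V) × (Fin j → V) => sp K x.1 ⊔ sp K x.2 = U ∧ P (sp K x.1))
     = cnt (fun x : (Fin j → V) × (Fin k → V) => sp K x.1 ⊔ sp K x.2 = U ∧ P (sp K x.2)) := by
    apply cnt_equiv (Equiv.prodComm _ _)
    intro a
    simp [sup_comm]
  have hq : 1 < Fintype.card K := Fintype.one_lt_card
  have p1 := LI_pos (Fintype.card K) j (finrank K U) hq (by omega)
  have p2 := LI_pos (Fintype.card K) k (finrank K U) hq (by omega)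
  have p3 := LI_pos (Fintype.card K) (j+k) (finrank K U) hq (by omega)
  have e6 := cnt_split (fun x : (Fin j → V) × (Fin k → V) => sp K x.1 ⊔ sp K x.2 = U ∧ True)
    (fun x => P (sp K x.1))
  have e7 : cnt (fun x : (Fin j → V) × (Fin k → V) => (sp K x.1 ⊔ sp K x.2 = U ∧ True) ∧ P (sp K x.1))
    = cnt (fun x : (Fin j → V) × (Fin k → V) => sp K x.1 ⊔ sp K x.2 = U ∧ P (sp K x.1)) :=
    cnt_congr (by intro a; tauto)
  have e8 : cnt (fun x : (Fin j → V) × (Fin k → V) => sp K x.1 ⊔ sp K x.2 = U ∧ P (sp K x.2)) ≤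
    cnt (fun x : (Fin j → V) × (Fin k → V) => (sp K x.1 ⊔ sp K x.2 = U ∧ True) ∧ ¬ P (sp K x.1)) := by
    apply cnt_mono
    rintro a ⟨h1, h2⟩
    exact ⟨⟨h1, trivial⟩, fun h3 => hP _ _ h1 h3 h2⟩
  rw [e7] at e6
  rw [e5, add_comm k j] at e2
  generalize cnt (fun x : (Fin j → V) × (Fin k → V) => sp K x.1 ⊔ sp K x.2 = U ∧ P (sp K x.1)) = n1 at *
  generalize cnt (fun x : (Fin j → V) × (Fin k → V) => sp K x.1 ⊔ sp K x.2 = U ∧ P (sp K x.2)) = n2 at *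
  generalize cnt (fun x : (Fin j → V) × (Fin k → V) => (sp K x.1 ⊔ sp K x.2 = U ∧ True) ∧ ¬ P (sp K x.1)) = n3 at *
  generalize cnt (fun x : (Fin j → V) × (Fin k → V) => sp K x.1 ⊔ sp K x.2 = U ∧ True) = n0 at *
  have e9 : (n1 : ℚ) + n2 ≤ n0 := by exact_mod_cast (by omega)
  generalize LI (Fintype.card K) j (finrank K U) = A at *
  generalize LI (Fintype.card K) k (finrank K U) = B at *
  generalize LI (Fintype.card K) (j+k) (finrank K U) = C at *
  have hn0 : (n0:ℚ) = C := by
    have : (n0:ℚ) * A = C * A := by rw [e3]; ring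
    exact mul_right_cancel₀ p1.ne' this
  rw [hn0] at e9
  have : ((tc P U j : ℚ) * B + tc P U k * A) * C ≤ (A * B) * C := by
    calc ((tc P U j : ℚ) * B + tc P U k * A) * C = (tc P U j * C) * B + (tc P U k * C) * A := by ring
      _ = (n1 + n2) * (A * B) := by rw [← e1, ← e2]; ring
      _ ≤ C * (A * B) := by gcongr
      _ = _ := by ring
  exact le_of_mul_le_mul_right this p3

/-- Erdos-Ko-Rado bound in twice the dimension, through spreads. -/
theorem ekr_hom {L : Type*} [Field L] [Algebra K L] [Fintype L] [Fintype (L →ₗ[K] V)]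
    (P : Submodule K V → Prop) (U : Submodule K V) (hP : ∀ A B, A ⊔ B = U → P A → P B → False) :
    cnt (fun x : (L →ₗ[K] V) × (L →ₗ[K] V) => x.1.range ⊔ x.2.range = U ∧ P x.1.range)
      * (Fintype.card L + 1) ≤
    cnt (fun x : (L →ₗ[K] V) × (L →ₗ[K] V) => x.1.range ⊔ x.2.range = U) := by
  classical
  let S : Option L → (L →ₗ[K] V) × (L →ₗ[K] V) → (L →ₗ[K] V) := fun o x =>
    match o with
    | none => x.2
    | some l => x.1 + x.2 ∘ₗ (LinearMap.mulLeft K l)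
  have hle : ∀ (b : L →ₗ[K] V) (l : L), (b ∘ₗ (LinearMap.mulLeft K l)).range ≤ b.range :=
    fun b l => LinearMap.range_comp_le_range _ _
  have hadd : ∀ (a b : L →ₗ[K] V), (a + b).range ≤ a.range ⊔ b.range := by
    rintro a b _ ⟨y, rfl⟩
    exact Submodule.add_mem_sup ⟨y, rfl⟩ ⟨y, rfl⟩
  have hrange : ∀ (l : L) (a b : L →ₗ[K] V),
      (a + b ∘ₗ (LinearMap.mulLeft K l)).range ⊔ b.range = a.range ⊔ b.range := by
    intro l a b
    apply le_antisymm
    · refine sup_le ((hadd _ _).trans (sup_le_sup_left (hle _ _) _)) le_sup_right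
    · refine sup_le ?_ le_sup_right
      rintro _ ⟨y, rfl⟩
      have : a y = (a + b ∘ₗ (LinearMap.mulLeft K l)) y + (- (b (l * y))) := by simp
      rw [this]
      exact Submodule.add_mem_sup ⟨y, rfl⟩ (neg_mem ⟨_, rfl⟩)
  have hc : ∀ o : Option L,
      cnt (fun x : (L →ₗ[K] V) × (L →ₗ[K] V) => x.1.range ⊔ x.2.range = U ∧ P (S o x).range) =
      cnt (fun x : (L →ₗ[K] V) × (L →ₗ[K] V) => x.1.range ⊔ x.2.range = U ∧ P x.1.range) := by
    intro o
    cases o with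
    | none =>
      apply cnt_equiv (Equiv.prodComm _ _)
      intro x
      simp [S, sup_comm]
    | some l =>
      apply cnt_equiv ⟨fun x => (x.1 + x.2 ∘ₗ (LinearMap.mulLeft K l), x.2),
        fun x => (x.1 - x.2 ∘ₗ (LinearMap.mulLeft K l), x.2), fun x => by simp, fun x => by simp⟩
      intro x
      simp only [Equiv.coe_fn_mk, hrange, S]
  have hs := cnt_disj_sum (Finset.univ : Finset (Option L))
    (fun o (x : (L →ₗ[K] V) × (L →ₗ[K] V)) => x.1.range ⊔ x.2.range = U ∧ P (S o x).range)
    (fun x => x.1.range ⊔ x.2.range = U) (fun o _ x h => h.1) ?_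
  · rw [Finset.sum_congr rfl (fun o _ => hc o)] at hs
    rw [Finset.sum_const, Finset.card_univ, Fintype.card_option, smul_eq_mul] at hs
    rw [← hs, mul_comm]
    exact Nat.le_add_right _ _
  · have key : ∀ (l m : L) (x : (L →ₗ[K] V) × (L →ₗ[K] V)), l ≠ m → x.1.range ⊔ x.2.range = U →
        (S (some l) x).range ⊔ (S (some m) x).range = U := by
      rintro l m ⟨a, b⟩ hlm h
      simp only [S] at *
      have hb : b.range ≤ (a + b ∘ₗ (LinearMap.mulLeft K l)).range ⊔
          (a + b ∘ₗ (LinearMap.mulLeft K m)).range := by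
        rintro _ ⟨y, rfl⟩
        have h0 : l - m ≠ 0 := sub_ne_zero.2 hlm
        have : b y = (a + b ∘ₗ (LinearMap.mulLeft K l)) ((l-m)⁻¹ * y) +
          (- (a + b ∘ₗ (LinearMap.mulLeft K m)) ((l-m)⁻¹ * y)) := by
          simp only [LinearMap.add_apply, LinearMap.comp_apply, LinearMap.mulLeft_apply]
          have e : y = l * ((l-m)⁻¹ * y) - m * ((l-m)⁻¹ * y) := by field_simp
          conv_lhs => rw [e, map_sub]
          abel
        rw [this]
        exact Submodule.add_mem_sup ⟨_, rfl⟩ (neg_mem ⟨_, rfl⟩)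
      rw [← h]
      apply le_antisymm
      · rw [← hrange l a b] at h ⊢
        refine sup_le le_sup_left ?_
        rw [hrange l a b, ← hrange m a b]; exact le_sup_left
      · rw [← hrange l a b]
        exact sup_le le_sup_left hb
    intro o _ o' _ x h1 h2
    by_contra hne
    match o, o', hne with
    | none, none, hne => exact hne rfl
    | none, some l, _ =>
      refine hP _ _ ?_ h2.2 h1.2
      rw [← h1.1]; exact hrange l _ _
    | some l, none, _ =>
      refine hP _ _ ?_ h1.2 h2.2
      rw [← h1.1]; exact hrange l _ _
    | some l, some m, hne =>
      exact hP _ _ (key l m x (fun h => hne (by rw [h])) h1.1) h1.2 h2.2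

theorem ekr (P : Submodule K V → Prop) {U : Submodule K V} {t : ℕ} (ht : 1 ≤ t)
    (h : finrank K U = t + t) (hP : ∀ A B, A ⊔ B = U → P A → P B → False) :
    (tc P U t : ℚ) * ((Fintype.card K : ℚ) ^ t + 1) ≤ LI (Fintype.card K) t (finrank K U) := by
  classical
  obtain ⟨p, hp⟩ := CharP.exists K
  have : Fact (Nat.Prime p) := ⟨CharP.char_is_prime K p⟩
  have : NeZero t := ⟨by omega⟩
  let L := FiniteField.Extension K p t
  have hL : finrank K L = t := FiniteField.finrank_extension K p t
  letI : Fintype L := Fintype.ofFinite L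
  have hcard : Fintype.card L = Fintype.card K ^ t := by
    rw [Module.card_eq_pow_finrank (K := K) (V := L), hL]
  let β : Basis (Fin t) K L := finBasisOfFinrankEq K L hL
  let e : (Fin t → V) ≃ (L →ₗ[K] V) := (β.constr K (M' := V)).toEquiv
  letI : Fintype (L →ₗ[K] V) := Fintype.ofEquiv _ e
  have hr : ∀ a, (e a).range = sp K a := fun a => β.constr_range K
  have key := ekr_hom (L := L) P U hP
  have c1 : cnt (fun x : (Fin t → V) × (Fin t → V) => sp K x.1 ⊔ sp K x.2 = U ∧ P (sp K x.1)) =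
      cnt (fun x : (L →ₗ[K] V) × (L →ₗ[K] V) => x.1.range ⊔ x.2.range = U ∧ P x.1.range) := by
    apply cnt_equiv (Equiv.prodCongr e e)
    intro a; simp [hr]
  have c2 : cnt (fun x : (Fin t → V) × (Fin t → V) => sp K x.1 ⊔ sp K x.2 = U ∧ True) =
      cnt (fun x : (L →ₗ[K] V) × (L →ₗ[K] V) => x.1.range ⊔ x.2.range = U) := by
    apply cnt_equiv (Equiv.prodCongr e e)
    intro a; simp [hr]
  rw [← c1, ← c2, hcard] at key
  have e1 := pair_cnt P h
  have e3 := pair_cnt (fun _ => True) h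
  have e4 : (tc (fun _ => True) U t : ℚ) = LI (Fintype.card K) t (finrank K U) := by
    rw [← cnt_LI]; unfold tc; simp
  rw [e4] at e3
  have hq : 1 < Fintype.card K := Fintype.one_lt_card
  have p1 := LI_pos (Fintype.card K) t (finrank K U) hq (by omega)
  have p3 := LI_pos (Fintype.card K) (t+t) (finrank K U) hq (by omega)
  have key' : (cnt (fun x : (Fin t → V) × (Fin t → V) => sp K x.1 ⊔ sp K x.2 = U ∧ P (sp K x.1)) : ℚ)
    * ((Fintype.card K : ℚ) ^ t + 1) ≤
      cnt (fun x : (Fin t → V) × (Fin t → V) => sp K x.1 ⊔ sp K x.2 = U ∧ True) := by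
    exact_mod_cast key
  generalize cnt (fun x : (Fin t → V) × (Fin t → V) => sp K x.1 ⊔ sp K x.2 = U ∧ P (sp K x.1)) = n1 at *
  generalize cnt (fun x : (Fin t → V) × (Fin t → V) => sp K x.1 ⊔ sp K x.2 = U ∧ True) = n0 at *
  generalize LI (Fintype.card K) t (finrank K U) = A at *
  generalize LI (Fintype.card K) (t+t) (finrank K U) = C at *
  have : ((tc P U t : ℚ) * ((Fintype.card K : ℚ) ^ t + 1)) * C ≤ A * C := by
    calc _ = (tc P U t * C) * ((Fintype.card K : ℚ) ^ t + 1) := by ring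
      _ = (n1 * ((Fintype.card K : ℚ) ^ t + 1)) * A := by rw [← e1]; ring
      _ ≤ n0 * A := by gcongr
      _ = _ := by rw [e3]
  exact le_of_mul_le_mul_right this p3

end Pairs

section Arith

theorem gauss_eq (q m k : ℕ) (hq : 1 < q) (h : k ≤ m) : GaussQ q m k = LI q k m / LI q k k := by
  unfold GaussQ LI
  rw [← Finset.prod_div_distrib]
  apply Finset.prod_congr rfl
  intro i hi
  have hi : i < k := Finset.mem_range.1 hi
  have hq0 : (q:ℚ) ≠ 0 := by positivity
  have e : ∀ d, i < d → (q:ℚ)^d - (q:ℚ)^i = (q:ℚ)^i * ((q:ℚ)^(d-i) - 1) := by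
    intro d hd
    rw [mul_sub, ← pow_add, mul_one]
    congr 2; omega
  rw [e m (by omega), e k hi, mul_div_mul_left]
  positivity

theorem ratio_eq (q n t : ℕ) (hq : 1 < q) (ht : 1 ≤ t) (h : 2 * t + 1 ≤ n) :
    GaussQ q (n-1) t / GaussQ q (2*t-1) t = LI q t (n-1) / LI q t (2*t-1) := by
  rw [gauss_eq q _ _ hq (by omega), gauss_eq q _ _ hq (by omega)]
  have := LI_pos q t t hq le_rfl
  have := LI_pos q t (2*t-1) hq (by omega)
  field_simp

theorem LI_shift (q t m : ℕ) :
    (q:ℚ)^t * LI q t m * ((q:ℚ)^(m+1) - 1) = LI q t (m+1) * ((q:ℚ)^(m+1) - (q:ℚ)^t) := by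
  rw [← LI_succ]
  unfold LI
  rw [Finset.prod_range_succ', pow_zero]
  congr 1
  have e : (q:ℚ)^t = ∏ _i ∈ Finset.range t, (q:ℚ) := by simp
  rw [e, ← Finset.prod_mul_distrib]
  apply Finset.prod_congr rfl
  intro i _
  ring

theorem target_eq (q n t N : ℕ) (hq : 1 < q) (ht : 1 ≤ t) (h : 2 * t + 1 ≤ n)
    (hN : (N:ℚ) * LI q t (2*t-1) = LI q t (n-1)) :
    (N:ℚ) * (LI q t (2*t) * (q:ℚ)^t * ((q:ℚ)^n - 1)) =
      LI q t n * ((q:ℚ)^n - (q:ℚ)^t) * ((q:ℚ)^t + 1) := by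
  have e1 := LI_shift q t (n-1)
  have e2 := LI_shift q t (2*t-1)
  rw [show n - 1 + 1 = n by omega] at e1
  rw [show 2*t - 1 + 1 = 2*t by omega, show (q:ℚ)^(2*t) = (q:ℚ)^t * (q:ℚ)^t by ring] at e2
  have hq' : (1:ℚ) < q := by exact_mod_cast hq
  have hy : (1:ℚ) < (q:ℚ)^t := one_lt_pow₀ hq' (by omega)
  generalize (q:ℚ)^t = y at *
  generalize (q:ℚ)^n = z at *
  have : (y - 1) * ((N:ℚ) * (LI q t (2*t) * y * (z - 1))) =
     (y - 1) * (LI q t n * (z - y) * (y + 1)) := by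
    calc _ = N * (z-1) * (LI q t (2*t) * (y * y - y)) := by ring
      _ = y * (N * LI q t (2*t-1)) * (y*y-1) * (z-1) := by rw [← e2]; ring
      _ = (y * LI q t (n-1) * (z-1)) * (y*y-1) := by rw [hN]; ring
      _ = _ := by rw [e1]; ring
  exact mul_left_cancel₀ (by linarith : y - 1 ≠ 0) this

theorem arith_core (x y z Ls Lt os ot o2 c : ℚ) (hx : 0 < x) (hxy : x ≤ y) (hy : 1 < y)
    (hz : 2 * y ^ 2 ≤ z) (hLs : 0 < Ls) (hLt : Lt = Ls * (y^2 - x)) (hos : 0 ≤ os)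
    (h1 : (Ls - os) * (Lt * (y^2-y)) + (Lt * (y^2-y) - o2) * Ls ≤ Ls * (Lt * (y^2-y)))
    (h2 : (Lt - ot) * (y+1) ≤ Lt)
    (hc : o2 + ot * (z - y^2) + os * ((z - y^2) * (z - y)) ≤ c) :
    Lt * y * (z - 1) ≤ c * (y+1) ∧ (c * (y+1) = Lt * y * (z-1) →
      os = 0 ∧ (Lt - ot) * (y+1) = Lt) := by
  have h3 : Lt * (y^2-y) ≤ os * ((y^2-x)*(y^2-y)) + o2 := by
    have : (Lt * (y^2-y)) * Ls ≤ (os * ((y^2-x)*(y^2-y)) + o2) * Ls := by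
      have : os * (Lt * (y^2-y)) = os * ((y^2-x)*(y^2-y)) * Ls := by rw [hLt]; ring
      nlinarith
    exact le_of_mul_le_mul_right this hLs
  have hb : (y^2-x)*(y^2-y) < (z - y^2) * (z - y) := by
    apply mul_lt_mul'' <;> nlinarith
  set β := (z - y^2) * (z - y)
  set α := (y^2-x)*(y^2-y)
  have hz' : 0 < z - y^2 := by nlinarith
  have h4 : 0 ≤ (ot * (y+1) - y * Lt) := by linarith
  have h5 : 0 ≤ os * (β - α) := mul_nonneg hos (by linarith)
  have h6 : Lt * (y^2-y) + ot * (z-y^2) + os * (β - α) ≤ c := by linarith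
  have h7 : (Lt * (y^2-y) + ot * (z-y^2) + os * (β - α)) * (y+1) ≤ c * (y+1) :=
    mul_le_mul_of_nonneg_right h6 (by linarith)
  have h8 : (Lt * (y^2-y) + ot * (z-y^2) + os * (β - α)) * (y+1) =
    Lt * y * (z-1) + (ot * (y+1) - y * Lt) * (z - y^2) + (os * (β-α)) * (y+1) := by ring
  have h9 : 0 ≤ (ot * (y+1) - y * Lt) * (z - y^2) := mul_nonneg h4 hz'.le
  have h10 : 0 ≤ (os * (β-α)) * (y+1) := mul_nonneg h5 (by linarith)
  refine ⟨by linarith, fun he => ?_⟩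
  have h11 : (ot * (y+1) - y * Lt) * (z - y^2) = 0 := by linarith
  have h12 : (os * (β-α)) * (y+1) = 0 := by linarith
  constructor
  · have a1 : β - α ≠ 0 := by linarith
    have a2 : y + 1 ≠ 0 := by linarith
    simpa [a1, a2] using h12
  · have : ot * (y+1) - y * Lt = 0 := by
      rcases mul_eq_zero.1 h11 with h | h
      · exact h
      · linarith
    linarith

end Arith

section Main

variable {K V : Type*} [Field K] [Fintype K] [AddCommGroup V] [Module K V] [FiniteDimensional K V]
  [Fintype V]

/-- `A` is contained in some other member -/
def NonOwn (F : Set (Submodule K V)) (G A : Submodule K V) : Prop := ∃ H1 ∈ F, H1 ≠ G ∧ A ≤ H1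

/-- `A` is own subspace of `G` -/
def Own (F : Set (Submodule K V)) (G A : Submodule K V) : Prop :=
  A ≤ G ∧ ∀ G' ∈ F, A ≤ G' → G' = G

theorem own_iff (F : Set (Submodule K V)) (G A : Submodule K V) (h : A ≤ G) :
    Own F G A ↔ ¬ NonOwn F G A := by
  unfold Own NonOwn
  constructor
  · rintro ⟨_, h1⟩ ⟨G', hG', hne, hle⟩
    exact hne (h1 G' hG' hle)
  · intro h1
    refine ⟨h, fun G' hG' hle => ?_⟩
    by_contra hne
    exact h1 ⟨G', hG', hne, hle⟩

theorem nonown_compl {F : Set (Submodule K V)} {d : ℕ} (hdim : ∀ A ∈ F, finrank K A = d)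
    (hcf : IsCoverFree F) {G : Submodule K V} (hG : G ∈ F) (A B : Submodule K V)
    (hAB : A ⊔ B = G) (hA : NonOwn F G A) (hB : NonOwn F G B) : False := by
  obtain ⟨G1, hG1, hne1, hle1⟩ := hA
  obtain ⟨G2, hG2, hne2, hle2⟩ := hB
  have hAG : A ≤ G := hAB ▸ le_sup_left
  have hBG : B ≤ G := hAB ▸ le_sup_right
  apply hcf
  refine ⟨G, G1, G2, hG, hG1, hG2, hne1.symm, hne2.symm, ?_, ?_⟩
  · rintro rfl
    have : G ≤ G1 := hAB ▸ sup_le hle1 hle2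
    exact hne1 (Submodule.eq_of_le_of_finrank_eq this (by rw [hdim _ hG, hdim _ hG1])).symm
  · conv_lhs => rw [← hAB]
    exact sup_le_sup (le_inf hAG hle1) (le_inf hBG hle2)

/-- flags hit by `G` -/
def Hit (F : Set (Submodule K V)) (G : Submodule K V) {s : ℕ} (w : Fin (s+2) → V) : Prop :=
  finrank K (sp K w) = s + 2 ∧
    (Own F G (sp K w) ∨ Own F G (sp K (Fin.tail w)) ∨ Own F G (sp K (Fin.tail (Fin.tail w))))

theorem sp_tail_le {k : ℕ} (w : Fin (k+1) → V) : sp K (Fin.tail w) ≤ sp K w := by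
  conv_rhs => rw [← Fin.cons_self_tail w]
  rw [sp_cons]; exact le_sup_right

theorem hit_disj {F : Set (Submodule K V)} {s : ℕ} (G G' : Submodule K V) (hG : G ∈ F)
    (hG' : G' ∈ F) (w : Fin (s+2) → V) (h : Hit F G w) (h' : Hit F G' w) : G = G' := by
  have l1 := sp_tail_le (K := K) w
  have l2 := sp_tail_le (K := K) (Fin.tail w)
  have key : ∀ A B, A ≤ B → Own F G A → Own F G' B → G = G' :=
    fun A B h hA hB => (hA.2 G' hG' (h.trans hB.1)).symm
  have key' : ∀ A B, A ≤ B → Own F G B → Own F G' A → G = G' :=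
    fun A B h hA hB => (hB.2 G hG (h.trans hA.1))
  rcases h.2 with h | h | h <;> rcases h'.2 with h' | h' | h'
  · exact key _ _ le_rfl h h'
  · exact key' _ _ l1 h h'
  · exact key' _ _ (l2.trans l1) h h'
  · exact key _ _ l1 h h'
  · exact key _ _ le_rfl h h'
  · exact key' _ _ l2 h h'
  · exact key _ _ (l2.trans l1) h h'
  · exact key _ _ l2 h h'
  · exact key _ _ le_rfl h h'

theorem cnt_not_mem (A : Submodule K V) :
    (cnt (fun x => x ∉ A) : ℚ) = (Fintype.card K : ℚ) ^ finrank K V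
      - (Fintype.card K : ℚ) ^ finrank K A := by
  have := cnt_mem_sub (⊤ : Submodule K V) A le_top
  rw [finrank_top] at this
  rw [← this]
  congr 1
  apply cnt_congr; simp

theorem hit_count (F : Set (Submodule K V)) (G : Submodule K V) (s : ℕ) :
    (tc (fun A => ¬ NonOwn F G A) G (s+2) : ℚ)
      + tc (fun A => ¬ NonOwn F G A) G (s+1) *
        ((Fintype.card K : ℚ) ^ finrank K V - (Fintype.card K : ℚ) ^ finrank K G)
      + tc (fun A => ¬ NonOwn F G A) G s *
        (((Fintype.card K : ℚ) ^ finrank K V - (Fintype.card K : ℚ) ^ finrank K G) *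
         ((Fintype.card K : ℚ) ^ finrank K V - (Fintype.card K : ℚ) ^ (s+1)))
      ≤ cnt (fun w : Fin (s+2) → V => Hit F G w) := by
  have y2 : (tc (fun A => ¬ NonOwn F G A) G (s+1) : ℚ) *
        ((Fintype.card K : ℚ) ^ finrank K V - (Fintype.card K : ℚ) ^ finrank K G) =
      cnt (fun w : Fin (s+2) → V => ((sp K (Fin.tail w) ≤ G ∧ finrank K (sp K (Fin.tail w)) = s+1)
        ∧ ¬ NonOwn F G (sp K (Fin.tail w))) ∧ w 0 ∉ G) := by
    rw [cnt_cons]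
    exact (cnt_prod (fun v : Fin (s+1) → V => (sp K v ≤ G ∧ finrank K (sp K v) = s+1)
        ∧ ¬ NonOwn F G (sp K v)) (fun _ x => x ∉ G) _ (fun _ _ => cnt_not_mem G)).symm
  have y3 : (tc (fun A => ¬ NonOwn F G A) G s : ℚ) *
        (((Fintype.card K : ℚ) ^ finrank K V - (Fintype.card K : ℚ) ^ finrank K G) *
         ((Fintype.card K : ℚ) ^ finrank K V - (Fintype.card K : ℚ) ^ (s+1))) =
      cnt (fun w : Fin (s+2) → V => (((sp K (Fin.tail (Fin.tail w)) ≤ G ∧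
        finrank K (sp K (Fin.tail (Fin.tail w))) = s)
        ∧ ¬ NonOwn F G (sp K (Fin.tail (Fin.tail w)))) ∧ (Fin.tail w) 0 ∉ G) ∧
          w 0 ∉ sp K (Fin.tail w)) := by
    rw [cnt_cons]
    refine Eq.trans ?_ (cnt_prod (fun v : Fin (s+1) → V => ((sp K (Fin.tail v) ≤ G ∧
        finrank K (sp K (Fin.tail v)) = s)
        ∧ ¬ NonOwn F G (sp K (Fin.tail v))) ∧ v 0 ∉ G) (fun v x => x ∉ sp K v)
        ((Fintype.card K : ℚ) ^ finrank K V - (Fintype.card K : ℚ) ^ (s+1)) ?_).symm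
    · rw [cnt_cons, ← mul_assoc]
      congr 1
      exact (cnt_prod (fun v : Fin s → V => (sp K v ≤ G ∧ finrank K (sp K v) = s)
        ∧ ¬ NonOwn F G (sp K v)) (fun _ x => x ∉ G) _ (fun _ _ => cnt_not_mem G)).symm
    · rintro v ⟨⟨⟨h1, h2⟩, _⟩, h3⟩
      rw [cnt_not_mem]
      congr 2
      rw [← Fin.cons_self_tail v, sp_cons, finrank_span_sup _ _ (fun h => h3 (h1 h)), h2]
  rw [y2, y3]
  rw [cnt_split (fun w : Fin (s+2) → V => Hit F G w) (fun w => sp K w ≤ G),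
    cnt_split (fun w : Fin (s+2) → V => Hit F G w ∧ ¬ sp K w ≤ G) (fun w => sp K (Fin.tail w) ≤ G)]
  push_cast
  rw [← add_assoc]
  have hmem : ∀ {k : ℕ} (w : Fin (k+1) → V), w 0 ∈ sp K w := fun w =>
    subset_span ⟨0, rfl⟩
  refine add_le_add (add_le_add ?_ ?_) ?_ <;> refine Nat.cast_le.2 (cnt_mono ?_)
  · rintro w ⟨⟨h1, h2⟩, h3⟩
    exact ⟨⟨h2, Or.inl ((own_iff _ _ _ h1).2 h3)⟩, h1⟩
  · rintro w ⟨⟨⟨h1, h2⟩, h3⟩, h4⟩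
    refine ⟨⟨⟨?_, Or.inr (Or.inl ((own_iff _ _ _ h1).2 h3))⟩, fun h => h4 (h (hmem w))⟩, h1⟩
    rw [← Fin.cons_self_tail w, sp_cons, finrank_span_sup _ _ (fun h => h4 (h1 h)), h2]
  · rintro w ⟨⟨⟨⟨h1, h2⟩, h3⟩, h4⟩, h5⟩
    have h6 : ¬ sp K (Fin.tail w) ≤ G := fun h => h4 (h (hmem _))
    refine ⟨⟨⟨?_, Or.inr (Or.inr ((own_iff _ _ _ h1).2 h3))⟩,
      fun h => h6 ((sp_tail_le w).trans h)⟩, h6⟩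
    rw [← Fin.cons_self_tail w, sp_cons, finrank_span_sup _ _ h5, ← Fin.cons_self_tail (Fin.tail w),
      sp_cons, finrank_span_sup _ _ (fun h => h4 (h1 h)), h2]

theorem weight {F : Set (Submodule K V)} {s : ℕ} (hdim : ∀ A ∈ F, finrank K A = 2 * (s+1))
    (hcf : IsCoverFree F) (hn : 2 * (s+1) + 1 ≤ finrank K V) {G : Submodule K V} (hG : G ∈ F) :
    LI (Fintype.card K) (s+1) (2*(s+1)) * (Fintype.card K : ℚ)^(s+1)
        * ((Fintype.card K : ℚ)^(finrank K V) - 1) ≤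
      cnt (fun w : Fin (s+2) → V => Hit F G w) * ((Fintype.card K : ℚ)^(s+1) + 1) ∧
    (cnt (fun w : Fin (s+2) → V => Hit F G w) * ((Fintype.card K : ℚ)^(s+1) + 1) =
      LI (Fintype.card K) (s+1) (2*(s+1)) * (Fintype.card K : ℚ)^(s+1)
        * ((Fintype.card K : ℚ)^(finrank K V) - 1) →
      tc (fun A => ¬ NonOwn F G A) G s = 0 ∧
      (tc (NonOwn F G) G (s+1) : ℚ) * ((Fintype.card K : ℚ)^(s+1) + 1) =
        LI (Fintype.card K) (s+1) (2*(s+1))) := by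
  have hd := hdim G hG
  have hq : 1 < Fintype.card K := Fintype.one_lt_card
  have hc := hit_count F G s
  have b1 := pair_bound (NonOwn F G) (U := G) (j := s) (k := s+2) (by omega)
    (nonown_compl hdim hcf hG)
  have b2 := ekr (NonOwn F G) (U := G) (t := s+1) (by omega) (by omega)
    (nonown_compl hdim hcf hG)
  have s0 := tc_split (NonOwn F G) G s
  have s1 := tc_split (NonOwn F G) G (s+1)
  have s2 := tc_split (NonOwn F G) G (s+2)
  rw [hd] at hc b1 b2 s0 s1 s2
  have p0 := LI_pos (Fintype.card K) s (2*(s+1)) hq (by omega)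
  have hq' : (2:ℚ) ≤ Fintype.card K := by exact_mod_cast hq
  have e1 := LI_succ (Fintype.card K) s (2*(s+1))
  have e2 := LI_succ (Fintype.card K) (s+1) (2*(s+1))
  have ee : (Fintype.card K : ℚ)^(2*(s+1)) = ((Fintype.card K : ℚ)^(s+1))^2 := by ring
  rw [show s+1+1 = s+2 by rfl] at e2
  have hz : 2 * ((Fintype.card K : ℚ)^(s+1))^2 ≤ (Fintype.card K : ℚ)^(finrank K V) := by
    rw [← ee]
    calc 2 * (Fintype.card K : ℚ)^(2*(s+1)) ≤ (Fintype.card K : ℚ) * (Fintype.card K : ℚ)^(2*(s+1)) := by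
          gcongr
      _ = (Fintype.card K : ℚ)^(2*(s+1)+1) := by ring
      _ ≤ _ := pow_le_pow_right₀ (by linarith) hn
  have hx : (0:ℚ) < (Fintype.card K : ℚ)^s := by positivity
  have hxy : (Fintype.card K : ℚ)^s ≤ (Fintype.card K : ℚ)^(s+1) :=
    pow_le_pow_right₀ (by linarith) (by omega)
  have hy : 1 < (Fintype.card K : ℚ)^(s+1) := one_lt_pow₀ (by linarith) (by omega)
  have t0 : (tc (NonOwn F G) G s : ℚ) = LI (Fintype.card K) s (2*(s+1))
    - tc (fun A => ¬ NonOwn F G A) G s := by linarith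
  have t1 : (tc (NonOwn F G) G (s+1) : ℚ) = LI (Fintype.card K) (s+1) (2*(s+1))
    - tc (fun A => ¬ NonOwn F G A) G (s+1) := by linarith
  have t2 : (tc (NonOwn F G) G (s+2) : ℚ) = LI (Fintype.card K) (s+2) (2*(s+1))
    - tc (fun A => ¬ NonOwn F G A) G (s+2) := by linarith
  rw [t0, t2, e2] at b1
  rw [t1] at b2 ⊢
  rw [ee] at hc b1 e1
  have hos : (0:ℚ) ≤ (tc (fun A => ¬ NonOwn F G A) G s : ℚ) := Nat.cast_nonneg _
  clear s0 s1 s2 t0 t1 t2 e2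
  obtain ⟨r1, r2⟩ := arith_core _ _ _ _ _ _ _ _ _ hx hxy hy hz p0 e1 hos b1 b2 hc
  refine ⟨r1, fun h => ?_⟩
  obtain ⟨r3, r4⟩ := r2 h
  exact ⟨by exact_mod_cast r3, r4⟩

theorem extremal {F : Set (Submodule K V)} {s : ℕ} (hdim : ∀ A ∈ F, finrank K A = 2 * (s+1))
    (hcf : IsCoverFree F) (hn : 2 * (s+1) + 1 ≤ finrank K V)
    (hN : (F.ncard : ℚ) * LI (Fintype.card K) (s+1) (2*(s+1)-1)
      = LI (Fintype.card K) (s+1) (finrank K V-1)) :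
    (∀ G ∈ F, (tc (NonOwn F G) G (s+1) : ℚ) * ((Fintype.card K : ℚ)^(s+1) + 1) =
        LI (Fintype.card K) (s+1) (2*(s+1))) ∧
    (∀ T D : Submodule K V, T ≤ D → finrank K T = s+1 → finrank K D = s+2 →
      (∃ G ∈ F, Own F G T) ∨ (∃ G ∈ F, Own F G D)) := by
  classical
  have hq : 1 < Fintype.card K := Fintype.one_lt_card
  have htar := target_eq (Fintype.card K) (finrank K V) (s+1) F.ncard hq (by omega) hn hN
  let FF : Finset (Submodule K V) := F.toFinite.toFinset
  have hmem : ∀ G, G ∈ FF ↔ G ∈ F := by intro G; simp [FF]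
  have hcard : (FF.card : ℚ) = F.ncard := by
    rw [Set.ncard_eq_toFinset_card F F.toFinite]
  have hsum := cnt_disj_sum FF (fun G (w : Fin (s+2) → V) => Hit F G w)
    (fun w => finrank K (sp K w) = s+2) (fun G _ w h => h.1)
    (fun G hG G' hG' w h h' => hit_disj G G' ((hmem G).1 hG) ((hmem G').1 hG') w h h')
  have htot : (cnt (fun w : Fin (s+2) → V => finrank K (sp K w) = s+2) : ℚ) =
      LI (Fintype.card K) (s+1) (finrank K V) *
        ((Fintype.card K : ℚ)^(finrank K V) - (Fintype.card K : ℚ)^(s+1)) := by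
    rw [← LI_succ]
    have := cnt_LI (⊤ : Submodule K V) (s+2)
    rw [finrank_top] at this
    rw [← this]
    congr 1; apply cnt_congr; simp
  have hsum' : (∑ G ∈ FF, (cnt (fun w : Fin (s+2) → V => Hit F G w) : ℚ)) +
      cnt (fun w : Fin (s+2) → V => finrank K (sp K w) = s+2 ∧ ∀ G ∈ FF, ¬ Hit F G w) =
      LI (Fintype.card K) (s+1) (finrank K V) *
        ((Fintype.card K : ℚ)^(finrank K V) - (Fintype.card K : ℚ)^(s+1)) := by
    rw [← htot, ← hsum]; push_cast; rfl
  have hw := fun G (hG : G ∈ FF) => weight hdim hcf hn ((hmem G).1 hG)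
  set c0 := LI (Fintype.card K) (s+1) (2*(s+1)) * (Fintype.card K : ℚ)^(s+1)
        * ((Fintype.card K : ℚ)^(finrank K V) - 1) with hc0
  set y1 := (Fintype.card K : ℚ)^(s+1) + 1 with hy1
  have hy1pos : 0 < y1 := by positivity
  set rest := cnt (fun w : Fin (s+2) → V => finrank K (sp K w) = s+2 ∧ ∀ G ∈ FF, ¬ Hit F G w) with hrest
  have hz : ∑ G ∈ FF, ((cnt (fun w : Fin (s+2) → V => Hit F G w) : ℚ) * y1 - c0) + rest * y1 = 0 := by
    rw [Finset.sum_sub_distrib, Finset.sum_const, nsmul_eq_mul, hcard, htar, ← hsum', ← Finset.sum_mul]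
    ring
  have hnn : ∀ G ∈ FF, 0 ≤ (cnt (fun w : Fin (s+2) → V => Hit F G w) : ℚ) * y1 - c0 := by
    intro G hG
    have := (hw G hG).1
    linarith
  have hs0 := Finset.sum_nonneg hnn
  have hr0 : 0 ≤ (rest:ℚ) * y1 := by positivity
  have hs1 : ∑ G ∈ FF, ((cnt (fun w : Fin (s+2) → V => Hit F G w) : ℚ) * y1 - c0) = 0 := by linarith
  have hr1 : (rest:ℚ) * y1 = 0 := by linarith
  have heq := (Finset.sum_eq_zero_iff_of_nonneg hnn).1 hs1
  have hfin := fun G (hG : G ∈ F) => (hw G ((hmem G).2 hG)).2 (by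
    have := heq G ((hmem G).2 hG); linarith)
  refine ⟨fun G hG => (hfin G hG).2, ?_⟩
  intro T D hTD hT hD
  have hr2 : rest = 0 := by
    rcases mul_eq_zero.1 hr1 with h | h
    · exact_mod_cast h
    · linarith
  obtain ⟨x, hxD, hxT⟩ : ∃ x ∈ D, x ∉ T := by
    by_contra hcon
    push Not at hcon
    have := Submodule.finrank_mono (show D ≤ T from hcon)
    omega
  obtain ⟨v, hv⟩ : ∃ v : Fin (s+1) → V, sp K v = T := by
    have := exists_tuple T; rwa [hT] at this
  have hwD : sp K (Fin.cons x v : Fin (s+2) → V) = D := by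
    rw [sp_cons, hv]
    apply Submodule.eq_of_le_of_finrank_eq
    · exact sup_le ((span_singleton_le_iff_mem _ _).2 hxD) hTD
    · rw [finrank_span_sup _ _ hxT, hT, hD]
  have hex : ∃ G ∈ FF, Hit F G (Fin.cons x v : Fin (s+2) → V) := by
    by_contra hcon
    push Not at hcon
    have : 0 < rest := cnt_pos.2 ⟨(Fin.cons x v : Fin (s+2) → V), by rw [hwD, hD], hcon⟩
    omega
  obtain ⟨G, hG, hh, h | h | h⟩ := hex
  · rw [hwD] at h
    exact Or.inr ⟨G, (hmem G).1 hG, h⟩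
  · rw [Fin.tail_cons, hv] at h
    exact Or.inl ⟨G, (hmem G).1 hG, h⟩
  · exfalso
    rw [Fin.tail_cons] at h
    have h0 := (hfin G ((hmem G).1 hG)).1
    have : 0 < tc (fun A => ¬ NonOwn F G A) G s := by
      refine cnt_pos.2 ⟨Fin.tail v, ⟨h.1, ?_⟩, (own_iff _ _ _ h.1).1 h⟩
      have l1 := finrank_sp_le (K := K) (Fin.tail v)
      have l2 : finrank K (sp K v) = s+1 := by rw [hv, hT]
      rw [← Fin.cons_self_tail v, sp_cons] at l2
      have l3 := Submodule.finrank_sup_add_finrank_inf_eq (span K {v 0}) (sp K (Fin.tail v))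
      have l4 : finrank K (span K {v 0}) ≤ 1 := by
        simpa using finrank_span_le_card (R := K) ({v 0} : Set V)
      omega
    omega

end Main

section Lin

variable {K V : Type*} [Field K] [Fintype K] [AddCommGroup V] [Module K V] [FiniteDimensional K V]
  [Fintype V]

theorem exists_between_dim (A B : Submodule K V) (hAB : A ≤ B) (j : ℕ)
    (h : finrank K A + j ≤ finrank K B) :
    ∃ C, A ≤ C ∧ C ≤ B ∧ finrank K C = finrank K A + j := by
  induction j with
  | zero => exact ⟨A, le_rfl, hAB, rfl⟩
  | succ j ih =>
    obtain ⟨C, h1, h2, h3⟩ := ih (by omega)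
    obtain ⟨x, hxB, hxC⟩ : ∃ x ∈ B, x ∉ C := by
      by_contra hcon
      push Not at hcon
      have := Submodule.finrank_mono (show B ≤ C from hcon)
      omega
    refine ⟨span K {x} ⊔ C, h1.trans le_sup_right,
      sup_le ((span_singleton_le_iff_mem _ _).2 hxB) h2, ?_⟩
    rw [finrank_span_sup x C hxC, h3]; omega

theorem dim_sup_of_ne {m : ℕ} {C A B : Submodule K V} (hC : finrank K C = m) (hA : finrank K A = m+1)
    (hB : finrank K B = m+1) (hCA : C ≤ A) (hCB : C ≤ B) (hne : A ≠ B) :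
    finrank K (A ⊔ B : Submodule K V) = m + 2 := by
  have h1 := Submodule.finrank_sup_add_finrank_inf_eq A B
  have h2 := Submodule.finrank_mono (le_inf hCA hCB)
  have h3 : finrank K (A ⊓ B : Submodule K V) ≠ m + 1 := by
    intro h
    have e1 : A ⊓ B = A := Submodule.eq_of_le_of_finrank_eq inf_le_left (by omega)
    have e2 : A ⊓ B = B := Submodule.eq_of_le_of_finrank_eq inf_le_right (by omega)
    exact hne (e1.symm.trans e2)
  have h4 := Submodule.finrank_mono (inf_le_left : A ⊓ B ≤ A)
  omega

theorem rel_compl (C R T : Submodule K V) (h1 : C ≤ R) (h2 : R ≤ T) :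
    ∃ T0, C ≤ T0 ∧ T0 ≤ T ∧ R ⊓ T0 = C ∧ R ⊔ T0 = T := by
  obtain ⟨Q, hQ⟩ := Submodule.exists_isCompl R
  refine ⟨C ⊔ (Q ⊓ T), le_sup_left, sup_le (h1.trans h2) inf_le_right, ?_, ?_⟩
  · rw [inf_comm, sup_inf_assoc_of_le _ h1, inf_right_comm, inf_comm Q R, hQ.inf_eq_bot]; simp
  · rw [← sup_assoc, sup_eq_left.2 h1, ← sup_inf_assoc_of_le _ h2, hQ.sup_eq_top, top_inf_eq]

theorem exists_notMem_of_lt (G : Submodule K V) (h : finrank K G < finrank K V) : ∃ x, x ∉ G := by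
  by_contra hcon
  push Not at hcon
  have : G = ⊤ := eq_top_iff.2 (fun x _ => hcon x)
  rw [this, finrank_top] at h
  omega

end Lin

section Struct

variable {K V : Type*} [Field K] [Fintype K] [AddCommGroup V] [Module K V] [FiniteDimensional K V]
  [Fintype V]

/-- not an own subspace of any member -/
def Zs (F : Set (Submodule K V)) (T : Submodule K V) : Prop := ∀ G ∈ F, ¬ Own F G T

/-- every (s+1)-dimensional space above `X` is in `Zs` -/
def Full (F : Set (Submodule K V)) (s : ℕ) (X : Submodule K V) : Prop :=
  ∀ T : Submodule K V, finrank K T = s+1 → X ≤ T → Zs F T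

/-- the flag condition -/
def FlagC (F : Set (Submodule K V)) (s : ℕ) : Prop :=
  ∀ T D : Submodule K V, T ≤ D → finrank K T = s+1 → finrank K D = s+2 →
      (∃ G ∈ F, Own F G T) ∨ (∃ G ∈ F, Own F G D)

theorem flag_Z {F : Set (Submodule K V)} {s : ℕ} (hII : FlagC F s) {T D : Submodule K V}
    (hT : Zs F T) (h : T ≤ D) (h1 : finrank K T = s+1) (h2 : finrank K D = s+2) :
    ∃ G ∈ F, Own F G D := by
  rcases hII T D h h1 h2 with ⟨G, hG, h3⟩ | h3
  · exact absurd h3 (hT G hG)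
  · exact h3

theorem stepZ {F : Set (Submodule K V)} {s : ℕ} (hII : FlagC F s) {C z G y : Submodule K V}
    (hC : finrank K C = s) (hz : finrank K z = s+1) (hzZ : Zs F z) (hCz : C ≤ z) (hG : G ∈ F)
    (hzG : ¬ z ≤ G) (hy : finrank K y = s+1) (hCy : C ≤ y) (hyG : y ≤ G) : Zs F y := by
  have hne : y ≠ z := by rintro rfl; exact hzG hyG
  obtain ⟨G', hG', hO⟩ := flag_Z hII hzZ (le_sup_right : z ≤ y ⊔ z) hz
    (dim_sup_of_ne hC hy hz hCy hCz hne)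
  intro G0 hG0 hO0
  have e1 := hO0.2 G hG hyG
  have e2 := hO0.2 G' hG' (le_sup_left.trans hO.1)
  exact hzG (e1 ▸ e2 ▸ (le_sup_right.trans hO.1))

theorem trich {F : Set (Submodule K V)} {s : ℕ} (hII : FlagC F s)
    (hdim : ∀ A ∈ F, finrank K A = 2 * (s+1)) (hn : 2 * (s+1) + 1 ≤ finrank K V)
    {C z1 z2 : Submodule K V}
    (hC : finrank K C = s) (h1 : finrank K z1 = s+1) (h2 : finrank K z2 = s+1) (hZ1 : Zs F z1)
    (hZ2 : Zs F z2) (hC1 : C ≤ z1) (hC2 : C ≤ z2) (hne : z1 ≠ z2) : Full F s C := by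
  obtain ⟨F1, hF1, hO1⟩ := flag_Z hII hZ1 (le_sup_left : z1 ≤ z1 ⊔ z2) h1
    (dim_sup_of_ne hC h1 h2 hC1 hC2 hne)
  have key : ∀ T : Submodule K V, finrank K T = s+1 → C ≤ T → ∀ G ∈ F, Own F G T → G = F1 := by
    intro T hT hCT G hG hO
    have a1 : z1 ≤ G := by
      by_contra hcon
      exact stepZ hII hC h1 hZ1 hC1 hG hcon hT hCT hO.1 G hG hO
    have a2 : z2 ≤ G := by
      by_contra hcon
      exact stepZ hII hC h2 hZ2 hC2 hG hcon hT hCT hO.1 G hG hO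
    exact hO1.2 G hG (sup_le a1 a2)
  intro T hT hCT G hG hO
  have hGF := key T hT hCT G hG hO
  obtain ⟨x, hx⟩ := exists_notMem_of_lt G (by rw [hdim G hG]; omega)
  have hCG : C ≤ G := hCT.trans hO.1
  have hz3 : finrank K (span K {x} ⊔ C : Submodule K V) = s+1 := by
    rw [finrank_span_sup x C (fun h => hx (hCG h)), hC]
  have hxm : x ∈ span K {x} ⊔ C := mem_sup_left (mem_span_singleton_self x)
  have hz3Z : Zs F (span K {x} ⊔ C) := by
    intro G3 hG3 hO3
    have := key _ hz3 le_sup_right G3 hG3 hO3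
    exact hx (hGF ▸ this ▸ hO3.1 hxm)
  exact stepZ hII hC hz3 hz3Z le_sup_right hG (fun h => hx (h hxm)) hT hCT hO.1 G hG hO

theorem lemL {F : Set (Submodule K V)} {s : ℕ} (hII : FlagC F s)
    (hdim : ∀ A ∈ F, finrank K A = 2 * (s+1)) (hn : 2 * (s+1) + 1 ≤ finrank K V)
    {C X Y : Submodule K V} {k : ℕ} (hk : k ≤ s)
    (hC : finrank K C = k) (hX : finrank K X = k+1) (hY : finrank K Y = k+1) (hCX : C ≤ X)
    (hCY : C ≤ Y) (hne : X ≠ Y) (hFX : Full F s X) (hFY : Full F s Y) : Full F s C := by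
  intro T hT hCT
  by_cases hXT : X ≤ T
  · exact hFX T hT hXT
  have hU := dim_sup_of_ne hC hX hY hCX hCY hne
  have hR : finrank K (T ⊓ (X ⊔ Y) : Submodule K V) ≤ k + 1 := by
    have := Submodule.finrank_mono (inf_le_right : T ⊓ (X ⊔ Y) ≤ X ⊔ Y)
    by_contra hcon
    have e : T ⊓ (X ⊔ Y) = X ⊔ Y := Submodule.eq_of_le_of_finrank_eq inf_le_right (by omega)
    exact hXT (le_sup_left.trans (inf_eq_right.1 e))
  obtain ⟨T0, c1, c2, c3, c4⟩ := rel_compl C (T ⊓ (X ⊔ Y)) T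
    (le_inf hCT (hCX.trans le_sup_left)) inf_le_left
  have d := Submodule.finrank_sup_add_finrank_inf_eq (T ⊓ (X ⊔ Y)) T0
  rw [c3, c4] at d
  obtain ⟨T', f1, f2, f3⟩ := exists_between_dim C T0 c1 (s - k) (by omega)
  have hT' : finrank K T' = s := by omega
  have hle : T' ⊓ (X ⊔ Y) ≤ C := by
    rw [← c3]
    exact le_inf (le_inf (inf_le_left.trans (f2.trans c2)) inf_le_right) (inf_le_left.trans f2)
  have aux : ∀ A, C ≤ A → A ≤ X ⊔ Y → finrank K (A ⊔ T' : Submodule K V) + k = finrank K A + s := by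
    intro A h1 h2
    have d := Submodule.finrank_sup_add_finrank_inf_eq A T'
    have : A ⊓ T' = C := le_antisymm ((le_inf inf_le_right (inf_le_left.trans h2)).trans hle)
      (le_inf h1 f1)
    rw [this] at d
    omega
  have aX := aux X hCX le_sup_left
  have aY := aux Y hCY le_sup_right
  have aU := aux (X ⊔ Y) (hCX.trans le_sup_left) le_rfl
  have hXX : finrank K (X ⊔ T' : Submodule K V) = s+1 := by omega
  have hYY : finrank K (Y ⊔ T' : Submodule K V) = s+1 := by omega
  refine trich hII hdim hn hT' hXX hYY (hFX _ hXX le_sup_left) (hFY _ hYY le_sup_left)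
    le_sup_right le_sup_right ?_ T hT (f2.trans c2)
  intro e
  have : X ⊔ Y ⊔ T' ≤ X ⊔ T' :=
    sup_le (sup_le le_sup_left (e ▸ le_sup_left)) le_sup_right
  have := Submodule.finrank_mono this
  omega

end Struct

section Final

variable {K V : Type*} [Field K] [Fintype K] [AddCommGroup V] [Module K V] [FiniteDimensional K V]
  [Fintype V]

theorem full_rec {F : Set (Submodule K V)} {s : ℕ} (hII : FlagC F s)
    (hdim : ∀ A ∈ F, finrank K A = 2 * (s+1)) (hn : 2 * (s+1) + 1 ≤ finrank K V)
    (G : Submodule K V) {k : ℕ} (hk : k ≤ s) :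
    (tc (Full F s) G (k+1) : ℚ) ≤
      tc (fun A => ¬ Full F s A) G k * ((Fintype.card K : ℚ)^(k+1) - (Fintype.card K : ℚ)^k) +
      tc (Full F s) G k * ((Fintype.card K : ℚ)^(finrank K G) - (Fintype.card K : ℚ)^k) := by
  unfold tc
  rw [cnt_cons, cnt_split _ (fun x : (Fin k → V) × V => Full F s (sp K x.1)), add_comm]
  push_cast
  have basic : ∀ (x : V) (u : Fin k → V), sp K (Fin.cons x u : Fin (k+1) → V) ≤ G →
      finrank K (sp K (Fin.cons x u : Fin (k+1) → V)) = k+1 →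
      (sp K u ≤ G ∧ finrank K (sp K u) = k) ∧ x ∈ G ∧ x ∉ sp K u := by
    intro x u h1 h2
    rw [sp_cons] at h1 h2
    have h3 : x ∉ sp K u := by
      intro h
      rw [sup_eq_right.2 ((span_singleton_le_iff_mem _ _).2 h)] at h2
      have := finrank_sp_le (K := K) u
      omega
    rw [finrank_span_sup _ _ h3] at h2
    exact ⟨⟨le_sup_right.trans h1, by omega⟩,
      (span_singleton_le_iff_mem _ _).1 (le_sup_left.trans h1), h3⟩
  apply add_le_add
  · refine le_trans (Nat.cast_le.2 (cnt_mono ?_)) (cnt_prod_le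
      (fun u : Fin k → V => (sp K u ≤ G ∧ finrank K (sp K u) = k) ∧ ¬ Full F s (sp K u))
      (fun u x => Full F s (span K {x} ⊔ sp K u) ∧ x ∉ sp K u) _ ?_)
    · rintro ⟨u, x⟩ ⟨⟨⟨h1, h2⟩, h3⟩, h4⟩
      obtain ⟨b1, b2, b3⟩ := basic x u h1 h2
      rw [sp_cons] at h3
      exact ⟨⟨b1, h4⟩, h3, b3⟩
    · rintro u ⟨⟨h1, h2⟩, h3⟩
      by_cases hex : ∃ x0, Full F s (span K {x0} ⊔ sp K u) ∧ x0 ∉ sp K u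
      · obtain ⟨x0, f0, m0⟩ := hex
        have hd0 := finrank_span_sup x0 _ m0
        have := cnt_mem_sub (span K {x0} ⊔ sp K u) (sp K u) le_sup_right
        rw [hd0, h2] at this
        rw [← this]
        refine Nat.cast_le.2 (cnt_mono ?_)
        rintro x ⟨f1, m1⟩
        refine ⟨?_, m1⟩
        have hd1 := finrank_span_sup x _ m1
        by_contra hcon
        refine h3 (lemL hII hdim hn hk h2 (by rw [hd0, h2]) (by rw [hd1, h2]) le_sup_right
          le_sup_right ?_ f0 f1)
        intro e
        rw [e] at hcon
        exact hcon (mem_sup_left (mem_span_singleton_self x))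
      · have : cnt (fun x => Full F s (span K {x} ⊔ sp K u) ∧ x ∉ sp K u) = 0 := by
          by_contra hcon
          exact hex (cnt_pos.1 (Nat.pos_of_ne_zero hcon))
        rw [this]
        have hq : (1:ℚ) ≤ Fintype.card K := by
          exact_mod_cast (Fintype.one_lt_card (α := K)).le
        have := pow_le_pow_right₀ hq (Nat.le_succ k)
        simp only [Nat.succ_eq_add_one] at this
        push_cast
        linarith
  · refine le_trans (Nat.cast_le.2 (cnt_mono ?_)) (cnt_prod_le
      (fun u : Fin k → V => (sp K u ≤ G ∧ finrank K (sp K u) = k) ∧ Full F s (sp K u))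
      (fun u x => x ∈ G ∧ x ∉ sp K u) _ ?_)
    · rintro ⟨u, x⟩ ⟨⟨⟨h1, h2⟩, h3⟩, h4⟩
      obtain ⟨b1, b2, b3⟩ := basic x u h1 h2
      exact ⟨⟨b1, h4⟩, b2, b3⟩
    · rintro u ⟨⟨h1, h2⟩, h3⟩
      have := cnt_mem_sub G (sp K u) h1
      rw [this, h2]

theorem full_top {F : Set (Submodule K V)} {s : ℕ} {G : Submodule K V} (hG : G ∈ F) :
    tc (Full F s) G (s+1) = tc (NonOwn F G) G (s+1) := by
  unfold tc
  apply cnt_congr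
  intro a
  apply and_congr_right
  rintro ⟨h1, h2⟩
  constructor
  · intro h
    by_contra hcon
    exact h _ h2 le_rfl G hG ((own_iff _ _ _ h1).2 hcon)
  · rintro ⟨G', hG', hne, hle⟩ T hT haT H hH hO
    have e : sp K a = T := Submodule.eq_of_le_of_finrank_eq haT (by rw [h2, hT])
    rw [← e] at hO
    exact hne ((hO.2 G' hG' hle).trans (hO.2 G hG h1).symm)

theorem full_lower {F : Set (Submodule K V)} {s : ℕ} (hII : FlagC F s)
    (hdim : ∀ A ∈ F, finrank K A = 2 * (s+1)) (hn : 2 * (s+1) + 1 ≤ finrank K V)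
    {G : Submodule K V} (hG : G ∈ F)
    (hI : (tc (NonOwn F G) G (s+1) : ℚ) * ((Fintype.card K : ℚ)^(s+1) + 1) =
        LI (Fintype.card K) (s+1) (2*(s+1))) (j : ℕ) :
    ∀ k, k + j = s + 1 → LI (Fintype.card K) k (2*(s+1)) * ((Fintype.card K : ℚ)^k - 1) ≤
      tc (Full F s) G k * ((Fintype.card K : ℚ)^(2*(s+1)) - 1) := by
  have hq : (1:ℚ) < Fintype.card K := by
    exact_mod_cast (Fintype.one_lt_card (α := K))
  induction j with
  | zero =>
    intro k hk
    obtain rfl : k = s+1 := by omega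
    rw [full_top hG, ← hI]
    apply le_of_eq
    ring
  | succ j ih =>
    intro k hk
    have h1 := ih (k+1) (by omega)
    have h2 := full_rec hII hdim hn G (k := k) (by omega)
    have h3 := tc_split (Full F s) G k
    rw [hdim G hG] at h2 h3
    rw [LI_succ] at h1
    have hQ : (Fintype.card K : ℚ)^(k+1) < (Fintype.card K : ℚ)^(2*(s+1)) :=
      pow_lt_pow_right₀ hq (by omega)
    have hQ1 : (1:ℚ) < (Fintype.card K : ℚ)^(2*(s+1)) := one_lt_pow₀ hq (by omega)
    have e : (tc (fun A => ¬ Full F s A) G k : ℚ) = LI (Fintype.card K) k (2*(s+1))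
      - tc (Full F s) G k := by linarith
    rw [e] at h2
    generalize (Fintype.card K : ℚ)^(2*(s+1)) = Q at *
    generalize (Fintype.card K : ℚ)^(k+1) = b at *
    generalize (Fintype.card K : ℚ)^k = a at *
    generalize (tc (Full F s) G k : ℚ) = f at *
    generalize (tc (Full F s) G (k+1) : ℚ) = f' at *
    generalize LI (Fintype.card K) k (2*(s+1)) = L at *
    have h4 := mul_le_mul_of_nonneg_right h2 (by linarith : 0 ≤ Q - 1)
    have h5 : (L * (a - 1)) * (Q - b) ≤ (f * (Q - 1)) * (Q - b) := by
      linarith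
    exact le_of_mul_le_mul_right h5 (by linarith)

theorem struct_main {F : Set (Submodule K V)} {s : ℕ} (hII : FlagC F s)
    (hdim : ∀ A ∈ F, finrank K A = 2 * (s+1)) (hn : 2 * (s+1) + 1 ≤ finrank K V)
    (hcf : IsCoverFree F) (hne : F.Nonempty)
    (hI : ∀ G ∈ F, (tc (NonOwn F G) G (s+1) : ℚ) * ((Fintype.card K : ℚ)^(s+1) + 1) =
        LI (Fintype.card K) (s+1) (2*(s+1))) :
    ∃ E : Submodule K V, finrank K E = 1 ∧ (∀ G ∈ F, E ≤ G) ∧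
      ∀ T : Submodule K V, finrank K T = s+1 → ¬ E ≤ T → ∃ G ∈ F, Own F G T := by
  have hq : 1 < Fintype.card K := Fintype.one_lt_card
  have hq' : (1:ℚ) < Fintype.card K := by exact_mod_cast hq
  obtain ⟨E, hE, hEF⟩ : ∃ E : Submodule K V, finrank K E = 1 ∧ Full F s E := by
    obtain ⟨G, hG⟩ := hne
    have h := full_lower hII hdim hn hG (hI G hG) s 1 (by omega)
    have p1 := LI_pos (Fintype.card K) 1 (2*(s+1)) hq (by omega)
    rw [pow_one] at h
    have p2 : 0 < LI (Fintype.card K) 1 (2*(s+1)) * ((Fintype.card K : ℚ) - 1) :=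
      mul_pos p1 (by linarith)
    have : 0 < tc (Full F s) G 1 := by
      by_contra hcon
      have h0 : tc (Full F s) G 1 = 0 := by omega
      rw [h0] at h
      push_cast at h
      linarith
    obtain ⟨a, ⟨_, ha⟩, hf⟩ := cnt_pos.1 this
    exact ⟨sp K a, ha, hf⟩
  have hEG : ∀ G ∈ F, E ≤ G := by
    intro G hG
    by_contra hcon
    have h1 := tc_split (NonOwn F G) G (s+1)
    rw [hdim G hG, ← hI G hG] at h1
    have p1 := LI_pos (Fintype.card K) (s+1) (2*(s+1)) hq (by omega)
    rw [← hI G hG] at p1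
    have py : (0:ℚ) < (Fintype.card K : ℚ)^(s+1) := by positivity
    have p2 : (0:ℚ) < tc (NonOwn F G) G (s+1) := pos_of_mul_pos_left p1 (by linarith)
    have p3 : (0:ℚ) < tc (fun A => ¬ NonOwn F G A) G (s+1) := by
      nlinarith [mul_pos p2 py]
    obtain ⟨a, ⟨h1, h2⟩, h3⟩ := cnt_pos.1 (Nat.cast_pos.1 p3)
    obtain ⟨C, -, c2, c3⟩ := exists_between_dim ⊥ (sp K a) bot_le s (by rw [finrank_bot]; omega)
    rw [finrank_bot, zero_add] at c3
    have hEC : E ⊓ C = ⊥ := by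
      have := Submodule.finrank_mono (inf_le_left : E ⊓ C ≤ E)
      by_contra hb
      have hp := Submodule.one_le_finrank_iff.2 hb
      have : E ⊓ C = E := Submodule.eq_of_le_of_finrank_eq inf_le_left (by omega)
      exact hcon ((inf_eq_left.1 this).trans (c2.trans h1))
    have d := Submodule.finrank_sup_add_finrank_inf_eq E C
    rw [hEC, finrank_bot] at d
    have hz : finrank K (E ⊔ C : Submodule K V) = s+1 := by omega
    exact stepZ hII c3 hz (hEF _ hz le_sup_left) le_sup_right hG
      (fun h => hcon (le_sup_left.trans h)) h2 c2 h1 G hG ((own_iff _ _ _ h1).2 h3)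
  refine ⟨E, hE, hEG, ?_⟩
  intro T hT hET
  by_contra hcon
  have hTZ : Zs F T := fun G hG hO => hcon ⟨G, hG, hO⟩
  obtain ⟨D, d1, -, d2⟩ := exists_between_dim T ⊤ le_top 1 (by rw [finrank_top]; omega)
  obtain ⟨G, hG, hO⟩ := flag_Z hII hTZ d1 hT (by omega)
  have hTG := d1.trans hO.1
  have hE0 : E ⊓ T = ⊥ := by
    have := Submodule.finrank_mono (inf_le_left : E ⊓ T ≤ E)
    by_contra hb
    have hp := Submodule.one_le_finrank_iff.2 hb
    have : E ⊓ T = E := Submodule.eq_of_le_of_finrank_eq inf_le_left (by omega)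
    exact hET (inf_eq_left.1 this)
  have d := Submodule.finrank_sup_add_finrank_inf_eq E T
  rw [hE0, finrank_bot] at d
  obtain ⟨T2, r1, r2, r3, r4⟩ := rel_compl E (E ⊔ T) G le_sup_left (sup_le (hEG G hG) hTG)
  have d' := Submodule.finrank_sup_add_finrank_inf_eq (E ⊔ T) T2
  rw [r3, r4, hdim G hG] at d'
  have hT2 : finrank K T2 = s+1 := by omega
  have hZ2 := hEF T2 hT2 r1
  have hsup : T ⊔ T2 = G := by
    rw [← r4, sup_comm E T, sup_assoc, sup_eq_right.2 r1]
  have conv : ∀ A, A ≤ G → Zs F A → NonOwn F G A := by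
    intro A hA hz
    by_contra h
    exact hz G hG ((own_iff _ _ _ hA).2 h)
  exact nonown_compl hdim hcf hG T T2 hsup (conv T hTG hTZ) (conv T2 r2 hZ2)

theorem steiner_count {W : Submodule K V} {S : Set (Submodule K V)} {t d : ℕ}
    (h1 : ∀ A ∈ S, A ≤ W ∧ finrank K A = d)
    (h2 : ∀ T : Submodule K V, T ≤ W → finrank K T = t → ∃! A, A ∈ S ∧ T ≤ A) :
    (S.ncard : ℚ) * LI (Fintype.card K) t d = LI (Fintype.card K) t (finrank K W) := by
  classical
  let SS : Finset (Submodule K V) := S.toFinite.toFinset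
  have hmem : ∀ G, G ∈ SS ↔ G ∈ S := by intro G; simp [SS]
  have hcard : (SS.card : ℚ) = S.ncard := by
    rw [Set.ncard_eq_toFinset_card S S.toFinite]
  have hsum := cnt_disj_sum SS
    (fun A (b : Fin t → V) => sp K b ≤ A ∧ finrank K (sp K b) = t)
    (fun b => sp K b ≤ W ∧ finrank K (sp K b) = t)
    (fun A hA b h => ⟨h.1.trans (h1 A ((hmem A).1 hA)).1, h.2⟩)
    (fun A hA B hB b h h' => (h2 _ (h.1.trans (h1 A ((hmem A).1 hA)).1) h.2).unique
      ⟨(hmem A).1 hA, h.1⟩ ⟨(hmem B).1 hB, h'.1⟩)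
  have h0 : cnt (fun b : Fin t → V => (sp K b ≤ W ∧ finrank K (sp K b) = t) ∧
      ∀ A ∈ SS, ¬ (sp K b ≤ A ∧ finrank K (sp K b) = t)) = 0 := by
    by_contra hcon
    obtain ⟨b, ⟨b1, b2⟩, b3⟩ := cnt_pos.1 (Nat.pos_of_ne_zero hcon)
    obtain ⟨A, ⟨a1, a2⟩, -⟩ := h2 _ b1 b2
    exact b3 A ((hmem A).2 a1) ⟨a2, b2⟩
  rw [h0, add_zero] at hsum
  rw [← cnt_LI, ← hsum, ← hcard, Nat.cast_sum, Finset.sum_congr rfl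
    (g := fun _ => LI (Fintype.card K) t d), Finset.sum_const, nsmul_eq_mul]
  intro A hA
  rw [cnt_LI, (h1 A ((hmem A).1 hA)).2]

end Final

theorem stmt1 (q n t : ℕ) (K : Type*) [Field K] [Fintype K] (hK : Fintype.card K = q)
    (V : Type*) [AddCommGroup V] [Module K V] [FiniteDimensional K V]
    (hV : Module.finrank K V = n) (ht : 1 ≤ t) (hn : 2 * t + 1 ≤ n)
    (F : Set (Submodule K V)) (hdim : ∀ A ∈ F, Module.finrank K A = 2 * t)
    (hcf : IsCoverFree F) :
    (F.ncard : ℚ) = GaussQ q (n - 1) t / GaussQ q (2 * t - 1) t ↔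
      ∃ E W : Submodule K V, Module.finrank K E = 1 ∧ Module.finrank K W = n - 1 ∧
        E ⊓ W = ⊥ ∧ E ⊔ W = ⊤ ∧
        ∃ S : Set (Submodule K V),
          (∀ A ∈ S, A ≤ W ∧ Module.finrank K A = 2 * t - 1) ∧
          (∀ T : Submodule K V, T ≤ W → Module.finrank K T = t →
            ∃! A, A ∈ S ∧ T ≤ A) ∧
          F = (fun A => E ⊔ A) '' S := by
  classical
  obtain ⟨s, rfl⟩ : ∃ s, t = s + 1 := ⟨t - 1, by omega⟩
  have : Finite V := Module.finite_of_finite K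
  have : Fintype V := Fintype.ofFinite V
  subst hK hV
  have hq : 1 < Fintype.card K := Fintype.one_lt_card
  have hpos := LI_pos (Fintype.card K) (s+1) (2*(s+1)-1) hq (by omega)
  have hpos' := LI_pos (Fintype.card K) (s+1) (Module.finrank K V - 1) hq (by omega)
  rw [ratio_eq _ _ _ hq ht hn, eq_div_iff hpos.ne']
  constructor
  · intro hN
    obtain ⟨hI, hII⟩ := extremal hdim hcf hn hN
    have hne : F.Nonempty := by
      rw [Set.nonempty_iff_ne_empty]
      rintro rfl
      rw [Set.ncard_empty] at hN
      push_cast at hN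
      linarith
    obtain ⟨E, hE, hEG, hown⟩ := struct_main hII hdim hn hcf hne hI
    obtain ⟨W, hW⟩ := Submodule.exists_isCompl E
    have hdW := Submodule.finrank_add_eq_of_isCompl hW
    have hmod : ∀ G ∈ F, E ⊔ (G ⊓ W) = G := by
      intro G hG
      rw [inf_comm, ← sup_inf_assoc_of_le _ (hEG G hG), hW.sup_eq_top, top_inf_eq]
    refine ⟨E, W, hE, by omega, hW.inf_eq_bot, hW.sup_eq_top, (fun G => G ⊓ W) '' F, ?_, ?_, ?_⟩
    · rintro _ ⟨G, hG, rfl⟩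
      refine ⟨inf_le_right, ?_⟩
      have d := Submodule.finrank_sup_add_finrank_inf_eq E (G ⊓ W)
      have hb : E ⊓ (G ⊓ W) = ⊥ := by
        rw [inf_left_comm, hW.inf_eq_bot, inf_bot_eq]
      rw [hmod G hG, hb, finrank_bot, hdim G hG] at d
      show Module.finrank K (G ⊓ W : Submodule K V) = _
      omega
    · intro T hTW hT
      have hET : ¬ E ≤ T := by
        intro h
        have : E = ⊥ := by rw [← hW.inf_eq_bot]; exact (inf_eq_left.2 (h.trans hTW)).symm
        rw [this, finrank_bot] at hE
        omega
      obtain ⟨G, hG, hO⟩ := hown T hT hET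
      refine ⟨G ⊓ W, ⟨⟨G, hG, rfl⟩, le_inf hO.1 hTW⟩, ?_⟩
      rintro _ ⟨⟨G', hG', rfl⟩, hle⟩
      rw [hO.2 G' hG' (hle.trans inf_le_left)]
    · rw [Set.image_image]
      ext G
      constructor
      · intro hG
        exact ⟨G, hG, hmod G hG⟩
      · rintro ⟨G', hG', rfl⟩
        show E ⊔ (G' ⊓ W) ∈ F
        rw [hmod G' hG']
        exact hG'
  · rintro ⟨E, W, hE, hW, hb, htop, S, hS1, hS2, rfl⟩
    have hcount := steiner_count hS1 hS2
    rw [hW] at hcount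
    rw [← hcount, Set.ncard_image_of_injOn]
    intro A hA B hB hAB
    have key : ∀ A ∈ S, (E ⊔ A) ⊓ W = A := by
      intro A hA
      rw [sup_comm, sup_inf_assoc_of_le _ (hS1 A hA).1, hb, sup_bot_eq]
    rw [← key A hA, ← key B hB]
    exact congrArg (· ⊓ W) hAB
end

section
/- Let V be an n-dimensional vector space over the finite field 𝔽_q, let t ≥ 1 and n ≥ 2t, and let F be a cover-free family of (2t-1)-dimensional subspaces of V. Then |F| ≤ [n choose t]_q / [2t-1 choose t]_q. -/
open Module
section helpers
variable {K : Type*} [Field K] [Fintype K]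

theorem aux_card_compl {E : Type*} [AddCommGroup E] [Module K E] [FiniteDimensional K E]
    (W : Submodule K E) :
    Nat.card {P : Submodule K E // IsCompl W P}
      = Fintype.card K ^ ((finrank K E - finrank K W) * finrank K W) := by
  classical
  obtain ⟨Q, hQ⟩ := Submodule.exists_isCompl W
  have e2 : {f : E →ₗ[K] W // ∀ x : W, f x = x} ≃ (Q →ₗ[K] W) :=
    { toFun := fun f => f.1.domRestrict Q
      invFun := fun g => ⟨LinearMap.ofIsCompl hQ LinearMap.id g, fun x => by simp⟩
      left_inv := fun f => by
        apply Subtype.ext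
        apply LinearMap.ofIsCompl_eq hQ
        · intro u; simp [f.2 u]
        · intro u; simp
      right_inv := fun g => by
        ext x; simp }
  rw [Nat.card_congr (W.isComplEquivProj.trans e2)]
  have hq := Submodule.finrank_add_eq_of_isCompl hQ
  have : Finite (Q →ₗ[K] W) := Module.finite_of_finite K
  have := Fintype.ofFinite (Q →ₗ[K] W)
  rw [Nat.card_eq_fintype_card, Module.card_eq_pow_finrank (K := K), Module.finrank_linearMap]
  congr 2
  omega

theorem aux_card_hyper {E : Type*} [AddCommGroup E] [Module K E] [FiniteDimensional K E] :
    Nat.card {P : Submodule K E // finrank K P + 1 = finrank K E}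
      ≤ Fintype.card K ^ finrank K E := by
  classical
  have : Finite (Dual K E) := Module.finite_of_finite K
  have := Fintype.ofFinite (Dual K E)
  have hc : Fintype.card K ^ finrank K E = Nat.card (Dual K E) := by
    rw [← Subspace.dual_finrank_eq, ← Module.card_eq_pow_finrank (K := K),
      ← Nat.card_eq_fintype_card]
  rw [hc]
  have key : ∀ P : {P : Submodule K E // finrank K P + 1 = finrank K E},
      ∃ f : Dual K E, LinearMap.ker f = P.1 := by
    rintro ⟨P, hP⟩
    have hlt : P < ⊤ := by
      rw [lt_top_iff_ne_top]; rintro rfl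
      rw [finrank_top] at hP; omega
    obtain ⟨f, hf, hf'⟩ := Submodule.exists_dual_map_eq_bot_of_lt_top hlt inferInstance
    refine ⟨f, ?_⟩
    symm
    apply Submodule.eq_of_le_of_finrank_eq
    · rw [LinearMap.le_ker_iff_map]; exact hf'
    · have h1 := LinearMap.finrank_range_add_finrank_ker f
      have h2 : finrank K (LinearMap.range f) = 1 := by
        rw [LinearMap.range_eq_top.2 (LinearMap.surjective hf), finrank_top, finrank_self]
      simp only at *
      omega
  choose g hg using key
  apply Nat.card_le_card_of_injective g
  intro P Q h
  apply Subtype.ext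
  rw [← hg, ← hg, h]

theorem aux_card_sub {E : Type*} [AddCommGroup E] [Module K E] [FiniteDimensional K E] (k : ℕ)
    (hk : k ≤ finrank K E) :
    Nat.card {P : Submodule K E // finrank K P = k} *
      ∏ i : Fin k, (Fintype.card K ^ k - Fintype.card K ^ i.val)
      = ∏ i : Fin k, (Fintype.card K ^ finrank K E - Fintype.card K ^ i.val) := by
  classical
  have : Finite E := Module.finite_of_finite K
  rw [← card_linearIndependent hk]
  have hspan : ∀ (P : Submodule K E) (_ : finrank K P = k) (s : Fin k → P),
      LinearIndependent K s → Submodule.span K (Set.range fun i => (s i : E)) = P := by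
    intro P hP s hs
    apply Submodule.eq_of_le_of_finrank_eq
    · rw [Submodule.span_le]; rintro _ ⟨i, rfl⟩; exact (s i).2
    · have := finrank_span_eq_card (hs.map' P.subtype (Submodule.ker_subtype _))
      rw [Fintype.card_fin] at this
      rw [hP]
      exact this
  let Φ : (Σ P : {P : Submodule K E // finrank K P = k},
      {s : Fin k → P.1 // LinearIndependent K s}) → {s : Fin k → E // LinearIndependent K s} :=
    fun x => ⟨fun i => (x.2.1 i : E), x.2.2.map' _ (Submodule.ker_subtype _)⟩
  have hΦ : Function.Bijective Φ := by
    constructor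
    · rintro ⟨⟨P, hP⟩, s, hs⟩ ⟨⟨P', hP'⟩, s', hs'⟩ h
      have h' : (fun i => (s i : E)) = fun i => (s' i : E) := congrArg Subtype.val h
      have hPP : P = P' := by
        rw [← hspan P hP s hs, ← hspan P' hP' s' hs', h']
      subst hPP
      have : s = s' := by
        funext i; exact Subtype.ext (congrFun h' i)
      subst this
      rfl
    · rintro ⟨s, hs⟩
      exact ⟨⟨⟨Submodule.span K (Set.range s), by
          rw [finrank_span_eq_card hs, Fintype.card_fin]⟩, ⟨_, linearIndependent_span hs⟩⟩, rfl⟩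
  have e := (Equiv.ofBijective Φ hΦ).symm
  have : Fintype {P : Submodule K E // finrank K P = k} := Fintype.ofFinite _
  rw [Nat.card_congr e, Nat.card_sigma]
  rw [Finset.sum_congr rfl (g := fun _ => ∏ i : Fin k, (Fintype.card K ^ k - Fintype.card K ^ i.val))]
  · simp [Nat.card_eq_fintype_card]
  · rintro ⟨P, hP⟩ _
    simp only
    rw [card_linearIndependent hP.ge, hP]

theorem aux_gauss {E : Type*} [AddCommGroup E] [Module K E] [FiniteDimensional K E] (k : ℕ)
    (hk : k ≤ finrank K E) :
    (Nat.card {P : Submodule K E // finrank K P = k} : ℚ) =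
    ∏ i ∈ Finset.range k, (((Fintype.card K : ℕ) : ℚ) ^ (finrank K E - i) - 1) / (((Fintype.card K : ℕ) : ℚ) ^ (k - i) - 1) := by
  have h := aux_card_sub (K := K) (E := E) k hk
  have hq : 1 < Fintype.card K := Fintype.one_lt_card
  set q := Fintype.card K
  have hq' : (1:ℚ) < q := by exact_mod_cast hq
  set m := finrank K E
  have gen : ∀ m, k ≤ m → ((∏ i : Fin k, (q ^ m - q ^ i.val) : ℕ) : ℚ) =
      (∏ i ∈ Finset.range k, (q:ℚ)^i) * ∏ i ∈ Finset.range k, ((q : ℚ) ^ (m - i) - 1) := by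
    intro m hm
    rw [Fin.prod_univ_eq_prod_range (fun i => q ^ m - q ^ i), ← Finset.prod_mul_distrib, Nat.cast_prod]
    apply Finset.prod_congr rfl
    intro i hi
    rw [Finset.mem_range] at hi
    rw [Nat.cast_sub (Nat.pow_le_pow_right (by omega) (by omega)), mul_sub, ← pow_add]
    push_cast
    rw [show i + (m - i) = m by omega, mul_one]
  have h' := congrArg (Nat.cast : ℕ → ℚ) h
  rw [Nat.cast_mul, gen k le_rfl, gen m hk] at h'
  have p1 : (∏ i ∈ Finset.range k, (q:ℚ)^i) ≠ 0 := by
    apply Finset.prod_ne_zero_iff.2; intro i _; positivity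
  have p2 : (∏ i ∈ Finset.range k, ((q : ℚ) ^ (k - i) - 1)) ≠ 0 := by
    apply Finset.prod_ne_zero_iff.2; intro i hi
    rw [Finset.mem_range] at hi
    have := one_lt_pow₀ hq' (show k - i ≠ 0 by omega)
    linarith
  rw [Finset.prod_div_distrib, eq_div_iff p2]
  apply mul_left_cancel₀ p1
  linarith

theorem aux_sub_le {V : Type*} [AddCommGroup V] [Module K V] (A : Submodule K V) (k : ℕ) :
    Nat.card {W : Submodule K V // W ≤ A ∧ finrank K W = k} =
    Nat.card {W : Submodule K A // finrank K W = k} := by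
  symm
  apply Nat.card_congr
  exact
    { toFun := fun W => ⟨W.1.map A.subtype, Submodule.map_subtype_le _ _, by
        rw [Submodule.finrank_map_subtype_eq, W.2]⟩
      invFun := fun W => ⟨W.1.comap A.subtype, by
        rw [← Submodule.finrank_map_subtype_eq, Submodule.map_comap_subtype,
          inf_eq_right.2 W.2.1, W.2.2]⟩
      left_inv := fun W => Subtype.ext (by
        simp [Submodule.comap_map_eq_of_injective A.subtype_injective])
      right_inv := fun W => Subtype.ext (by
        simp [Submodule.map_comap_subtype, W.2.1]) }

theorem aux_compl_le {V : Type*} [AddCommGroup V] [Module K V] [FiniteDimensional K V]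
    (A W : Submodule K V) (hW : W ≤ A) :
    Nat.card {P : Submodule K V // W ⊓ P = ⊥ ∧ W ⊔ P = A} =
      Fintype.card K ^ ((finrank K A - finrank K W) * finrank K W) := by
  have hi := A.subtype_injective
  have hm : (W.comap A.subtype).map A.subtype = W := by
    rw [Submodule.map_comap_subtype, inf_eq_right.2 hW]
  have h := aux_card_compl (K := K) (W.comap A.subtype)
  rw [← Submodule.finrank_map_subtype_eq A (W.comap A.subtype), hm] at h
  rw [← h]
  symm
  apply Nat.card_congr
  exact
    { toFun := fun P => ⟨P.1.map A.subtype, by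
        constructor
        · have := congrArg (· ⊓ P.1.map A.subtype) hm
          rw [← this, ← Submodule.map_inf _ hi, P.2.inf_eq_bot, Submodule.map_bot]
        · have := congrArg (· ⊔ P.1.map A.subtype) hm
          rw [← this, ← Submodule.map_sup, P.2.sup_eq_top, Submodule.map_top, Submodule.range_subtype]⟩
      invFun := fun P => ⟨P.1.comap A.subtype, by
        have hP : P.1 ≤ A := le_sup_right.trans P.2.2.le
        have hmP : (P.1.comap A.subtype).map A.subtype = P.1 := by
          rw [Submodule.map_comap_subtype, inf_eq_right.2 hP]
        apply IsCompl.of_eq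
        · apply Submodule.map_injective_of_injective hi
          rw [Submodule.map_inf _ hi, hm, hmP, P.2.1, Submodule.map_bot]
        · apply Submodule.map_injective_of_injective hi
          rw [Submodule.map_sup, hm, hmP, P.2.2, Submodule.map_top, Submodule.range_subtype]⟩
      left_inv := fun W => Subtype.ext (by
        simp [Submodule.comap_map_eq_of_injective A.subtype_injective])
      right_inv := fun P => Subtype.ext (by
        have hP : P.1 ≤ A := le_sup_right.trans P.2.2.le
        simp [Submodule.map_comap_subtype, hP]) }


theorem aux_over {V : Type*} [AddCommGroup V] [Module K V] [FiniteDimensional K V] (t : ℕ)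
    (ht : 1 ≤ t) (A P : Submodule K V) (hA : finrank K A = 2 * t - 1) (hPA : P ≤ A)
    (hP : finrank K P = t - 1) (hn : 2 * t ≤ finrank K V) (S : Finset (Submodule K V))
    (hS : ∀ W : Submodule K V, finrank K W = t → P ≤ W → ¬ W ≤ A → W ∈ S) :
    Fintype.card K ^ t ≤ S.card := by
  classical
  have : Finite V := Module.finite_of_finite K
  have := Fintype.ofFinite V
  have hq : 1 < Fintype.card K := Fintype.one_lt_card
  have cardW : ∀ W : Submodule K V,
      (Finset.univ.filter (fun x => x ∈ W)).card = Fintype.card K ^ finrank K W := by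
    intro W
    rw [← Module.card_eq_pow_finrank (K := K) (V := W), Fintype.card_subtype]
  have cardV : (Finset.univ : Finset V).card = Fintype.card K ^ finrank K V := by
    rw [Finset.card_univ, Module.card_eq_pow_finrank (K := K)]
  set q := Fintype.card K
  have hfr : ∀ x, x ∉ P → finrank K (P ⊔ Submodule.span K {x} : Submodule K V) = t := by
    intro x hx
    have hx0 : x ≠ 0 := by rintro rfl; exact hx P.zero_mem
    have hd : P ⊓ Submodule.span K {x} = ⊥ :=
      ((Submodule.disjoint_span_singleton' hx0).2 hx).eq_bot
    have := Submodule.finrank_sup_add_finrank_inf_eq P (Submodule.span K {x})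
    rw [hd, finrank_bot, finrank_span_singleton hx0] at this
    omega
  let X : Finset V := Finset.univ \ Finset.univ.filter (fun x => x ∈ A)
  have hX : X.card = q ^ finrank K V - q ^ (2 * t - 1) := by
    rw [Finset.card_sdiff_of_subset (Finset.subset_univ _), cardV, cardW, hA]
  have key : X.card ≤ (q ^ t - q ^ (t - 1)) * S.card := by
    apply Finset.card_le_mul_card_image_of_maps_to (f := fun x => P ⊔ Submodule.span K {x})
    · intro x hx
      have hxA : x ∉ A := by simpa [X] using hx
      have hxP : x ∉ P := fun h => hxA (hPA h)
      apply hS _ (hfr x hxP) le_sup_left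
      intro h
      exact hxA (h (Submodule.mem_sup_right (Submodule.mem_span_singleton_self x)))
    · intro W hW
      by_cases hne : ∃ x0 ∈ X, P ⊔ Submodule.span K {x0} = W
      · obtain ⟨x0, hx0, rfl⟩ := hne
        have hxA : x0 ∉ A := by simpa [X] using hx0
        have hxP : x0 ∉ P := fun h => hxA (hPA h)
        set W := P ⊔ Submodule.span K {x0} with hWdef
        have h1 : (Finset.univ.filter (fun x => x ∈ W) \ Finset.univ.filter (fun x => x ∈ P)).card
            = q ^ t - q ^ (t - 1) := by
          rw [Finset.card_sdiff_of_subset, cardW, cardW, hfr x0 hxP, hP]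
          intro x hx
          simp only [Finset.mem_filter, Finset.mem_univ, true_and] at hx ⊢
          exact Submodule.mem_sup_left hx
        rw [← h1]
        apply Finset.card_le_card
        intro x hx
        simp only [Finset.mem_filter, Finset.mem_sdiff, Finset.mem_univ, true_and, X] at hx ⊢
        refine ⟨?_, fun h => hx.1 (hPA h)⟩
        rw [← hx.2]
        exact Submodule.mem_sup_right (Submodule.mem_span_singleton_self x)
      · push Not at hne
        rw [Finset.filter_eq_empty_iff.2 (fun x hx => hne x hx)]
        simp
  rw [hX] at key
  have h2 : q ^ t * (q ^ t - q ^ (t - 1)) ≤ q ^ finrank K V - q ^ (2 * t - 1) := by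
    rw [Nat.mul_sub, ← pow_add, ← pow_add, show t + (t - 1) = 2 * t - 1 by omega]
    apply Nat.sub_le_sub_right
    exact Nat.pow_le_pow_right (by omega) (by omega)
  have h3 : 0 < q ^ t - q ^ (t - 1) :=
    Nat.sub_pos_of_lt (Nat.pow_lt_pow_right hq (by omega))
  have h4 := h2.trans key
  rw [mul_comm] at h4
  exact Nat.le_of_mul_le_mul_left h4 h3

end helpers

theorem stmt2 (q n t : ℕ) (K : Type*) [Field K] [Fintype K] (hK : Fintype.card K = q)
    (V : Type*) [AddCommGroup V] [Module K V] [FiniteDimensional K V]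
    (hV : Module.finrank K V = n) (ht : 1 ≤ t) (hn : 2 * t ≤ n)
    (F : Set (Submodule K V)) (hdim : ∀ A ∈ F, Module.finrank K A = 2 * t - 1)
    (hcf : IsCoverFree F) :
    (F.ncard : ℚ) ≤ GaussQ q n t / GaussQ q (2 * t - 1) t := by
  classical
  have hfinV : Finite V := Module.finite_of_finite K
  have : Fintype (Submodule K V) := Fintype.ofFinite _
  have hq : 1 < q := hK ▸ Fintype.one_lt_card
  let own : Submodule K V → ℕ → Finset (Submodule K V) := fun A k =>
    Finset.univ.filter (fun W => W ≤ A ∧ finrank K W = k ∧ ∀ B ∈ F, W ≤ B → B = A)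
  let N : Submodule K V → Finset (Submodule K V) := fun A =>
    Finset.univ.filter (fun W => W ≤ A ∧ finrank K W = t ∧ ¬ ∀ B ∈ F, W ≤ B → B = A)
  let U : Finset (Submodule K V) :=
    Finset.univ.filter (fun W => finrank K W = t ∧ ∀ B ∈ F, ¬ W ≤ B)
  let 𝓕 : Finset (Submodule K V) := F.toFinset
  have hF : ∀ A, A ∈ 𝓕 ↔ A ∈ F := fun A => Set.mem_toFinset
  have own_disj : ∀ k, (𝓕 : Set (Submodule K V)).PairwiseDisjoint (fun A => own A k) := by
    intro k A hA B hB hAB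
    rw [Function.onFun, Finset.disjoint_left]
    intro W h1 h2
    simp only [own, Finset.mem_filter, Finset.mem_univ, true_and] at h1 h2
    exact hAB (h2.2.2 A ((hF A).1 hA) h1.1)
  -- each member has `G` subspaces of dimension `t`
  have hsplit : ∀ A ∈ 𝓕, (((own A t).card + (N A).card : ℕ) : ℚ) = GaussQ q (2 * t - 1) t := by
    intro A hA
    have hd := hdim A ((hF A).1 hA)
    have h1 : (own A t).card + (N A).card = Nat.card {W : Submodule K V // W ≤ A ∧ finrank K W = t} := by
      rw [Nat.card_eq_fintype_card, Fintype.card_subtype,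
        ← Finset.card_filter_add_card_filter_not (s := Finset.univ.filter (fun W : Submodule K V => W ≤ A ∧ finrank K W = t))
          (fun W => ∀ B ∈ F, W ≤ B → B = A), Finset.filter_filter, Finset.filter_filter]
      simp only [own, N, and_assoc]
    rw [h1, aux_sub_le, aux_gauss t (by omega), hd, hK]
    rfl
  have htot : ((Finset.univ.filter (fun W : Submodule K V => finrank K W = t)).card : ℚ) = GaussQ q n t := by
    rw [← Fintype.card_subtype, ← Nat.card_eq_fintype_card, aux_gauss t (by omega), hV, hK]
    rfl
  have hNp : ∀ A ∈ 𝓕, (N A).card ≤ (own A (t - 1)).card := by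
    intro A hA
    have hAF := (hF A).1 hA
    have hd := hdim A hAF
    have := Finset.card_mul_le_card_mul (s := N A) (t := own A (t - 1))
      (fun T P => T ⊓ P = ⊥ ∧ T ⊔ P = A) (m := q ^ (t * (t - 1))) (n := q ^ (t * (t - 1))) ?_ ?_
    · exact Nat.le_of_mul_le_mul_right this (by positivity)
    · intro T hT
      simp only [N, Finset.mem_filter, Finset.mem_univ, true_and] at hT
      obtain ⟨hTA, hTd, hT⟩ := hT
      push Not at hT
      obtain ⟨B, hB, hTB, hBA⟩ := hT
      have h := aux_compl_le A T hTA
      rw [hd, hTd, hK, show (2 * t - 1 - t) * t = t * (t - 1) by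
        rw [mul_comm]; congr 1; omega, Nat.card_eq_fintype_card, Fintype.card_subtype] at h
      rw [← h]
      apply Finset.card_le_card
      intro P hP
      simp only [Finset.mem_filter, Finset.mem_univ, true_and] at hP
      simp only [Finset.bipartiteAbove, Finset.mem_filter, own, Finset.mem_univ, true_and]
      have hPA : P ≤ A := le_sup_right.trans hP.2.le
      refine ⟨⟨hPA, ?_, ?_⟩, hP⟩
      · have := Submodule.finrank_sup_add_finrank_inf_eq T P
        rw [hP.1, hP.2, finrank_bot] at this
        omega
      · intro C hC hPC
        by_contra hCA
        by_cases hBC : B = C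
        · subst hBC
          have hle : A ≤ B := by rw [← hP.2]; exact sup_le hTB hPC
          exact hBA (Submodule.eq_of_le_of_finrank_eq hle (by rw [hd, hdim B hB])).symm
        · apply hcf
          refine ⟨A, B, C, hAF, hB, hC, Ne.symm hBA, Ne.symm hCA, hBC, ?_⟩
          conv_lhs => rw [← hP.2]
          exact sup_le_sup (le_inf hTA hTB) (le_inf hPA hPC)
    · intro P hP
      simp only [own, Finset.mem_filter, Finset.mem_univ, true_and] at hP
      have h := aux_compl_le A P hP.1
      rw [hd, hP.2.1, hK, show (2 * t - 1 - (t - 1)) * (t - 1) = t * (t - 1) by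
        congr 1; omega, Nat.card_eq_fintype_card, Fintype.card_subtype] at h
      rw [← h]
      apply Finset.card_le_card
      intro T hT
      simp only [Finset.bipartiteBelow, Finset.mem_filter, Finset.mem_univ, true_and] at hT ⊢
      rw [inf_comm, sup_comm]
      exact hT.2
  have hpU : ∑ A ∈ 𝓕, (own A (t - 1)).card ≤ U.card := by
    rw [← Finset.card_biUnion (own_disj (t - 1))]
    have := Finset.card_mul_le_card_mul (s := 𝓕.biUnion fun A => own A (t - 1)) (t := U)
      (fun P W => P ≤ W) (m := q ^ t) (n := q ^ t) ?_ ?_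
    · exact Nat.le_of_mul_le_mul_right this (by positivity)
    · intro P hP
      obtain ⟨A, hA, hP⟩ := Finset.mem_biUnion.1 hP
      simp only [own, Finset.mem_filter, Finset.mem_univ, true_and] at hP
      rw [← hK]
      apply aux_over t ht A P (hdim A ((hF A).1 hA)) hP.1 hP.2.1 (by omega)
      intro W hW hPW hWA
      simp only [Finset.bipartiteAbove, Finset.mem_filter, U, Finset.mem_univ, true_and]
      refine ⟨⟨hW, fun B hB hWB => hWA ?_⟩, hPW⟩
      rw [← hP.2.2 B hB (hPW.trans hWB)]
      exact hWB
    · intro W hW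
      simp only [U, Finset.mem_filter, Finset.mem_univ, true_and] at hW
      have h := aux_card_hyper (K := K) (E := W)
      have h' := aux_sub_le W (t - 1)
      rw [Nat.card_eq_fintype_card, Fintype.card_subtype] at h'
      have h'' : {P : Submodule K W // finrank K P + 1 = finrank K W} =
          {P : Submodule K W // finrank K P = t - 1} := by
        congr 1; funext P; rw [hW.1]; apply propext; omega
      rw [h'', ← h', hW.1, hK] at h
      refine le_trans (Finset.card_le_card ?_) h
      intro P hP
      simp only [Finset.bipartiteBelow, Finset.mem_filter, Finset.mem_univ, true_and,
        Finset.mem_biUnion, own] at hP ⊢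
      obtain ⟨⟨A, -, hA⟩, hPW⟩ := hP
      exact ⟨hPW, hA.2.1⟩
  have hownU : ∑ A ∈ 𝓕, (own A t).card + U.card ≤
      (Finset.univ.filter (fun W : Submodule K V => finrank K W = t)).card := by
    rw [← Finset.card_biUnion (own_disj t), ← Finset.card_union_of_disjoint]
    · apply Finset.card_le_card
      intro W hW
      simp only [Finset.mem_union, Finset.mem_biUnion, own, U, Finset.mem_filter,
        Finset.mem_univ, true_and] at hW ⊢
      rcases hW with ⟨A, -, h⟩ | h
      · exact h.2.1
      · exact h.1
    · rw [Finset.disjoint_left]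
      intro W h1 h2
      simp only [Finset.mem_biUnion, own, U, Finset.mem_filter,
        Finset.mem_univ, true_and] at h1 h2
      obtain ⟨A, hA, h⟩ := h1
      exact h2.2 A ((hF A).1 hA) h.1
  have hfinal : ∑ A ∈ 𝓕, ((own A t).card + (N A).card) ≤
      (Finset.univ.filter (fun W : Submodule K V => finrank K W = t)).card := by
    rw [Finset.sum_add_distrib]
    have := Finset.sum_le_sum hNp
    omega
  have hpos : 0 < GaussQ q (2 * t - 1) t := by
    have hq' : (1 : ℚ) < q := by exact_mod_cast hq
    apply Finset.prod_pos
    intro i hi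
    rw [Finset.mem_range] at hi
    have h1 := one_lt_pow₀ hq' (show t - i ≠ 0 by omega)
    have h2 := one_lt_pow₀ hq' (show 2 * t - 1 - i ≠ 0 by omega)
    apply div_pos <;> linarith
  rw [le_div_iff₀ hpos, ← htot, Set.ncard_eq_toFinset_card']
  have hcast : ((∑ A ∈ 𝓕, ((own A t).card + (N A).card) : ℕ) : ℚ) =
      𝓕.card * GaussQ q (2 * t - 1) t := by
    rw [Nat.cast_sum, Finset.sum_congr rfl hsplit, Finset.sum_const, nsmul_eq_mul]
  rw [← hcast]
  exact_mod_cast hfinal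
end

section
/- Let V be an n-dimensional vector space over the finite field 𝔽_q, let t ≥ 1 and n ≥ 2t, and let F be a cover-free family of (2t-1)-dimensional subspaces of V. Then |F| = [n choose t]_q / [2t-1 choose t]_q holds if and only if F is a q-Steiner system S_q(t, 2t-1, n) on V. -/
noncomputable def subs (K V : Type*) [Field K] [AddCommGroup V] [Module K V] [Finite V] (k : ℕ) :
    Finset (Submodule K V) :=
  (Set.toFinite {T : Submodule K V | Module.finrank K T = k}).toFinset

section
variable {K V : Type*} [Field K] [AddCommGroup V] [Module K V] [Finite V]

lemma mem_subs {k : ℕ} {T : Submodule K V} : T ∈ subs K V k ↔ Module.finrank K T = k := by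
  simp [subs]

open Classical in
lemma card_subs_le (A : Submodule K V) (k : ℕ) :
    ((subs K V k).filter (· ≤ A)).card = (subs K A k).card := by
  symm
  refine Finset.card_bij (fun T _ => T.map A.subtype) ?_ ?_ ?_
  · intro T hT
    rw [Finset.mem_filter, mem_subs, Submodule.finrank_map_subtype_eq]
    exact ⟨mem_subs.1 hT, Submodule.map_subtype_le A T⟩
  · intro T _ T' _ h
    exact Submodule.map_injective_of_injective A.injective_subtype h
  · intro T hT
    rw [Finset.mem_filter, mem_subs] at hT
    refine ⟨T.comap A.subtype, ?_, ?_⟩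
    · rw [mem_subs, ← Submodule.finrank_map_subtype_eq, Submodule.map_comap_subtype,
        inf_eq_right.2 hT.2, hT.1]
    · rw [Submodule.map_comap_subtype, inf_eq_right.2 hT.2]

lemma card_LI_eq [Fintype K] (k : ℕ) :
    Nat.card {s : Fin k → V // LinearIndependent K s} =
      (subs K V k).card * ∏ i : Fin k, (Fintype.card K ^ k - Fintype.card K ^ i.val) := by
  classical
  have e : {s : Fin k → V // LinearIndependent K s} ≃
      Σ T : (subs K V k : Finset (Submodule K V)),
        {s : Fin k → (T : Submodule K V) // LinearIndependent K s} :=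
    { toFun := fun s => ⟨⟨Submodule.span K (Set.range s.1), by
          rw [mem_subs, finrank_span_eq_card s.2, Fintype.card_fin]⟩,
          ⟨fun i => ⟨s.1 i, Submodule.subset_span ⟨i, rfl⟩⟩, by
            apply LinearIndependent.of_comp (Submodule.subtype _)
            exact s.2⟩⟩
      invFun := fun p => ⟨fun i => (p.2.1 i : V), by
          exact p.2.2.map' (Submodule.subtype _) (Submodule.ker_subtype _)⟩
      left_inv := fun s => rfl
      right_inv := by
        rintro ⟨⟨T, hT⟩, ⟨s, hs⟩⟩
        have h1 : Submodule.span K (Set.range fun i => (s i : V)) = T := by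
          apply Submodule.eq_of_le_of_finrank_eq
          · rw [Submodule.span_le]
            rintro _ ⟨i, rfl⟩
            exact (s i).2
          · have := hs.map' (Submodule.subtype _) (Submodule.ker_subtype _)
            have h2 := finrank_span_eq_card this
            rw [Fintype.card_fin] at h2
            rw [mem_subs.1 hT]
            exact h2
        have key : ∀ (T' : Submodule K V) (hT' : T' ∈ subs K V k) (_ : T' = T) (s' : Fin k → T')
            (hs' : LinearIndependent K s'), (∀ i, (s' i : V) = s i) →
            (⟨⟨T', hT'⟩, ⟨s', hs'⟩⟩ : Σ T : (subs K V k : Finset (Submodule K V)),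
              {s : Fin k → (T : Submodule K V) // LinearIndependent K s}) =
              ⟨⟨T, hT⟩, ⟨s, hs⟩⟩ := by
          rintro T' hT' rfl s' hs' hss
          have : s' = s := funext fun i => Subtype.ext (hss i)
          subst this
          rfl
        exact key _ _ h1 _ _ fun i => rfl }
  rw [Nat.card_congr e, Nat.card_sigma]
  rw [Finset.sum_congr rfl (g := fun _ => ∏ i : Fin k, (Fintype.card K ^ k - Fintype.card K ^ i.val))]
  · simp
  · rintro ⟨T, hT⟩ _
    have := mem_subs.1 hT
    have h := card_linearIndependent (K := K) (V := T) (k := k) this.ge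
    rw [this] at h
    exact h

lemma gauss_term {q : ℚ} (hq : 1 < q) {m k i : ℕ} (hi : i < k) (hkm : k ≤ m) :
    (q ^ (m - i) - 1) / (q ^ (k - i) - 1) = (q ^ m - q ^ i) / (q ^ k - q ^ i) := by
  have h1 : q ^ m = q ^ i * q ^ (m - i) := by rw [← pow_add]; congr 1; omega
  have h2 : q ^ k = q ^ i * q ^ (k - i) := by rw [← pow_add]; congr 1; omega
  have h3 : q ^ i ≠ 0 := by positivity
  rw [h1, h2, ← mul_sub_one, ← mul_sub_one, mul_div_mul_left _ _ h3]

lemma card_subs [Fintype K] {k : ℕ} (hk : k ≤ Module.finrank K V) :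
    ((subs K V k).card : ℚ) = GaussQ (Fintype.card K) (Module.finrank K V) k := by
  have h1 := card_LI_eq (K := K) (V := V) k
  rw [card_linearIndependent hk] at h1
  have hq : (1 : ℚ) < Fintype.card K := by exact_mod_cast Fintype.one_lt_card
  have hq' : 0 < Fintype.card K := Fintype.card_pos
  have hc : ∀ m, k ≤ m → (((∏ i : Fin k, (Fintype.card K ^ m - Fintype.card K ^ i.val) : ℕ)) : ℚ)
      = ∏ i ∈ Finset.range k, ((Fintype.card K : ℚ) ^ m - (Fintype.card K : ℚ) ^ i) := by
    intro m hm
    rw [Finset.prod_range, Nat.cast_prod]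
    refine Finset.prod_congr rfl fun i _ => ?_
    rw [Nat.cast_sub (Nat.pow_le_pow_right hq' (by omega))]
    push_cast; rfl
  have h2 := congrArg (Nat.cast (R := ℚ)) h1
  rw [Nat.cast_mul, hc _ hk, hc _ le_rfl] at h2
  unfold GaussQ
  rw [Finset.prod_congr rfl (fun i hi => gauss_term hq (Finset.mem_range.1 hi) hk),
    Finset.prod_div_distrib, h2, mul_div_cancel_right₀]
  refine Finset.prod_ne_zero_iff.2 fun i hi => ?_
  have := pow_lt_pow_right₀ hq (Finset.mem_range.1 hi)
  exact (sub_pos.2 this).ne'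

lemma gauss_symm {q : ℕ} (hq : 1 < q) {t : ℕ} (ht : 1 ≤ t) :
    GaussQ q (2 * t - 1) t = GaussQ q (2 * t - 1) (t - 1) := by
  obtain ⟨s, rfl⟩ : ∃ s, t = s + 1 := ⟨t - 1, by omega⟩
  have hq : (1 : ℚ) < q := by exact_mod_cast hq
  have hp : ((q : ℚ) ^ (s + 1) - 1) ≠ 0 := (sub_pos.2 (one_lt_pow₀ hq (by omega))).ne'
  unfold GaussQ
  rw [Finset.prod_div_distrib, Finset.prod_div_distrib, Finset.prod_range_succ,
    Finset.prod_range_succ' (fun i => (q : ℚ) ^ (s + 1 - i) - 1)]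
  have : 2 * (s + 1) - 1 - s = s + 1 := by omega
  rw [this, Nat.sub_zero, mul_div_mul_right _ _ hp]
  simp

open Classical in
lemma fiber_card (k : ℕ) (T0 : Submodule K V) (hT0 : Module.finrank K T0 = k) [Fintype (V ≃ₗ[K] V)] :
    ∃ c : ℕ, ∀ M : Finset (Submodule K V), (∀ T ∈ M, Module.finrank K T = k) →
      (Finset.univ.filter (fun g : V ≃ₗ[K] V => T0.map (g : V →ₗ[K] V) ∈ M)).card = M.card * c := by
  refine ⟨(Finset.univ.filter (fun g : V ≃ₗ[K] V => T0.map (g : V →ₗ[K] V) = T0)).card, ?_⟩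
  intro M hM
  rw [Finset.card_eq_sum_card_fiberwise (t := M) (f := fun g : V ≃ₗ[K] V => T0.map (g : V →ₗ[K] V))]
  swap
  · intro g hg
    simpa using hg
  rw [Finset.sum_const_nat]
  intro T hT
  obtain ⟨h, hh⟩ : ∃ h : V ≃ₗ[K] V, T0.map (h : V →ₗ[K] V) = T := by
    have e : T0 ≃ₗ[K] T := LinearEquiv.ofFinrankEq _ _ (by rw [hT0, hM T hT])
    obtain ⟨g, hg⟩ := Submodule.exists_linearEquiv_restrict_eq (K := K) e
    refine ⟨g, ?_⟩
    ext x
    constructor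
    · rintro ⟨y, hy, rfl⟩
      have := hg ⟨y, hy⟩
      simp at this ⊢
      rw [← this]; exact (e ⟨y, hy⟩).2
    · intro hx
      refine ⟨e.symm ⟨x, hx⟩, (e.symm ⟨x, hx⟩).2, ?_⟩
      have := hg (e.symm ⟨x, hx⟩)
      simp at this ⊢
      exact this.symm
  symm
  refine Finset.card_bij (fun g _ => g.trans h) ?_ ?_ ?_
  · intro g hg
    simp only [Finset.mem_filter, Finset.mem_univ, true_and] at hg ⊢
    have : T0.map ((g.trans h : V ≃ₗ[K] V) : V →ₗ[K] V) = T := by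
      rw [LinearEquiv.coe_trans, Submodule.map_comp, hg, hh]
    exact ⟨by rw [this]; exact hT, this⟩
  · intro g _ g' _ hgg
    ext x
    have := LinearEquiv.congr_fun hgg x
    simpa using this
  · intro g hg
    simp only [Finset.mem_filter, Finset.mem_univ, true_and] at hg
    refine ⟨g.trans h.symm, ?_, ?_⟩
    · simp only [Finset.mem_filter, Finset.mem_univ, true_and]
      rw [LinearEquiv.coe_trans, Submodule.map_comp, hg.2, ← hh, ← Submodule.map_comp]
      simp
    · ext x; simp

lemma matching [Fintype K] {t : ℕ} (ht : 1 ≤ t) (hV : Module.finrank K V = 2 * t - 1)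
    (M O : Finset (Submodule K V)) (hM : ∀ T ∈ M, Module.finrank K T = t)
    (hO : ∀ T ∈ O, Module.finrank K T = t - 1)
    (h : ∀ T ∈ M, ∀ S : Submodule K V, Module.finrank K S = t - 1 → IsCompl T S → S ∈ O) :
    M.card ≤ O.card := by
  classical
  rcases M.eq_empty_or_nonempty with rfl | ⟨T0, hT0⟩
  · simp
  obtain ⟨S0, hS0⟩ := exists_isCompl T0
  have hT0t := hM T0 hT0
  have hS0t : Module.finrank K S0 = t - 1 := by
    have := Submodule.finrank_add_eq_of_isCompl hS0
    omega
  have : Finite (V ≃ₗ[K] V) := Finite.of_injective (fun g => (g : V → V)) DFunLike.coe_injective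
  have := Fintype.ofFinite (V ≃ₗ[K] V)
  obtain ⟨c, hc⟩ := fiber_card t T0 hT0t
  obtain ⟨d, hd⟩ := fiber_card (t - 1) S0 hS0t
  have h1 := hc (subs K V t) (fun T => mem_subs.1)
  have h2 := hd (subs K V (t - 1)) (fun T => mem_subs.1)
  rw [Finset.filter_true_of_mem] at h1
  swap
  · intro g _; rw [mem_subs, LinearEquiv.finrank_map_eq, hT0t]
  rw [Finset.filter_true_of_mem] at h2
  swap
  · intro g _; rw [mem_subs, LinearEquiv.finrank_map_eq, hS0t]
  have h3 : (subs K V t).card = (subs K V (t - 1)).card := by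
    have a := card_subs (K := K) (V := V) (k := t) (by omega)
    have b := card_subs (K := K) (V := V) (k := t - 1) (by omega)
    rw [hV] at a b
    rw [gauss_symm Fintype.one_lt_card ht, ← b] at a
    exact_mod_cast a
  have hG : 0 < (Finset.univ : Finset (V ≃ₗ[K] V)).card :=
    Finset.card_pos.2 ⟨LinearEquiv.refl K V, Finset.mem_univ _⟩
  have h4 : c = d := by
    rw [h1, h3] at h2
    rw [h1, h3] at hG
    exact Nat.eq_of_mul_eq_mul_left (Nat.pos_of_mul_pos_right hG) h2
  have hc0 : 0 < c := by
    rw [h1] at hG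
    exact Nat.pos_of_mul_pos_left hG
  have h5 := hc M hM
  have h6 := hd O hO
  rw [← h4] at h6
  refine Nat.le_of_mul_le_mul_right ?_ hc0
  rw [← h5, ← h6]
  refine Finset.card_le_card ?_
  intro g hg
  simp only [Finset.mem_filter, Finset.mem_univ, true_and] at hg ⊢
  refine h _ hg _ (by rw [LinearEquiv.finrank_map_eq, hS0t]) ?_
  exact (Submodule.orderIsoMapComap g).isCompl hS0

open Classical in
lemma hyperplanes_lt [Fintype K] {t : ℕ} (ht : 1 ≤ t) (T : Submodule K V)
    (hT : Module.finrank K T = t) :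
    ((subs K V (t - 1)).filter (· ≤ T)).card + 1 ≤ Fintype.card K ^ t := by
  rw [card_subs_le]
  have hex : ∀ S : Submodule K T, Module.finrank K S = t - 1 →
      ∃ f : Module.Dual K T, f ≠ 0 ∧ LinearMap.ker f = S := by
    intro S hS
    have hlt : S < ⊤ := by
      rw [lt_top_iff_ne_top]
      rintro rfl
      rw [finrank_top] at hS
      omega
    obtain ⟨f, hf, hle⟩ := S.exists_le_ker_of_lt_top hlt
    refine ⟨f, hf, ?_⟩
    symm
    apply Submodule.eq_of_le_of_finrank_le hle
    have h1 := f.finrank_range_add_finrank_ker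
    have h2 : LinearMap.range f = ⊤ := LinearMap.range_eq_top.2 (LinearMap.surjective hf)
    rw [h2, finrank_top, Module.finrank_self] at h1
    omega
  choose! f hf using hex
  have : Finite (Module.Dual K T) := Module.finite_of_finite K
  have := Fintype.ofFinite (Module.Dual K T)
  have hcard : Fintype.card (Module.Dual K T) = Fintype.card K ^ t := by
    rw [Module.card_eq_pow_finrank (K := K), Subspace.dual_finrank_eq, hT]
  rw [← hcard, ← Finset.card_univ]
  have : (subs K T (t - 1)).card ≤ (Finset.univ.erase (0 : Module.Dual K T)).card := by
    refine Finset.card_le_card_of_injOn f ?_ ?_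
    · intro S hS
      simpa using (hf S (mem_subs.1 hS)).1
    · intro S hS S' hS' hSS
      rw [← (hf S (mem_subs.1 hS)).2, ← (hf S' (mem_subs.1 hS')).2, hSS]
  rw [Finset.card_erase_of_mem (Finset.mem_univ _)] at this
  have h0 : 0 < (Finset.univ : Finset (Module.Dual K T)).card := Finset.card_pos.2 ⟨0, Finset.mem_univ _⟩
  omega

open Classical in
lemma extensions_ge [Fintype K] {t : ℕ} (ht : 1 ≤ t) (S A : Submodule K V) (hSA : S ≤ A)
    (hS : Module.finrank K S = t - 1) (hA : Module.finrank K A = 2 * t - 1) (hAV : A ≠ ⊤) :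
    Fintype.card K ^ t ≤ ((subs K V t).filter (fun T => S ≤ T ∧ ¬ T ≤ A)).card := by
  obtain ⟨v, -, hv⟩ := SetLike.exists_of_lt (lt_top_iff_ne_top.2 hAV)
  obtain ⟨C, hC⟩ := exists_isCompl (S.comap A.subtype)
  have hCt : Module.finrank K C = t := by
    have h1 := Submodule.finrank_add_eq_of_isCompl hC
    rw [← Submodule.finrank_map_subtype_eq, Submodule.map_comap_subtype, inf_eq_right.2 hSA] at h1
    omega
  have := Fintype.ofFinite C
  rw [← hCt, ← Module.card_eq_pow_finrank (K := K) (V := C), ← Finset.card_univ]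
  have hvc : ∀ c : C, v + ((c : A) : V) ∉ A := by
    intro c hc
    exact hv ((Submodule.add_mem_iff_left A (c : A).2).1 hc)
  refine Finset.card_le_card_of_injOn (fun c => S ⊔ Submodule.span K {v + ((c : A) : V)}) ?_ ?_
  · intro c _
    simp only [Finset.coe_filter, Set.mem_ofPred_eq, mem_subs]
    refine ⟨?_, le_sup_left, ?_⟩
    · have hne : v + ((c : A) : V) ≠ 0 := fun h => hvc c (h ▸ A.zero_mem)
      have h1 := Submodule.finrank_sup_add_finrank_inf_eq S (Submodule.span K {v + ((c : A) : V)})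
      have h2 : S ⊓ Submodule.span K {v + ((c : A) : V)} = ⊥ := by
        rw [← disjoint_iff, Submodule.disjoint_span_singleton' hne]
        exact fun h => hvc c (hSA h)
      rw [h2, finrank_bot, finrank_span_singleton hne] at h1
      omega
    · intro h
      exact hvc c (h (Submodule.mem_sup_right (Submodule.mem_span_singleton_self _)))
  · intro c _ c' _ hcc
    have hmem : v + ((c' : A) : V) ∈ S ⊔ Submodule.span K {v + ((c : A) : V)} := by
      have : v + ((c' : A) : V) ∈ S ⊔ Submodule.span K {v + ((c' : A) : V)} :=
        Submodule.mem_sup_right (Submodule.mem_span_singleton_self _)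
      have hcc' : S ⊔ Submodule.span K {v + ((c : A) : V)} =
          S ⊔ Submodule.span K {v + ((c' : A) : V)} := hcc
      rw [hcc']; exact this
    obtain ⟨s, hs, y, hy, hsy⟩ := Submodule.mem_sup.1 hmem
    obtain ⟨l, rfl⟩ := Submodule.mem_span_singleton.1 hy
    have hl : (1 - l) • v ∈ A := by
      have : (1 - l) • v = s + l • ((c : A) : V) - ((c' : A) : V) := by
        have : v = s + l • (v + ((c : A) : V)) - ((c' : A) : V) := by rw [hsy]; abel
        rw [sub_smul, one_smul]
        nth_rewrite 1 [this]
        rw [smul_add]; abel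
      rw [this]
      exact A.sub_mem (A.add_mem (hSA hs) (A.smul_mem _ (c : A).2)) (c' : A).2
    have hl1 : l = 1 := by
      by_contra hne
      exact hv ((Submodule.smul_mem_iff A (sub_ne_zero.2 (Ne.symm hne))).1 hl)
    subst hl1
    have hd : ((c' : A) - (c : A)) ∈ S.comap A.subtype := by
      have : ((c' : A) : V) - ((c : A) : V) = s := by
        rw [one_smul] at hsy
        have : ((c' : A) : V) = s + ((c : A) : V) := by
          have := hsy
          rw [add_left_comm] at this
          exact (add_left_cancel this).symm
        rw [this]; abel
      simp [this, hs]
    have h0 := Submodule.disjoint_def.1 hC.disjoint _ hd (C.sub_mem c'.2 c.2)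
    exact Subtype.ext (sub_eq_zero.1 h0).symm
end

section
variable {K V : Type*} [Field K] [AddCommGroup V] [Module K V] [Finite V]

open Classical in
/-- `k`-subspaces of `A` contained in no member of `F` other than `A`. -/
noncomputable def own (F : Set (Submodule K V)) (A : Submodule K V) (k : ℕ) :
    Finset (Submodule K V) :=
  (subs K V k).filter (fun T => T ≤ A ∧ ∀ B ∈ F, T ≤ B → B = A)

lemma mem_own {F : Set (Submodule K V)} {A T : Submodule K V} {k : ℕ} :
    T ∈ own F A k ↔ Module.finrank K T = k ∧ T ≤ A ∧ ∀ B ∈ F, T ≤ B → B = A := by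
  classical
  simp [own, mem_subs]

open Classical in
/-- `k`-subspaces contained in no member of `F`. -/
noncomputable def uncov (F : Set (Submodule K V)) (k : ℕ) : Finset (Submodule K V) :=
  (subs K V k).filter (fun T => ∀ B ∈ F, ¬ T ≤ B)

lemma mem_uncov {F : Set (Submodule K V)} {T : Submodule K V} {k : ℕ} :
    T ∈ uncov F k ↔ Module.finrank K T = k ∧ ∀ B ∈ F, ¬ T ≤ B := by
  classical
  simp [uncov, mem_subs]

open Classical in
lemma own_step [Fintype K] {t : ℕ} (ht : 1 ≤ t) {F : Set (Submodule K V)}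
    (hdim : ∀ A ∈ F, Module.finrank K A = 2 * t - 1) (hcf : IsCoverFree F)
    {A : Submodule K V} (hA : A ∈ F) :
    ((subs K V t).filter (· ≤ A)).card ≤ (own F A t).card + (own F A (t - 1)).card := by
  set N := (subs K V t).filter (fun T => T ≤ A ∧ ¬ ∀ B ∈ F, T ≤ B → B = A) with hN
  have hsplit : ((subs K V t).filter (· ≤ A)).card = (own F A t).card + N.card := by
    rw [← Finset.card_filter_add_card_filter_not (s := (subs K V t).filter (· ≤ A))
      (fun T => ∀ B ∈ F, T ≤ B → B = A), Finset.filter_filter, Finset.filter_filter]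
    rfl
  rw [hsplit]
  refine Nat.add_le_add_left ?_ _
  have hle := matching (K := K) (V := A) ht (hdim A hA)
    ((subs K A t).filter (fun T => T.map A.subtype ∈ N))
    ((subs K A (t - 1)).filter (fun T => T.map A.subtype ∈ own F A (t - 1)))
    (fun T hT => mem_subs.1 (Finset.mem_filter.1 hT).1)
    (fun T hT => mem_subs.1 (Finset.mem_filter.1 hT).1) ?_
  · refine le_trans ?_ (hle.trans ?_)
    · refine Finset.card_le_card_of_injOn (fun T => T.comap A.subtype) ?_ ?_
      · intro T hT
        have hTN := hT
        simp only [hN, Finset.coe_filter, Set.mem_ofPred_eq, mem_subs] at hT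
        simp only [Finset.coe_filter, Set.mem_ofPred_eq, mem_subs]
        rw [← Submodule.finrank_map_subtype_eq, Submodule.map_comap_subtype,
          inf_eq_right.2 hT.2.1]
        exact ⟨hT.1, hTN⟩
      · intro T hT T' hT' h
        simp only [hN, Finset.coe_filter, Set.mem_ofPred_eq, mem_subs] at hT hT'
        have h' : T.comap A.subtype = T'.comap A.subtype := h
        rw [← inf_eq_right.2 hT.2.1, ← inf_eq_right.2 hT'.2.1, ← Submodule.map_comap_subtype,
          ← Submodule.map_comap_subtype, h']
    · refine Finset.card_le_card_of_injOn (fun T => T.map A.subtype) ?_ ?_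
      · intro T hT
        exact (Finset.mem_filter.1 hT).2
      · intro T _ T' _ h
        exact Submodule.map_injective_of_injective A.injective_subtype h
  · intro T hT S hS hTS
    rw [Finset.mem_filter] at hT ⊢
    refine ⟨mem_subs.2 hS, mem_own.2 ⟨by rw [Submodule.finrank_map_subtype_eq, hS],
      Submodule.map_subtype_le A S, ?_⟩⟩
    intro B hB hSB
    by_contra hBA
    obtain ⟨-, -, hT2⟩ := Finset.mem_filter.1 hT.2
    push Not at hT2
    obtain ⟨B', hB', hTB', hB'A⟩ := hT2
    have hsup : T.map A.subtype ⊔ S.map A.subtype = A := by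
      rw [← Submodule.map_sup, hTS.sup_eq_top, Submodule.map_top, Submodule.range_subtype]
    by_cases hBB : B = B'
    · subst hBB
      have hAB : A ≤ B := by rw [← hsup]; exact sup_le hTB' hSB
      exact hBA (Submodule.eq_of_le_of_finrank_eq hAB (by rw [hdim A hA, hdim B hB])).symm
    · refine hcf ⟨A, B', B, hA, hB', hB, Ne.symm hB'A, Ne.symm hBA, Ne.symm hBB, ?_⟩
      nth_rewrite 1 [← hsup]
      exact sup_le_sup (le_inf (Submodule.map_subtype_le A T) hTB')
        (le_inf (Submodule.map_subtype_le A S) hSB)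

lemma own_disj (F : Set (Submodule K V)) (Ff : Finset (Submodule K V)) (hFf : ∀ A, A ∈ Ff ↔ A ∈ F)
    (k : ℕ) : (Ff : Set (Submodule K V)).PairwiseDisjoint (fun A => own F A k) := by
  intro A hA B hB hAB
  refine Finset.disjoint_left.2 fun T hT hT' => ?_
  exact hAB ((mem_own.1 hT').2.2 A ((hFf A).1 hA) (mem_own.1 hT).2.1)

lemma sum_own (F : Set (Submodule K V)) (Ff : Finset (Submodule K V)) (hFf : ∀ A, A ∈ Ff ↔ A ∈ F)
    (k : ℕ) : ∑ A ∈ Ff, (own F A k).card + (uncov F k).card ≤ (subs K V k).card := by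
  classical
  rw [← Finset.card_biUnion (own_disj F Ff hFf k), ← Finset.card_union_of_disjoint]
  · refine Finset.card_le_card ?_
    intro T hT
    rw [mem_subs]
    rcases Finset.mem_union.1 hT with hT | hT
    · obtain ⟨A, -, hT⟩ := Finset.mem_biUnion.1 hT
      exact (mem_own.1 hT).1
    · exact (mem_uncov.1 hT).1
  · refine Finset.disjoint_left.2 fun T hT hT' => ?_
    obtain ⟨A, hA, hT⟩ := Finset.mem_biUnion.1 hT
    exact (mem_uncov.1 hT').2 A ((hFf A).1 hA) (mem_own.1 hT).2.1

lemma own_uncov [Fintype K] {t : ℕ} (ht : 1 ≤ t) (hn : 2 * t ≤ Module.finrank K V)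
    (F : Set (Submodule K V)) (Ff : Finset (Submodule K V)) (hFf : ∀ A, A ∈ Ff ↔ A ∈ F)
    (hdim : ∀ A ∈ F, Module.finrank K A = 2 * t - 1) :
    (∑ A ∈ Ff, (own F A (t - 1)).card) * Fintype.card K ^ t ≤
      (uncov F t).card * (Fintype.card K ^ t - 1) := by
  classical
  rw [← Finset.card_biUnion (own_disj F Ff hFf (t - 1))]
  refine Finset.card_mul_le_card_mul (fun S T : Submodule K V => S ≤ T) ?_ ?_
  · intro S hS
    obtain ⟨A, hA, hS⟩ := Finset.mem_biUnion.1 hS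
    rw [mem_own] at hS
    have hAF := (hFf A).1 hA
    have hAd := hdim A hAF
    refine (extensions_ge ht S A hS.2.1 hS.1 hAd ?_).trans (Finset.card_le_card ?_)
    · rintro rfl
      rw [finrank_top] at hAd
      omega
    · intro T hT
      rw [Finset.mem_filter, mem_subs] at hT
      rw [Finset.mem_bipartiteAbove, mem_uncov]
      refine ⟨⟨hT.1, fun B hB hTB => hT.2.2 ?_⟩, hT.2.1⟩
      rw [← hS.2.2 B hB (hT.2.1.trans hTB)]
      exact hTB
  · intro T hT
    rw [mem_uncov] at hT
    have h1 := hyperplanes_lt ht T hT.1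
    refine le_trans (Finset.card_le_card ?_) (Nat.le_sub_of_add_le h1)
    intro S hS
    rw [Finset.mem_bipartiteBelow] at hS
    obtain ⟨A, -, hS'⟩ := Finset.mem_biUnion.1 hS.1
    rw [Finset.mem_filter, mem_subs]
    exact ⟨(mem_own.1 hS').1, hS.2⟩
end

theorem stmt3 (q n t : ℕ) (K : Type*) [Field K] [Fintype K] (hK : Fintype.card K = q)
    (V : Type*) [AddCommGroup V] [Module K V] [FiniteDimensional K V]
    (hV : Module.finrank K V = n) (ht : 1 ≤ t) (hn : 2 * t ≤ n)
    (F : Set (Submodule K V)) (hdim : ∀ A ∈ F, Module.finrank K A = 2 * t - 1)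
    (hcf : IsCoverFree F) :
    (F.ncard : ℚ) = GaussQ q n t / GaussQ q (2 * t - 1) t ↔
      (∀ A ∈ F, Module.finrank K A = 2 * t - 1) ∧
      ∀ T : Submodule K V, Module.finrank K T = t → ∃! A, A ∈ F ∧ T ≤ A := by
  subst hK
  subst hV
  classical
  have : Finite V := Module.finite_of_finite K
  set Ff : Finset (Submodule K V) := F.toFinite.toFinset with hFfdef
  have hFf : ∀ A, A ∈ Ff ↔ A ∈ F := fun A => by simp [hFfdef]
  have hncard : F.ncard = Ff.card := Set.ncard_eq_toFinset_card F
  have hN := card_subs (K := K) (V := V) (k := t) (by omega)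
  have hCA : ∀ A ∈ F, (((subs K V t).filter (· ≤ A)).card : ℚ) =
      GaussQ (Fintype.card K) (2 * t - 1) t := by
    intro A hA
    rw [card_subs_le, card_subs (by rw [hdim A hA]; omega), hdim A hA]
  have hCpos : 0 < GaussQ (Fintype.card K) (2 * t - 1) t := by
    have hq : (1 : ℚ) < Fintype.card K := by exact_mod_cast Fintype.one_lt_card
    refine Finset.prod_pos fun i hi => ?_
    rw [Finset.mem_range] at hi
    exact div_pos (sub_pos.2 (one_lt_pow₀ hq (by omega))) (sub_pos.2 (one_lt_pow₀ hq (by omega)))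
  rw [hncard, eq_div_iff hCpos.ne', ← hN]
  have hsumC : ((∑ A ∈ Ff, ((subs K V t).filter (· ≤ A)).card : ℕ) : ℚ) =
      Ff.card * GaussQ (Fintype.card K) (2 * t - 1) t := by
    rw [Nat.cast_sum, Finset.sum_congr rfl (fun A hA => hCA A ((hFf A).1 hA)), Finset.sum_const,
      nsmul_eq_mul]
  rw [← hsumC, Nat.cast_inj]
  constructor
  · intro heq
    refine ⟨hdim, ?_⟩
    have h1 : ∑ A ∈ Ff, ((subs K V t).filter (· ≤ A)).card ≤
        ∑ A ∈ Ff, (own F A t).card + ∑ A ∈ Ff, (own F A (t - 1)).card := by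
      rw [← Finset.sum_add_distrib]
      exact Finset.sum_le_sum fun A hA => own_step ht hdim hcf ((hFf A).1 hA)
    have h2 := sum_own F Ff hFf t
    have h3 := own_uncov ht hn F Ff hFf hdim
    obtain ⟨Q, hQ⟩ : ∃ Q, Fintype.card K ^ t = Q + 1 :=
      ⟨Fintype.card K ^ t - 1, by have : 0 < Fintype.card K ^ t := pow_pos Fintype.card_pos t
                                  omega⟩
    rw [hQ, Nat.add_sub_cancel] at h3
    have h4 : (uncov F t).card ≤ ∑ A ∈ Ff, (own F A (t - 1)).card := by omega
    have h5 : ∑ A ∈ Ff, (own F A (t - 1)).card = 0 := by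
      have := Nat.mul_le_mul_right Q h4
      rw [mul_add] at h3
      omega
    have hU : (uncov F t).card = 0 := by omega
    rw [h5] at h1
    have hsub : ∀ A ∈ Ff, own F A t ⊆ (subs K V t).filter (· ≤ A) := by
      intro A _ T hT
      rw [mem_own] at hT
      rw [Finset.mem_filter, mem_subs]
      exact ⟨hT.1, hT.2.1⟩
    have h6 : ∀ A ∈ Ff, (own F A t).card = ((subs K V t).filter (· ≤ A)).card :=
      (Finset.sum_eq_sum_iff_of_le fun A hA => Finset.card_le_card (hsub A hA)).1
        (le_antisymm (Finset.sum_le_sum fun A hA => Finset.card_le_card (hsub A hA)) (by omega))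
    intro T hT
    have hex : ∃ A ∈ F, T ≤ A := by
      by_contra hno
      push Not at hno
      have : T ∈ uncov F t := mem_uncov.2 ⟨hT, hno⟩
      rw [Finset.card_eq_zero.1 hU] at this
      simp at this
    obtain ⟨A, hA, hTA⟩ := hex
    have hmem : T ∈ own F A t := by
      rw [Finset.eq_of_subset_of_card_le (hsub A ((hFf A).2 hA)) (h6 A ((hFf A).2 hA)).ge,
        Finset.mem_filter, mem_subs]
      exact ⟨hT, hTA⟩
    exact ⟨A, ⟨hA, hTA⟩, fun B hB => (mem_own.1 hmem).2.2 B hB.1 hB.2⟩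
  · rintro ⟨-, hS⟩
    rw [← Finset.card_biUnion]
    · congr 1
      ext T
      simp only [Finset.mem_biUnion, Finset.mem_filter, mem_subs]
      constructor
      · rintro ⟨A, -, h, -⟩
        exact h
      · intro h
        obtain ⟨A, ⟨hA, hTA⟩, -⟩ := hS T h
        exact ⟨A, (hFf A).2 hA, h, hTA⟩
    · intro A hA B hB hAB
      refine Finset.disjoint_left.2 fun T hT hT' => hAB ?_
      rw [Finset.mem_filter, mem_subs] at hT hT'
      exact (hS T hT.1).unique ⟨(hFf A).1 hA, hT.2⟩ ⟨(hFf B).1 hB, hT'.2⟩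
end

section
/- Let V be an n-dimensional vector space over the finite field 𝔽_q, embedded in an (n+1)-dimensional space V' = E ⊕ V where E is a 1-dimensional subspace with E ∩ V = {0}. If F is a cover-free family of k-dimensional subspaces of V, then F' = {E ⊕ F : F ∈ F} is a cover-free family of (k+1)-dimensional subspaces of V'. -/
theorem stmt6 (q n k : ℕ) (K : Type*) [Field K] [Fintype K] (hK : Fintype.card K = q)
    (V' : Type*) [AddCommGroup V'] [Module K V'] [FiniteDimensional K V']
    (hV' : Module.finrank K V' = n + 1)
    (V E : Submodule K V') (hV : Module.finrank K V = n) (hE : Module.finrank K E = 1)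
    (hEV : E ⊓ V = ⊥) (hsum : E ⊔ V = ⊤)
    (F : Set (Submodule K V'))
    (hF : ∀ A ∈ F, A ≤ V ∧ Module.finrank K A = k)
    (hcf : IsCoverFree F) :
    IsCoverFree ((fun A => E ⊔ A) '' F) ∧
      ∀ B ∈ (fun A => E ⊔ A) '' F, Module.finrank K B = k + 1 := by
  have key : ∀ A : Submodule K V', A ≤ V → (E ⊔ A) ⊓ V = A := by
    intro A hA
    rw [sup_comm, sup_inf_assoc_of_le E hA, hEV, sup_bot_eq]
  have key2 : ∀ A B : Submodule K V', A ≤ V → B ≤ V →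
      (E ⊔ A) ⊓ (E ⊔ B) = E ⊔ (A ⊓ B) := by
    intro A B hA hB
    have h1 : E ≤ (E ⊔ A) ⊓ (E ⊔ B) := le_inf le_sup_left le_sup_left
    have h2 := sup_inf_assoc_of_le V h1
    rw [hsum, top_inf_eq] at h2
    have h3 : V ⊓ ((E ⊔ A) ⊓ (E ⊔ B)) = A ⊓ B := by
      rw [inf_comm, inf_inf_distrib_right, key A hA, key B hB]
    rw [h3] at h2
    exact h2
  refine ⟨?_, ?_⟩
  · rintro ⟨_, _, _, ⟨A, hA, rfl⟩, ⟨B, hB, rfl⟩, ⟨C, hC, rfl⟩, h1, h2, h3, h⟩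
    refine hcf ⟨A, B, C, hA, hB, hC, fun e => h1 (by rw [e]), fun e => h2 (by rw [e]),
      fun e => h3 (by rw [e]), ?_⟩
    have hAV := (hF A hA).1
    simp only at h
    rw [key2 A B hAV (hF B hB).1, key2 A C hAV (hF C hC).1, ← sup_sup_distrib_left] at h
    have h4 := inf_le_inf_right V h
    rwa [key A hAV, key _ (sup_le (inf_le_left.trans hAV) (inf_le_left.trans hAV))] at h4
  · rintro _ ⟨A, hA, rfl⟩
    obtain ⟨hAV, hk⟩ := hF A hA
    have h := Submodule.finrank_sup_add_finrank_inf_eq E A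
    have h0 : E ⊓ A = ⊥ := le_bot_iff.mp (hEV ▸ inf_le_inf_left E hAV)
    rw [h0, finrank_bot, hE, hk] at h
    simp only
    omega
end

section
/- Let V be an n-dimensional vector space over the finite field 𝔽_q. If F is a q-Steiner system S_q(t, 2t-1, n) on V, then F is a cover-free family of (2t-1)-dimensional subspaces of V. -/
theorem stmt7 (q n t : ℕ) (K : Type*) [Field K] [Fintype K] (hK : Fintype.card K = q)
    (V : Type*) [AddCommGroup V] [Module K V] [FiniteDimensional K V]
    (hV : Module.finrank K V = n)
    (H : Set (Submodule K V))
    (hdim : ∀ A ∈ H, Module.finrank K A = 2 * t - 1)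
    (hSteiner : ∀ T : Submodule K V, Module.finrank K T = t → ∃! A, A ∈ H ∧ T ≤ A) :
    IsCoverFree H := by
  have key : ∀ A ∈ H, ∀ B ∈ H, A ≠ B → Module.finrank K (A ⊓ B : Submodule K V) < t := by
    intro A hA B hB hne
    by_contra! hle
    obtain ⟨f, hf⟩ := exists_linearIndependent_of_le_finrank hle
    have hf' : LinearIndependent K (fun i => ((f i : (A ⊓ B : Submodule K V)) : V)) :=
      hf.map' (A ⊓ B).subtype (Submodule.ker_subtype _)
    have hT := finrank_span_eq_card hf'
    rw [Fintype.card_fin] at hT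
    have hs : Submodule.span K (Set.range (fun i => ((f i : (A ⊓ B : Submodule K V)) : V))) ≤ A ⊓ B := by
      rw [Submodule.span_le]
      rintro _ ⟨i, rfl⟩
      exact (f i).2
    exact hne ((hSteiner _ hT).unique ⟨hA, hs.trans inf_le_left⟩ ⟨hB, hs.trans inf_le_right⟩)
  rintro ⟨A, B, C, hA, hB, hC, hAB, hAC, -, hle⟩
  have h1 := key A hA B hB hAB
  have h2 := key A hA C hC hAC
  have h3 := Submodule.finrank_mono hle
  have h4 := Submodule.finrank_add_le_finrank_add_finrank (A ⊓ B) (A ⊓ C)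
  have h5 := hdim A hA
  omega
end

section
/- Let V be a finite-dimensional vector space over the finite field 𝔽_q, let U be a u-dimensional subspace of V, let M be an m-dimensional and W a (u-m)-dimensional subspace of U with M ∩ W = {0} and W ⊕ M = U, and let 1 ≤ k ≤ u-m. Then: (i) for distinct k-dimensional subspaces B, B' of W, the families [B ⊕ M choose k, 0]_M and [B' ⊕ M choose k, 0]_M are disjoint; (ii) [U choose k, 0]_M is the disjoint union of the families [B ⊕ M choose k, 0]_M over all k-dimensional subspaces B of W. -/
/-- `[X choose k, 0]_M`: the family of all `k`-dimensional subspaces `A` of `X`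
with `dim (M ∩ A) = 0`. -/
def ZeroFam {K V : Type*} [Field K] [AddCommGroup V] [Module K V]
    (M X : Submodule K V) (k : ℕ) : Set (Submodule K V) :=
  {A | A ≤ X ∧ Module.finrank K A = k ∧ M ⊓ A = ⊥}

theorem stmt8 (q u m k : ℕ) (K : Type*) [Field K] [Fintype K] (hK : Fintype.card K = q)
    (V : Type*) [AddCommGroup V] [Module K V] [FiniteDimensional K V]
    (U M W : Submodule K V)
    (hU : Module.finrank K U = u) (hM : Module.finrank K M = m)
    (hMU : M ≤ U) (hWU : W ≤ U) (hW : Module.finrank K W = u - m)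
    (hMW : M ⊓ W = ⊥) (hsum : W ⊔ M = U)
    (hk1 : 1 ≤ k) (hk2 : k ≤ u - m) :
    (∀ B B' : Submodule K V, B ≤ W → B' ≤ W →
      Module.finrank K B = k → Module.finrank K B' = k → B ≠ B' →
      ZeroFam M (B ⊔ M) k ∩ ZeroFam M (B' ⊔ M) k = ∅) ∧
    ZeroFam M U k =
      ⋃ B ∈ {B : Submodule K V | B ≤ W ∧ Module.finrank K B = k}, ZeroFam M (B ⊔ M) k := by
  have fr : ∀ X : Submodule K V, M ⊓ X = ⊥ →
      Module.finrank K (X ⊔ M : Submodule K V) = Module.finrank K X + m := by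
    intro X hX
    have h := Submodule.finrank_sup_add_finrank_inf_eq X M
    rw [inf_comm, hX, finrank_bot, hM] at h
    simpa using h
  have disj : ∀ B : Submodule K V, B ≤ W → M ⊓ B = ⊥ := by
    intro B hB
    exact le_bot_iff.mp (hMW ▸ inf_le_inf_left M hB)
  have key : ∀ B A : Submodule K V, B ≤ W → Module.finrank K B = k →
      A ∈ ZeroFam M (B ⊔ M) k → B = (A ⊔ M) ⊓ W := by
    rintro B A hB hBk ⟨hA, hAk, hAM⟩
    have h1 : A ⊔ M = B ⊔ M := by
      apply Submodule.eq_of_le_of_finrank_eq (sup_le hA le_sup_right)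
      rw [fr A hAM, fr B (disj B hB), hAk, hBk]
    rw [h1, sup_inf_assoc_of_le M hB, hMW, sup_bot_eq]
  refine ⟨?_, ?_⟩
  · intro B B' hB hB' hBk hBk' hne
    ext A
    simp only [Set.mem_inter_iff, Set.mem_empty_iff_false, iff_false]
    rintro ⟨h, h'⟩
    exact hne ((key B A hB hBk h).trans (key B' A hB' hBk' h').symm)
  · ext A
    simp only [Set.mem_iUnion, Set.mem_ofPred_eq, exists_prop]
    constructor
    · rintro ⟨hA, hAk, hAM⟩
      have h1 : (A ⊔ M) ⊓ W ⊔ M = A ⊔ M := by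
        rw [inf_sup_assoc_of_le W (le_sup_right : M ≤ A ⊔ M), hsum]
        exact inf_eq_left.mpr (sup_le hA hMU)
      refine ⟨(A ⊔ M) ⊓ W, ⟨inf_le_right, ?_⟩, ?_, hAk, hAM⟩
      · have h2 := fr ((A ⊔ M) ⊓ W) (disj _ inf_le_right)
        rw [h1, fr A hAM, hAk] at h2
        omega
      · rw [h1]
        exact le_sup_left
    · rintro ⟨B, ⟨hB, -⟩, hA, hAk, hAM⟩
      exact ⟨hA.trans (sup_le (hB.trans hWU) hMU), hAk, hAM⟩
end

section
/- Let V be an n-dimensional vector space over the finite field 𝔽_q with n ≥ 2t+1, and let F be a cover-free family of 2t-dimensional subspaces of V. If A and B are subspaces of V with A + B = F for some F ∈ F, then |F_A| = 1 or |F_B| = 1, i.e., F is the unique member of F containing A, or F is the unique member of F containing B. -/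
theorem stmt10 (q n t : ℕ) (K : Type*) [Field K] [Fintype K] (hK : Fintype.card K = q)
    (V : Type*) [AddCommGroup V] [Module K V] [FiniteDimensional K V]
    (hV : Module.finrank K V = n) (hn : 2 * t + 1 ≤ n)
    (F : Set (Submodule K V)) (hdim : ∀ A ∈ F, Module.finrank K A = 2 * t)
    (hcf : IsCoverFree F)
    (A B F₀ : Submodule K V) (hF₀ : F₀ ∈ F) (hAB : A ⊔ B = F₀) :
    {G ∈ F | A ≤ G}.ncard = 1 ∨ {G ∈ F | B ≤ G}.ncard = 1 := by
  by_contra hcon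
  push Not at hcon
  obtain ⟨hA, hB⟩ := hcon
  have key : ∀ C : Submodule K V, C ≤ F₀ → {G ∈ F | C ≤ G}.ncard ≠ 1 →
      ∃ G ∈ F, C ≤ G ∧ F₀ ≠ G := by
    intro C hC hne
    by_contra h
    push Not at h
    apply hne
    rw [Set.ncard_eq_one]
    refine ⟨F₀, ?_⟩
    ext G
    constructor
    · rintro ⟨hG, hCG⟩
      exact (h G hG hCG).symm
    · intro hG
      rw [Set.mem_singleton_iff] at hG
      subst hG
      exact ⟨hF₀, hC⟩
  have hA0 : A ≤ F₀ := hAB ▸ le_sup_left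
  have hB0 : B ≤ F₀ := hAB ▸ le_sup_right
  obtain ⟨F₁, h1, hA1, hne1⟩ := key A hA0 hA
  obtain ⟨F₂, h2, hB2, hne2⟩ := key B hB0 hB
  refine hcf ⟨F₀, F₁, F₂, hF₀, h1, h2, hne1, hne2, ?_, ?_⟩
  · intro h12
    apply hne1
    apply Submodule.eq_of_le_of_finrank_eq
    · rw [← hAB]
      exact sup_le hA1 (h12 ▸ hB2)
    · rw [hdim _ hF₀, hdim _ h1]
  · calc F₀ = A ⊔ B := hAB.symm
      _ ≤ _ := sup_le_sup (le_inf hA0 hA1) (le_inf hB0 hB2)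
end
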